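/- arXiv:1810.01255 — 2 statements merged into one kernel-verified Lean document; each statement's English description precedes it below -/
import Mathlib

section
/- Let C : ℕ → ℝ² be any admissible sequence of centers, i.e. (i) the closed balls of radius 1 centered at the points C n cover ℝ² (⋃ₙ closedBall(C n, 1) = ℝ²), (ii) for every n ≥ 1 one has 0 < dist(C n, C (n−1)) ≤ 1, and (iii) for every n ≥ 1 the undirected Euclidean angle ∠ C(n−1) C(n) C(n+1) is at least 2π/3. Then the infimum, over all admissible sequences C, of the lower density liminf_{λ→∞} N_C(λ)·π/(4λ²) (computed in the extended nonnegative reals) equals 2π/(2+√3). -/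
open Metric MeasureTheory Filter Real
open scoped ENNReal

noncomputable section

/-- The Euclidean plane. -/
abbrev Pt := EuclideanSpace ℝ (Fin 2)

/-- The open square `(−λ,λ) × (−λ,λ)`. -/
def openSquare (l : ℝ) : Set Pt := {p | |p 0| < l ∧ |p 1| < l}

/-- `N_C(λ)`: the extended number of indices `i` such that the closed unit ball centered at
`C i` meets the open square `(−λ,λ) × (−λ,λ)`. -/
def Ncount {ι : Type*} (C : ι → Pt) (l : ℝ) : ℝ≥0∞ :=
  ({i | (closedBall (C i) 1 ∩ openSquare l).Nonempty}.encard : ℕ∞)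

/-- The lower density `liminf_{λ→∞} N_C(λ)·π/(4λ²)` of the family of unit disks centered at
the points `C i`, computed in `ℝ≥0∞`. -/
def lowerDensity {ι : Type*} (C : ι → Pt) : ℝ≥0∞ :=
  Filter.liminf (fun l : ℝ => Ncount C l * ENNReal.ofReal π / ENNReal.ofReal (4 * l ^ 2))
    Filter.atTop

/-- A sequence of centers is admissible if the corresponding closed unit balls cover the plane,
each consecutive pair of centers is at positive distance at most 1, and no turning angle is
sharper than `2π/3`. -/
def Admissible (C : ℕ → Pt) : Prop :=
  (⋃ n, closedBall (C n) 1) = Set.univ ∧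
  (∀ n, 1 ≤ n → 0 < dist (C n) (C (n - 1)) ∧ dist (C n) (C (n - 1)) ≤ 1) ∧
  (∀ n, 1 ≤ n → 2 * π / 3 ≤ EuclideanGeometry.angle (C (n - 1)) (C n) (C (n + 1)))

/-!
*Lower bound.* The Voronoi cell of a center `c` lies in the unit disk around `c` and is cut by the
bisectors towards the predecessor and the successor of `c`, which pass within distance `1/2` of `c`
in directions at least `2π/3` apart. Pushing the vertices of the cell radially outwards, each onto
one of the two cuts or the unit circle, places them in cyclic order on the sides of an inscribed
equilateral triangle that meanwhile rotates monotonically by at most `2π/3`. The area spanned by an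
edge is then a convex combination of sines of angles between triangle vertices; when these sines are
bounded linearly, the sum over the edges telescopes, and a cell with `n` vertices has area at most
`1 + √3/2 + (n - 6) * δ` for a constant `δ ≥ 0`. Fix a direction in general position. Every vertex
belongs to at least three cells and is the topmost or the bottommost vertex of all but at most two
of them, while each cell has one topmost and one bottommost vertex; hence a cell has at most six
vertices on average (this replaces Euler's formula). So the cells have mean area at most
`1 + √3/2`, and the density is at least `π / (1 + √3/2)`.

*Upper bound.* Rows of points at spacing `1`, at distance `1 + √3/2` from each other and each
shifted by half a step against the previous one, give a covering of exactly this density. A square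
spiral traverses the horizontal rows above and below the origin and the vertical ones to its left
and right. It turns by `π/4` at each corner, six corners leading from the end of one row to the
start of the next, and its connections between rows contribute only `O(λ)` centers to a square of
side `2λ`.
-/

namespace SeqCovering

/-- The amount by which each vertex beyond the sixth raises the bound on the area of a polygonal
cell: the gap between `sin x / 2` and `√3 / 4 * x` at `x = π / 6`, where the two have equal
slope. -/
def vertexExcess : ℝ := 1 / 4 - √3 * π / 24

lemma sqrt_three_mem_Ioo : √3 ∈ Set.Ioo (1.732 : ℝ) 1.7321 :=
  ⟨Real.lt_sqrt_of_sq_lt (by norm_num), (Real.sqrt_lt' (by norm_num)).2 (by norm_num)⟩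

lemma vertexExcess_nonneg : 0 ≤ vertexExcess := by
  unfold vertexExcess
  nlinarith [sqrt_three_mem_Ioo.2, Real.pi_lt_d4, Real.pi_pos]

lemma vertexExcess_le : vertexExcess ≤ 1 / 4 := by
  have : 0 ≤ √3 * π := by positivity
  unfold vertexExcess
  linarith

lemma sin_two_pi_div_three : sin (2 * π / 3) = √3 / 2 := by
  rw [show 2 * π / 3 = π - π / 3 by ring, sin_pi_sub, sin_pi_div_three]

lemma cos_two_pi_div_three : cos (2 * π / 3) = -(1 / 2) := by
  rw [show 2 * π / 3 = π - π / 3 by ring, cos_pi_sub, cos_pi_div_three]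

lemma sin_add_pi_div_six_le {y : ℝ} (hy : -(π / 6) ≤ y) :
    sin (y + π / 6) ≤ 1 / 2 + √3 / 2 * y := by
  obtain ⟨h3, h3'⟩ := sqrt_three_mem_Ioo
  rw [sin_add, cos_pi_div_six, sin_pi_div_six]
  rcases le_or_gt 0 y with h | h
  · nlinarith [sin_le h, cos_le_one y]
  · obtain ⟨z, rfl⟩ : ∃ z, y = -z := ⟨-y, by ring⟩
    have hz : 0 < z := by linarith
    have hz1 : z ≤ 0.53 := by linarith [Real.pi_lt_d4]
    have hcos : cos z ≤ 1 - z ^ 2 / 2 + z ^ 4 * (5 / 96) := by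
      have := (abs_le.1 (Real.cos_bound (abs_le.2 ⟨by linarith, by linarith⟩ : |z| ≤ 1))).2
      rw [abs_of_pos hz] at this
      linarith
    have hsin : √3 / 2 * (z - sin z) ≤ 0.87 * (z ^ 3 / 6) := by
      have := sin_gt_sub_cube hz
      have := sin_lt hz
      apply mul_le_mul <;> linarith
    have hpoly : 0 ≤ z ^ 2 * (1 / 2 - z ^ 2 * (5 / 96) - 0.29 * z) :=
      mul_nonneg (by positivity) (by nlinarith)
    rw [cos_neg, sin_neg]
    nlinarith

/-- A polygon edge seen from the centre under the angle `e + 2πm/3`, where `m` counts the chords of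
length `√3` it passes; these are worth only `√3 / 4 - vertexExcess` each. -/
lemma sin_div_two_le {e : ℝ} {m : ℤ} (he : 0 ≤ e) (hm : -1 ≤ m) :
    sin (e + 2 * π / 3 * m) / 2 ≤
      vertexExcess + √3 / 4 * e + (√3 / 4 - vertexExcess) * m := by
  obtain ⟨h3, h3'⟩ := sqrt_three_mem_Ioo
  have hB := vertexExcess_nonneg
  have hB' := vertexExcess_le
  have hsin : -e ≤ sin e := by
    simpa [abs_of_nonneg he] using neg_le_of_abs_le (abs_sin_le_abs (x := e))
  obtain rfl | rfl | rfl | h2 : m = -1 ∨ m = 0 ∨ m = 1 ∨ 2 ≤ m := by omega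
  · have hcos : 1 - cos e ≤ e := by
      have := one_sub_sq_div_two_le_cos (x := e)
      rcases le_or_gt e 2 with h | h
      · nlinarith
      · linarith [neg_one_le_cos e]
    have hsin' : 0 ≤ √3 / 4 * (e - (1 - cos e)) + sin e / 4 + 2 * vertexExcess := by
      rcases le_or_gt e π with h | h
      · have := sin_nonneg_of_nonneg_of_le_pi he h
        have : 0 ≤ √3 / 4 * (e - (1 - cos e)) := mul_nonneg (by positivity) (by linarith)
        linarith
      · nlinarith [neg_one_le_cos e, neg_one_le_sin e, pi_gt_three]
    rw [sin_add, show 2 * π / 3 * ((-1 : ℤ) : ℝ) = -(2 * π / 3) by push_cast; ring, sin_neg,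
      cos_neg, sin_two_pi_div_three, cos_two_pi_div_three]
    push_cast
    linarith
  · have := sin_add_pi_div_six_le (y := e - π / 6) (by linarith)
    rw [sub_add_cancel] at this
    unfold vertexExcess
    push_cast
    simp only [mul_zero, add_zero]
    linarith
  · rw [Int.cast_one, mul_one, mul_one, sin_add, sin_two_pi_div_three, cos_two_pi_div_three]
    nlinarith [cos_le_one e]
  · have h2' : (2 : ℝ) ≤ m := by exact_mod_cast h2
    have hJ : 0 ≤ √3 / 4 - vertexExcess := by linarith
    have := mul_le_mul_of_nonneg_left h2' hJ
    have : 0 ≤ √3 / 4 * e := by positivity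
    linarith [sin_le_one (e + 2 * π / 3 * m)]

attribute [local instance] Complex.finrank_real_complex_fact

local notation "ω" => Orientation.areaForm Complex.orientation

/-- The unit vector in direction `t`. -/
def cis (t : ℝ) : ℂ := Complex.exp (t * Complex.I)

@[simp] lemma cis_re (t : ℝ) : (cis t).re = cos t := Complex.exp_ofReal_mul_I_re t

@[simp] lemma cis_im (t : ℝ) : (cis t).im = sin t := Complex.exp_ofReal_mul_I_im t

@[simp] lemma norm_cis (t : ℝ) : ‖cis t‖ = 1 := Complex.norm_exp_ofReal_mul_I t

lemma cis_add_two_pi (t : ℝ) : cis (t + 2 * π) = cis t := by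
  apply Complex.ext <;> simp

lemma areaForm_eq (z w : ℂ) : ω z w = z.re * w.im - z.im * w.re := by
  simp [Complex.areaForm, sub_eq_add_neg]

lemma inner_eq (z w : ℂ) : inner ℝ z w = z.re * w.re + z.im * w.im := by
  simp [Complex.inner, mul_comm]

@[simp] lemma areaForm_cis_cis (a b : ℝ) : ω (cis a) (cis b) = sin (b - a) := by
  rw [areaForm_eq, sin_sub]
  simp only [cis_re, cis_im]
  ring

@[simp] lemma inner_cis_cis (a b : ℝ) : inner ℝ (cis a) (cis b) = cos (b - a) := by
  rw [inner_eq, cos_sub]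
  simp only [cis_re, cis_im]
  ring

lemma norm_smul_cis {r : ℝ} (hr : 0 ≤ r) (t : ℝ) : ‖r • cis t‖ = r := by
  rw [norm_smul, norm_cis, mul_one, norm_of_nonneg hr]

lemma areaForm_smul_cis (r s a b : ℝ) : ω (r • cis a) (s • cis b) = r * s * sin (b - a) := by
  rw [map_smul, map_smul, LinearMap.smul_apply, areaForm_cis_cis, smul_eq_mul, smul_eq_mul]
  ring

lemma inner_cis_smul_cis (r a b : ℝ) : inner ℝ (cis a) (r • cis b) = r * cos (b - a) := by
  rw [inner_smul_right, inner_cis_cis]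

/-- The point at parameter `w` of the `j`-th chord of length `√3` in the inscribed equilateral
triangle that has a vertex in direction `ψ`. -/
def chordPoint (ψ : ℝ) (j : ℤ) (w : ℝ) : ℂ :=
  (1 - w) • cis (ψ + 2 * π / 3 * j) + w • cis (ψ + 2 * π / 3 * (j + 1))

lemma chordPoint_revolve (ψ : ℝ) (j : ℤ) (w : ℝ) :
    chordPoint (ψ + 2 * π / 3) (j + 2) w = chordPoint ψ j w := by
  unfold chordPoint
  rw [← cis_add_two_pi (ψ + 2 * π / 3 * j), ← cis_add_two_pi (ψ + 2 * π / 3 * (j + 1))]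
  push_cast
  ring_nf

/-- A quantity whose increase along a polygon, together with `vertexExcess` for each edge, bounds
the enclosed area. -/
def chordPotential (ψ : ℝ) (j : ℤ) (w : ℝ) : ℝ :=
  √3 / 4 * ψ + (√3 / 4 - vertexExcess) * (j + w)

lemma chordPotential_revolve (ψ : ℝ) (j : ℤ) (w : ℝ) :
    chordPotential (ψ + 2 * π / 3) (j + 2) w =
      chordPotential ψ j w + (1 + √3 / 2 - 6 * vertexExcess) := by
  unfold chordPotential vertexExcess
  push_cast
  ring

section

variable {ψ ψ' w w' : ℝ} {j j' : ℤ}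

lemma areaForm_chordPoint_le (hψ : ψ ≤ ψ') (hj : j ≤ j') (hw : w ∈ Set.Icc 0 1)
    (hw' : w' ∈ Set.Icc 0 1) :
    ω (chordPoint ψ j w) (chordPoint ψ' j' w') / 2 ≤
      vertexExcess + (chordPotential ψ' j' w' - chordPotential ψ j w) := by
  obtain ⟨hw0, hw1⟩ := hw
  obtain ⟨hw0', hw1'⟩ := hw'
  have corner (k : ℤ) (hk : -1 ≤ k) {a : ℝ} (ha : 0 ≤ a) :=
    mul_le_mul_of_nonneg_left (sin_div_two_le (sub_nonneg.2 hψ) (show -1 ≤ j' - j + k by omega)) ha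
  have h00 := corner 0 (by omega) (mul_nonneg (sub_nonneg.2 hw1) (sub_nonneg.2 hw1'))
  have h01 := corner 1 (by omega) (mul_nonneg (sub_nonneg.2 hw1) hw0')
  have h10 := corner (-1) (by omega) (mul_nonneg hw0 (sub_nonneg.2 hw1'))
  have h11 := corner 0 (by omega) (mul_nonneg hw0 hw0')
  unfold chordPoint chordPotential
  simp only [map_add, LinearMap.add_apply, map_smul, LinearMap.smul_apply, smul_eq_mul,
    areaForm_cis_cis]
  push_cast at h00 h01 h10 h11
  ring_nf at h00 h01 h10 h11 ⊢
  linarith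

lemma areaForm_smul_chordPoint_le {l l' : ℝ} (hψ : ψ ≤ ψ') (hj : j ≤ j') (hw : w ∈ Set.Icc 0 1)
    (hw' : w' ∈ Set.Icc 0 1) (hl : l ∈ Set.Ioc 0 1) (hl' : l' ∈ Set.Ioc 0 1)
    (h0 : 0 ≤ ω (l • chordPoint ψ j w) (l' • chordPoint ψ' j' w')) :
    ω (l • chordPoint ψ j w) (l' • chordPoint ψ' j' w') / 2 ≤
      vertexExcess + (chordPotential ψ' j' w' - chordPotential ψ j w) := by
  refine le_trans ?_ (areaForm_chordPoint_le hψ hj hw hw')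
  have h : ω (l • chordPoint ψ j w) (l' • chordPoint ψ' j' w') =
      l * l' * ω (chordPoint ψ j w) (chordPoint ψ' j' w') := by
    simp only [map_smul, LinearMap.smul_apply, smul_eq_mul]
    ring
  rw [h] at h0 ⊢
  have hpos := nonneg_of_mul_nonneg_right h0 (mul_pos hl.1 hl'.1)
  gcongr
  exact mul_le_of_le_one_left hpos (mul_le_one₀ hl.2 hl'.1.le hl'.2)

end

/-- The direction of the first vertex of the equilateral triangle to which a point with polar angle
`t` is attached: points in the circular segments cut off by the chords centred in the directions
`0` and `γ` are moved onto these chords, all others are triangle vertices themselves. -/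
def collapse (γ t : ℝ) : ℝ := max (-(π / 3)) (max (min (t - 2 * π / 3) (γ - π)) (t - 4 * π / 3))

/-- The index of the chord in `chordPoint (collapse γ t)` that carries the point with polar angle
`t`. -/
def chordIndex (γ t : ℝ) : ℤ := if t ≤ π / 3 then 0 else if t ≤ γ + π / 3 then 1 else 2

lemma collapse_mono (γ : ℝ) : Monotone (collapse γ) := fun s t h => by
  unfold collapse
  gcongr

lemma chordIndex_mono (γ : ℝ) : Monotone (chordIndex γ) := fun s t h => by
  unfold chordIndex
  grind

lemma chordIndex_mem_Icc (γ t : ℝ) : chordIndex γ t ∈ Set.Icc 0 2 := by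
  unfold chordIndex
  grind

lemma neg_pi_div_three_le_collapse (γ t : ℝ) : -(π / 3) ≤ collapse γ t := le_max_left _ _

lemma collapse_le {γ t : ℝ} (hγ : γ ≤ 4 * π / 3) (ht : t ≤ 5 * π / 3) : collapse γ t ≤ π / 3 := by
  have := pi_pos
  refine max_le (by linarith) (max_le (min_le_of_right_le ?_) ?_) <;> linarith

lemma exists_smul_cis_eq_of_abs_sub_le {r t δ : ℝ} (hr : 0 < r) (ht : |t - δ| ≤ π / 3)
    (h : r * cos (t - δ) ≤ 1 / 2) :
    ∃ l ∈ Set.Ioc (0 : ℝ) 1, ∃ w ∈ Set.Icc (0 : ℝ) 1,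
      r • cis t = l • ((1 - w) • cis (δ - π / 3) + w • cis (δ + π / 3)) := by
  obtain ⟨s, rfl⟩ : ∃ s, t = δ + s := ⟨t - δ, by ring⟩
  rw [add_sub_cancel_left] at ht h
  obtain ⟨hs1, hs2⟩ := abs_le.1 ht
  have hpi := pi_pos
  have hcos : 0 < cos s := cos_pos_of_mem_Ioo ⟨by linarith, by linarith⟩
  have htan : |tan s| ≤ √3 := by
    rw [← tan_pi_div_three, abs_le, ← tan_neg]
    constructor <;>
      refine strictMonoOn_tan.monotoneOn ⟨?_, ?_⟩ ⟨?_, ?_⟩ ?_ <;> linarith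
  have h3 : 0 < √3 := by positivity
  have hdiv : |tan s / √3| ≤ 1 := by
    rw [abs_div, abs_of_pos h3]
    exact (div_le_one h3).2 htan
  obtain ⟨hw1, hw2⟩ := abs_le.1 hdiv
  refine ⟨2 * (r * cos s), ⟨by positivity, by linarith⟩, (1 + tan s / √3) / 2,
    ⟨by linarith, by linarith⟩, ?_⟩
  rw [tan_eq_sin_div_cos]
  apply Complex.ext <;>
  · simp only [Complex.smul_re, Complex.smul_im, Complex.add_re, Complex.add_im, smul_eq_mul,
      cis_re, cis_im, cos_add, sin_add, cos_sub, sin_sub, cos_pi_div_three, sin_pi_div_three]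
    field_simp
    ring

lemma exists_smul_chordPoint_eq {γ r t : ℝ} (hγ : 2 * π / 3 ≤ γ) (hr : r ∈ Set.Ioc 0 1)
    (ht : -(π / 3) ≤ t) (h0 : r * cos t ≤ 1 / 2) (h1 : r * cos (t - γ) ≤ 1 / 2) :
    ∃ l ∈ Set.Ioc (0 : ℝ) 1, ∃ w ∈ Set.Icc (0 : ℝ) 1,
      r • cis t = l • chordPoint (collapse γ t) (chordIndex γ t) w := by
  have hpi := pi_pos
  unfold chordPoint
  rcases le_or_gt t (π / 3) with h | h
  · obtain ⟨l, hl, w, hw, e⟩ := exists_smul_cis_eq_of_abs_sub_le (δ := 0) hr.1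
      (by rw [sub_zero]; exact abs_le.2 ⟨ht, h⟩) (by rwa [sub_zero])
    have hc : collapse γ t = 0 - π / 3 := by grind [collapse]
    have hk : chordIndex γ t = 0 := by grind [chordIndex]
    refine ⟨l, hl, w, hw, ?_⟩
    rw [hc, hk, e]
    push_cast
    ring_nf
  rcases le_or_gt t (γ + π / 3) with h' | h'
  · have hk : chordIndex γ t = 1 := by grind [chordIndex]
    rcases le_or_gt (γ - π / 3) t with h'' | h''
    · obtain ⟨l, hl, w, hw, e⟩ := exists_smul_cis_eq_of_abs_sub_le (δ := γ) hr.1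
        (abs_le.2 ⟨by linarith, by linarith⟩) h1
      have hc : collapse γ t = γ - π := by grind [collapse]
      refine ⟨l, hl, w, hw, ?_⟩
      rw [hc, hk, e]
      push_cast
      ring_nf
    · have hc : collapse γ t = t - 2 * π / 3 := by grind [collapse]
      refine ⟨r, hr, 0, by simp, ?_⟩
      rw [hc, hk]
      simp
  · have hc : collapse γ t = t - 4 * π / 3 := by grind [collapse]
    have hk : chordIndex γ t = 2 := by grind [chordIndex]
    refine ⟨r, hr, 0, by simp, ?_⟩
    rw [hc, hk, show t - 4 * π / 3 + 2 * π / 3 * (2 : ℤ) = t by push_cast; ring]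
    simp

lemma smul_add_smul_mem_of_zero_mem {E : Type*} [AddCommGroup E] [Module ℝ E] {K : Set E}
    (hK : Convex ℝ K) (h0 : 0 ∈ K) {x y : E} (hx : x ∈ K) (hy : y ∈ K) {c d : ℝ} (hc : 0 ≤ c)
    (hd : 0 ≤ d) (hcd : c + d ≤ 1) : c • x + d • y ∈ K := by
  rcases hc.eq_or_lt' with rfl | hc'
  · simpa using hK.smul_mem_of_zero_mem h0 hy ⟨hd, by simpa using hcd⟩
  have h := hK.smul_mem_of_zero_mem h0 (hK.add_smul_sub_mem hx hy (t := d / (c + d))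
    ⟨by positivity, div_le_one_of_le₀ (by linarith) (by positivity)⟩) ⟨by positivity, hcd⟩
  convert h using 1
  match_scalars <;> field_simp
  ring

lemma eq_zero_of_mem_extremePoints {E : Type*} [AddCommGroup E] [Module ℝ E] {K : Set E}
    (hK : Convex ℝ K) (h0 : 0 ∈ K) {q x y : E} (hq : q ∈ K.extremePoints ℝ) (hx : x ∈ K)
    (hy : y ∈ K) {c d : ℝ} (hc : 0 ≤ c) (hd : 0 ≤ d) (hcd : c + d < 1) (h : q = c • x + d • y) :
    q = 0 := by
  obtain ⟨m, hm, hm1⟩ := exists_between hcd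
  have hm0 : 0 < m := by linarith
  have hz : (c / m) • x + (d / m) • y ∈ K := smul_add_smul_mem_of_zero_mem hK h0 hx hy
    (by positivity) (by positivity) (by rw [← add_div]; exact (div_le_one hm0).2 hm.le)
  refine ((mem_extremePoints.1 hq).2 _ hz 0 h0 ⟨m, 1 - m, hm0, by linarith, by ring, ?_⟩).2.symm
  rw [h, smul_zero, add_zero, smul_add, smul_smul, smul_smul, mul_div_cancel₀ _ hm0.ne',
    mul_div_cancel₀ _ hm0.ne']

lemma ne_zero_of_mem_extremePoints {E : Type*} [AddCommGroup E] [Module ℝ E]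
    [TopologicalSpace E] [IsTopologicalAddGroup E] [ContinuousSMul ℝ E] [Nontrivial E] {K : Set E}
    (h0 : 0 ∈ interior K) {q : E} (hq : q ∈ K.extremePoints ℝ) : q ≠ 0 :=
  ne_of_mem_of_not_mem hq (Set.disjoint_left.1 (disjoint_interior_extremePoints K) h0)

/-- The right triangle with legs `1`. -/
def unitTriangle : Set (ℝ × ℝ) := {z | z.1 ∈ Set.Icc 0 1 ∧ z.2 ∈ Set.Icc 0 (1 - z.1)}

lemma mk_preimage_unitTriangle {x : ℝ} (hx : x ∈ Set.Icc 0 1) :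
    Prod.mk x ⁻¹' unitTriangle = Set.Icc 0 (1 - x) :=
  Set.ext fun _ => and_iff_right hx

lemma measurableSet_unitTriangle : MeasurableSet unitTriangle := by
  unfold unitTriangle
  measurability

lemma volume_unitTriangle : volume unitTriangle = ENNReal.ofReal (1 / 2) := by
  have hslice (x : ℝ) : volume (Prod.mk x ⁻¹' unitTriangle) =
      (Set.Icc 0 1).indicator (fun x => ENNReal.ofReal (1 - x)) x := by
    by_cases hx : x ∈ Set.Icc 0 1
    · rw [Set.indicator_of_mem hx, mk_preimage_unitTriangle hx, volume_Icc, sub_zero]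
    · have hempty : Prod.mk x ⁻¹' unitTriangle = ∅ :=
        Set.eq_empty_of_forall_notMem fun _ h => hx h.1
      rw [Set.indicator_of_notMem hx, hempty, measure_empty]
  rw [Measure.volume_eq_prod, Measure.prod_apply measurableSet_unitTriangle]
  simp_rw [hslice]
  rw [lintegral_indicator measurableSet_Icc, ← ofReal_integral_eq_lintegral_ofReal,
    integral_Icc_eq_integral_Ioc, ← intervalIntegral.integral_of_le zero_le_one,
    intervalIntegral.integral_sub (by simp) (by simp)]
  · norm_num
  · exact (continuous_const.sub continuous_id).integrableOn_Icc
  · filter_upwards [ae_restrict_mem measurableSet_Icc] with x hx using sub_nonneg.2 hx.2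

lemma volume_convexHull_zero_one_I_le :
    volume (convexHull ℝ {0, 1, Complex.I}) ≤ ENNReal.ofReal (1 / 2) := by
  rw [← volume_unitTriangle, ← Complex.volume_preserving_equiv_real_prod.measure_preimage
    measurableSet_unitTriangle.nullMeasurableSet]
  refine measure_mono (convexHull_min ?_ ?_)
  · simp [Set.insert_subset_iff, unitTriangle]
  · refine Convex.is_linear_preimage (𝕜 := ℝ) (f := Complex.equivRealProdLm) ?_
      Complex.equivRealProdLm.isLinear
    rintro x ⟨⟨hx0, hx1⟩, hx2, hx3⟩ y ⟨⟨hy0, hy1⟩, hy2, hy3⟩ a b ha hb hab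
    refine ⟨⟨?_, ?_⟩, ?_, ?_⟩ <;>
      simp only [Prod.fst_add, Prod.snd_add, Prod.smul_fst, Prod.smul_snd, smul_eq_mul] <;>
      nlinarith

/-- The real-linear endomorphism of `ℂ` sending `1` to `p` and `I` to `q`. -/
def frame (p q : ℂ) : ℂ →ₗ[ℝ] ℂ := Complex.basisOneI.constr ℝ ![p, q]

lemma det_frame (p q : ℂ) : LinearMap.det (frame p q) = ω p q := by
  rw [← LinearMap.det_toMatrix Complex.basisOneI, Matrix.det_fin_two, areaForm_eq]
  simp [LinearMap.toMatrix_apply, frame, Module.Basis.constr_apply_fintype, mul_comm]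

lemma areaForm_smul_eq (p q z : ℂ) : (ω p q) • z = (ω z q) • p + (ω p z) • q := by
  simp only [areaForm_eq]
  apply Complex.ext <;>
  · simp only [Complex.smul_re, Complex.smul_im, Complex.add_re, Complex.add_im, smul_eq_mul]
    ring

lemma volume_convexHull_zero_le (p q : ℂ) :
    volume (convexHull ℝ {0, p, q}) ≤ ENNReal.ofReal (|ω p q| / 2) := by
  have h : convexHull ℝ {0, p, q} = frame p q '' convexHull ℝ {0, 1, Complex.I} := by
    rw [LinearMap.image_convexHull, Set.image_insert_eq, Set.image_pair]
    simp [frame, Module.Basis.constr_apply_fintype]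
  rw [h, Measure.addHaar_image_linearMap, det_frame, div_eq_mul_one_div,
    ENNReal.ofReal_mul (abs_nonneg _)]
  gcongr
  exact volume_convexHull_zero_one_I_le

/-- `p` and `q` are consecutive extreme points of the convex hull of `V` in counterclockwise order
around the interior point `0`, seen from there in the directions `a < b`: all points of `V` have
polar angles from `b` to `a + 2π`. -/
structure ConsecutiveVertices (V : Set ℂ) (p q : ℂ) (a b : ℝ) : Prop where
  zero_mem : 0 ∈ interior (convexHull ℝ V)
  left_mem : p ∈ (convexHull ℝ V).extremePoints ℝ
  right_mem : q ∈ (convexHull ℝ V).extremePoints ℝ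
  left_eq : p = ‖p‖ • cis a
  right_eq : q = ‖q‖ • cis b
  lt : a < b
  exists_angle : ∀ v ∈ V, ∃ τ ∈ Set.Icc b (a + 2 * π), v = ‖v‖ • cis τ

namespace ConsecutiveVertices

variable {V : Set ℂ} {p q : ℂ} {a b : ℝ}

lemma sub_lt_pi (h : ConsecutiveVertices V p q a b) : b - a < π := by
  by_contra! hgap
  set m := (a + b) / 2 with hm
  have hle : convexHull ℝ V ⊆ {x | inner ℝ (cis m) x ≤ 0} := by
    refine convexHull_min (fun v hv => ?_) (convex_halfSpace_le (innerₗ ℂ (cis m)).isLinear 0)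
    obtain ⟨τ, ⟨hτ1, hτ2⟩, hv⟩ := h.exists_angle v hv
    rw [hv, Set.mem_ofPred_eq, inner_cis_smul_cis]
    exact mul_nonpos_of_nonneg_of_nonpos (norm_nonneg v)
      (cos_nonpos_of_pi_div_two_le_of_le (by linarith) (by linarith))
  obtain ⟨ε, hε, hball⟩ :=
    Metric.nhds_basis_closedBall.mem_iff.1 (mem_interior_iff_mem_nhds.1 h.zero_mem)
  have hmem : ε • cis m ∈ closedBall 0 ε := by
    rw [mem_closedBall_zero_iff, norm_smul_cis hε.le]
  have hnonpos := hle (hball hmem)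
  rw [Set.mem_ofPred_eq, inner_cis_smul_cis, sub_self, cos_zero, mul_one] at hnonpos
  linarith

lemma left_ne_zero (h : ConsecutiveVertices V p q a b) : p ≠ 0 :=
  ne_zero_of_mem_extremePoints h.zero_mem h.left_mem

lemma right_ne_zero (h : ConsecutiveVertices V p q a b) : q ≠ 0 :=
  ne_zero_of_mem_extremePoints h.zero_mem h.right_mem

lemma areaForm_pos (h : ConsecutiveVertices V p q a b) : 0 < ω p q := by
  have hp := norm_pos_iff.2 h.left_ne_zero
  have hq := norm_pos_iff.2 h.right_ne_zero
  rw [h.left_eq, h.right_eq, areaForm_smul_cis]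
  have := sin_pos_of_pos_of_lt_pi (sub_pos.2 h.lt) h.sub_lt_pi
  positivity

lemma areaForm_nonpos_or_nonpos (h : ConsecutiveVertices V p q a b) {v : ℂ} (hv : v ∈ V) :
    ω p v ≤ 0 ∨ ω v q ≤ 0 := by
  by_contra! hpos
  obtain ⟨τ, ⟨hτb, hτa⟩, hv⟩ := h.exists_angle v hv
  rw [h.left_eq, h.right_eq, hv, areaForm_smul_cis, areaForm_smul_cis] at hpos
  have hsina := pos_of_mul_pos_right hpos.1 (by positivity)
  have hsinb := pos_of_mul_pos_right hpos.2 (by positivity)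
  have hτ : τ - a < π := by
    by_contra! hπ
    have := sin_nonneg_of_nonneg_of_le_pi (x := τ - a - π) (by linarith) (by linarith)
    rw [sin_sub_pi] at this
    linarith
  have := sin_nonneg_of_nonneg_of_le_pi (x := τ - b) (by linarith) (by linarith [h.lt])
  rw [← neg_sub, sin_neg] at hsinb
  linarith

lemma areaForm_add_areaForm_le (h : ConsecutiveVertices V p q a b) {x : ℂ}
    (hx : x ∈ convexHull ℝ V) : ω p x + ω x q ≤ ω p q := by
  have hD := h.areaForm_pos
  have hK := convex_convexHull ℝ V
  have h0K := interior_subset h.zero_mem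
  suffices hle : convexHull ℝ V ⊆ {x | (ω p + LinearMap.flip ω q) x ≤ ω p q} from hle hx
  refine convexHull_min (fun w hw => ?_) (convex_halfSpace_le (ω p + LinearMap.flip ω q).isLinear _)
  have hwK := subset_convexHull ℝ V hw
  have hw' := areaForm_smul_eq p q w
  change ω p w + ω w q ≤ ω p q
  by_contra! hlt
  rcases h.areaForm_nonpos_or_nonpos hw with hle | hle
  · have hpos : 0 < ω w q := by linarith
    refine h.left_ne_zero (eq_zero_of_mem_extremePoints hK h0K h.left_mem hwK
      (extremePoints_subset h.right_mem) (c := ω p q / ω w q) (d := -ω p w / ω w q)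
      (by positivity) (div_nonneg (by linarith) hpos.le) ?_ ?_)
    · rw [← add_div, div_lt_one hpos]
      linarith
    · rw [div_eq_inv_mul, div_eq_inv_mul, mul_smul, mul_smul, hw', ← smul_add, neg_smul,
        add_neg_cancel_right, inv_smul_smul₀ hpos.ne']
  · have hpos : 0 < ω p w := by linarith
    refine h.right_ne_zero (eq_zero_of_mem_extremePoints hK h0K h.right_mem hwK
      (extremePoints_subset h.left_mem) (c := ω p q / ω p w) (d := -ω w q / ω p w)
      (by positivity) (div_nonneg (by linarith) hpos.le) ?_ ?_)
    · rw [← add_div, div_lt_one hpos]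
      linarith
    · rw [div_eq_inv_mul, div_eq_inv_mul, mul_smul, mul_smul, hw', ← smul_add, neg_smul,
        add_neg_cancel_comm, inv_smul_smul₀ hpos.ne']

lemma smul_cis_mem_convexHull (h : ConsecutiveVertices V p q a b) {ρ θ : ℝ} (hρ : 0 ≤ ρ)
    (hθ : θ ∈ Set.Icc a b) (hx : ρ • cis θ ∈ convexHull ℝ V) :
    ρ • cis θ ∈ convexHull ℝ {0, p, q} := by
  have hD := h.areaForm_pos
  have hgap := h.sub_lt_pi
  have hle := h.areaForm_add_areaForm_le hx
  have hsina := sin_nonneg_of_nonneg_of_le_pi (sub_nonneg.2 hθ.1) (by linarith [hθ.2])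
  have hsinb := sin_nonneg_of_nonneg_of_le_pi (sub_nonneg.2 hθ.2) (by linarith [hθ.1])
  have hpx : 0 ≤ ω p (ρ • cis θ) := by
    rw [h.left_eq, areaForm_smul_cis]
    positivity
  have hxq : 0 ≤ ω (ρ • cis θ) q := by
    rw [h.right_eq, areaForm_smul_cis]
    positivity
  rw [← inv_smul_smul₀ hD.ne' (ρ • cis θ), areaForm_smul_eq, smul_add, smul_smul, smul_smul]
  refine smul_add_smul_mem_of_zero_mem (convex_convexHull ℝ _)
    (subset_convexHull ℝ _ (by simp)) (subset_convexHull ℝ _ (by simp))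
    (subset_convexHull ℝ _ (by simp)) (by positivity) (by positivity) ?_
  rw [← mul_add, inv_mul_le_one₀ hD]
  linarith

end ConsecutiveVertices

/-- The polar angle of `z` in `[a, a + 2π)`. -/
def angleFrom (a : ℝ) (z : ℂ) : ℝ := toIcoMod two_pi_pos a z.arg

lemma angleFrom_mem (a : ℝ) (z : ℂ) : angleFrom a z ∈ Set.Ico a (a + 2 * π) :=
  toIcoMod_mem_Ico _ _ _

lemma norm_smul_cis_angleFrom (a : ℝ) (z : ℂ) : ‖z‖ • cis (angleFrom a z) = z := by
  have h : cis (angleFrom a z) = cis z.arg := by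
    rw [angleFrom, ← self_sub_toIcoDiv_zsmul, zsmul_eq_mul]
    apply Complex.ext
    · simp only [cis_re, cos_sub_int_mul_two_pi]
    · simp only [cis_im, sin_sub_int_mul_two_pi]
  rw [h, Complex.real_smul]
  exact Complex.norm_mul_exp_arg_mul_I z

/-- An enumeration `p 0, …, p n = p 0` of the points of `V` in counterclockwise order around `0`;
`t i` is the polar angle of `p i`, counted from `a` on for `i < n`. -/
structure CyclicEnumeration (V : Set ℂ) (a : ℝ) (n : ℕ) (p : ℕ → ℂ) (t : ℕ → ℝ) : Prop where
  strictMonoOn : StrictMonoOn t (Set.Iic n)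
  angle_mem : ∀ i < n, t i ∈ Set.Ico a (a + 2 * π)
  angle_last : t n = t 0 + 2 * π
  last : p n = p 0
  mem : ∀ i ≤ n, p i ∈ V
  exists_eq : ∀ v ∈ V, ∃ i < n, p i = v
  eq_smul_cis : ∀ i ≤ n, p i = ‖p i‖ • cis (t i)

lemma exists_cyclicEnumeration {V : Finset ℂ} {a : ℝ} (hV : V.Nonempty)
    (hinj : Set.InjOn (angleFrom a) V) :
    ∃ p t, CyclicEnumeration (V : Set ℂ) a V.card p t := by
  classical
  set n := V.card
  have hn : 0 < n := hV.card_pos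
  set e := (V.image (angleFrom a)).orderEmbOfFin (Finset.card_image_of_injOn hinj)
  have he (i) : ∃ v ∈ V, angleFrom a v = e i :=
    Finset.mem_image.1 (Finset.orderEmbOfFin_mem _ _ i)
  choose f hfV hf using he
  have he_mem (i) : e i ∈ Set.Ico a (a + 2 * π) := hf i ▸ angleFrom_mem a (f i)
  refine ⟨fun i => if h : i < n then f ⟨i, h⟩ else f ⟨0, hn⟩,
    fun i => if h : i < n then e ⟨i, h⟩ else e ⟨0, hn⟩ + 2 * π, ?_, ?_, ?_, ?_, ?_, ?_, ?_⟩
  · intro i _ j hj hij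
    have hin : i < n := hij.trans_le hj
    simp only [hin, dif_pos]
    split_ifs with hjn
    · exact e.strictMono hij
    · linarith [(he_mem ⟨i, hin⟩).2, (he_mem ⟨0, hn⟩).1]
  · intro i hi
    simpa only [hi, dif_pos] using he_mem ⟨i, hi⟩
  · simp [hn]
  · simp [hn]
  · intro i _
    split_ifs
    exacts [hfV _, hfV _]
  · intro v hv
    have hv' : angleFrom a v ∈ Set.range e := by
      rw [Finset.range_orderEmbOfFin]
      exact Finset.mem_image_of_mem _ hv
    obtain ⟨i, hi⟩ := hv'
    exact ⟨i, i.2, (dif_pos i.2).trans (hinj (hfV i) hv ((hf i).trans hi))⟩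
  · intro i _
    split_ifs
    · rw [← hf, norm_smul_cis_angleFrom]
    · rw [cis_add_two_pi, ← hf, norm_smul_cis_angleFrom]

namespace CyclicEnumeration

variable {V : Set ℂ} {a : ℝ} {n : ℕ} {p : ℕ → ℂ} {t : ℕ → ℝ}

lemma consecutiveVertices (h : CyclicEnumeration V a n p t) (h0 : 0 ∈ interior (convexHull ℝ V))
    (hV : (convexHull ℝ V).extremePoints ℝ = V) {i : ℕ} (hi : i < n) :
    ConsecutiveVertices V (p i) (p (i + 1)) (t i) (t (i + 1)) where
  zero_mem := h0
  left_mem := hV.symm ▸ h.mem i hi.le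
  right_mem := hV.symm ▸ h.mem (i + 1) hi
  left_eq := h.eq_smul_cis i hi.le
  right_eq := h.eq_smul_cis (i + 1) hi
  lt := h.strictMonoOn hi.le hi (Nat.lt_succ_self i)
  exists_angle v hv := by
    have hmono := h.strictMonoOn.monotoneOn
    obtain ⟨j, hj, rfl⟩ := h.exists_eq v hv
    rcases le_or_gt j i with hji | hij
    · refine ⟨t j + 2 * π, ⟨?_, ?_⟩, ?_⟩
      · have hlast := hmono hi (Set.self_mem_Iic) hi
        have hfirst := hmono (Nat.zero_le n) hj.le (Nat.zero_le j)
        linarith [h.angle_last]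
      · linarith [hmono hj.le hi.le hji]
      · rw [cis_add_two_pi]
        exact h.eq_smul_cis j hj.le
    · refine ⟨t j, ⟨hmono hi hj.le hij, ?_⟩, h.eq_smul_cis j hj.le⟩
      linarith [(h.angle_mem j hj).2, (h.angle_mem i hi).1]

lemma exists_angle_between (h : CyclicEnumeration V a n p t) (z : ℂ) :
    ∃ i < n, ∃ θ ∈ Set.Icc (t i) (t (i + 1)), z = ‖z‖ • cis θ := by
  obtain ⟨θ, hθ, hz⟩ : ∃ θ ∈ Set.Ico (t 0) (t n), z = ‖z‖ • cis θ :=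
    ⟨angleFrom (t 0) z, h.angle_last ▸ angleFrom_mem (t 0) z, (norm_smul_cis_angleFrom _ z).symm⟩
  obtain ⟨i, hi, hθi⟩ : ∃ i < n, θ ∈ Set.Ico (t i) (t (i + 1)) := by
    have hex : ∃ k, θ < t k := ⟨n, hθ.2⟩
    have hpos : Nat.find hex ≠ 0 := (Nat.find_eq_zero hex).not.2 hθ.1.not_gt
    obtain ⟨i, hi⟩ := Nat.exists_eq_succ_of_ne_zero hpos
    have hle := Nat.find_min' hex hθ.2
    have hlt := Nat.find_spec hex
    rw [hi] at hle hlt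
    exact ⟨i, hle, not_lt.1 (Nat.find_min hex (by omega)), hlt⟩
  exact ⟨i, hi, θ, Set.Ico_subset_Icc_self hθi, hz⟩

lemma volume_convexHull_le (h : CyclicEnumeration V a n p t)
    (h0 : 0 ∈ interior (convexHull ℝ V)) (hV : (convexHull ℝ V).extremePoints ℝ = V) :
    volume (convexHull ℝ V) ≤ ENNReal.ofReal (∑ i ∈ Finset.range n, ω (p i) (p (i + 1)) / 2) := by
  have hedge {i} (hi : i ∈ Finset.range n) := h.consecutiveVertices h0 hV (Finset.mem_range.1 hi)
  have hcover : convexHull ℝ V ⊆ ⋃ i ∈ Finset.range n, convexHull ℝ {0, p i, p (i + 1)} := by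
    intro z hz
    obtain ⟨i, hi, θ, hθ, hzθ⟩ := h.exists_angle_between z
    have hi' := Finset.mem_range.2 hi
    rw [hzθ] at hz ⊢
    exact Set.mem_biUnion hi' ((hedge hi').smul_cis_mem_convexHull (norm_nonneg z) hθ hz)
  calc volume (convexHull ℝ V)
      ≤ ∑ i ∈ Finset.range n, volume (convexHull ℝ {0, p i, p (i + 1)}) :=
        (measure_mono hcover).trans (measure_biUnion_finset_le _ _)
    _ ≤ ∑ i ∈ Finset.range n, ENNReal.ofReal (ω (p i) (p (i + 1)) / 2) := by
        refine Finset.sum_le_sum fun i hi => (volume_convexHull_zero_le _ _).trans ?_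
        rw [abs_of_pos (hedge hi).areaForm_pos]
    _ = _ := (ENNReal.ofReal_sum_of_nonneg fun i hi => by
        linarith [(hedge hi).areaForm_pos]).symm

end CyclicEnumeration

lemma injOn_angleFrom_extremePoints {K : Set ℂ} (hK : Convex ℝ K) (h0 : 0 ∈ interior K) (a : ℝ) :
    Set.InjOn (angleFrom a) (K.extremePoints ℝ) := by
  have norm_le {z w : ℂ} (hz : z ∈ K.extremePoints ℝ) (hw : w ∈ K.extremePoints ℝ)
      (h : angleFrom a z = angleFrom a w) : ‖w‖ ≤ ‖z‖ := by
    by_contra! hlt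
    have hw0 : 0 < ‖w‖ := (norm_nonneg z).trans_lt hlt
    refine ne_zero_of_mem_extremePoints h0 hz (eq_zero_of_mem_extremePoints hK
      (interior_subset h0) hz (extremePoints_subset hw) (interior_subset h0) (c := ‖z‖ / ‖w‖)
      (d := 0) (by positivity) le_rfl (by rwa [add_zero, div_lt_one hw0]) ?_)
    have hw' := norm_smul_cis_angleFrom a w
    rw [← h, ← eq_inv_smul_iff₀ hw0.ne'] at hw'
    rw [zero_smul, add_zero, div_eq_mul_inv, mul_smul, ← hw', norm_smul_cis_angleFrom]
  intro z hz w hw h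
  rw [← norm_smul_cis_angleFrom a z, ← norm_smul_cis_angleFrom a w, h,
    (norm_le hw hz h.symm).antisymm (norm_le hz hw h)]

lemma cis_add (s t : ℝ) : cis (s + t) = cis s * cis t := by
  unfold cis
  rw [← Complex.exp_add]
  push_cast
  ring_nf

lemma chordPoint_add (α ψ : ℝ) (j : ℤ) (w : ℝ) :
    chordPoint (α + ψ) j w = cis α * chordPoint ψ j w := by
  unfold chordPoint
  rw [add_assoc, add_assoc, cis_add α, cis_add α, mul_add (cis α), mul_smul_comm,
    mul_smul_comm]

lemma sum_areaForm_le {k : ℕ} {p : ℕ → ℂ} {ψ w l : ℕ → ℝ} {j : ℕ → ℤ}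
    (hp : ∀ i ≤ k, p i = l i • chordPoint (ψ i) (j i) (w i))
    (hl : ∀ i ≤ k, l i ∈ Set.Ioc 0 1) (hw : ∀ i ≤ k, w i ∈ Set.Icc 0 1)
    (hψ : ∀ i < k, ψ i ≤ ψ (i + 1)) (hj : ∀ i < k, j i ≤ j (i + 1))
    (hψ_last : ψ k ≤ ψ 0 + 2 * π / 3) (hj_last : j k ≤ j 0 + 2) (hp_last : p (k + 1) = p 0)
    (hpos : ∀ i ≤ k, 0 ≤ ω (p i) (p (i + 1))) :
    ∑ i ∈ Finset.range (k + 1), ω (p i) (p (i + 1)) / 2 ≤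
      1 + √3 / 2 + ((k + 1 : ℕ) - 6) * vertexExcess := by
  set φ := fun i => chordPotential (ψ i) (j i) (w i)
  have edge (i) (hi : i < k) : ω (p i) (p (i + 1)) / 2 ≤ vertexExcess + (φ (i + 1) - φ i) := by
    have h0 := hpos i hi.le
    rw [hp i hi.le, hp (i + 1) hi] at h0 ⊢
    exact areaForm_smul_chordPoint_le (hψ i hi) (hj i hi) (hw i hi.le) (hw _ hi) (hl i hi.le)
      (hl _ hi) h0
  have last : ω (p k) (p (k + 1)) / 2 ≤
      vertexExcess + (φ 0 + (1 + √3 / 2 - 6 * vertexExcess) - φ k) := by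
    have h0 := hpos k le_rfl
    rw [hp_last, hp k le_rfl, hp 0 k.zero_le, ← chordPoint_revolve (ψ 0)] at h0 ⊢
    rw [← chordPotential_revolve]
    exact areaForm_smul_chordPoint_le hψ_last hj_last (hw k le_rfl) (hw 0 k.zero_le) (hl k le_rfl)
      (hl 0 k.zero_le) h0
  calc ∑ i ∈ Finset.range (k + 1), ω (p i) (p (i + 1)) / 2
      ≤ ∑ i ∈ Finset.range k, (vertexExcess + (φ (i + 1) - φ i)) +
          (vertexExcess + (φ 0 + (1 + √3 / 2 - 6 * vertexExcess) - φ k)) := by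
        rw [Finset.sum_range_succ]
        exact add_le_add (Finset.sum_le_sum fun i hi => edge i (Finset.mem_range.1 hi)) last
    _ = _ := by
        rw [Finset.sum_add_distrib, Finset.sum_range_sub, Finset.sum_const, Finset.card_range,
          nsmul_eq_mul]
        push_cast
        ring

section

variable {V : Set ℂ} {α γ : ℝ} {n : ℕ} {p : ℕ → ℂ} {t : ℕ → ℝ}

lemma CyclicEnumeration.sum_areaForm_le (h : CyclicEnumeration V (α - π / 3) n p t) (hn : 0 < n)
    (hγ : γ ∈ Set.Icc (2 * π / 3) (4 * π / 3)) (hV0 : 0 ∉ V) (hV : V ⊆ closedBall 0 1)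
    (hα : ∀ z ∈ V, inner ℝ (cis α) z ≤ 1 / 2) (hαγ : ∀ z ∈ V, inner ℝ (cis (α + γ)) z ≤ 1 / 2)
    (hpos : ∀ i < n, 0 ≤ ω (p i) (p (i + 1))) :
    ∑ i ∈ Finset.range n, ω (p i) (p (i + 1)) / 2 ≤ 1 + √3 / 2 + (n - 6) * vertexExcess := by
  obtain ⟨k, rfl⟩ := Nat.exists_eq_succ_of_ne_zero hn.ne'
  set s := fun i => t i - α with hs
  have hs_mem (i) (hi : i ≤ k) : s i ∈ Set.Icc (-(π / 3)) (5 * π / 3) := by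
    have := h.angle_mem i (Nat.lt_succ_of_le hi)
    constructor <;> linarith [this.1, this.2]
  have hs_le (i) (hi : i < k) : s i ≤ s (i + 1) :=
    sub_le_sub_right (h.strictMonoOn.monotoneOn (Set.mem_Iic.2 (by omega))
      (Set.mem_Iic.2 (by omega)) i.le_succ) α
  have hex (i) : ∃ l w : ℝ, i ≤ k → l ∈ Set.Ioc 0 1 ∧ w ∈ Set.Icc 0 1 ∧
      p i = l • chordPoint (α + collapse γ (s i)) (chordIndex γ (s i)) w := by
    by_cases hi : i ≤ k
    · have hmem := h.mem i (by omega)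
      have hpi : p i = ‖p i‖ • cis (α + s i) := by
        rw [hs, add_sub_cancel]
        exact h.eq_smul_cis i (by omega)
      have h0 := hα _ hmem
      have h1 := hαγ _ hmem
      rw [hpi, inner_cis_smul_cis] at h0 h1
      rw [add_sub_cancel_left] at h0
      rw [add_sub_add_left_eq_sub] at h1
      obtain ⟨l, hl, w, hw, heq⟩ := exists_smul_chordPoint_eq hγ.1
        ⟨norm_pos_iff.2 (ne_of_mem_of_not_mem hmem hV0), mem_closedBall_zero_iff.1 (hV hmem)⟩
        (hs_mem i hi).1 h0 h1
      refine ⟨l, w, fun _ => ⟨hl, hw, ?_⟩⟩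
      rw [chordPoint_add, ← mul_smul_comm, ← heq, mul_smul_comm, ← cis_add]
      exact hpi
    · exact ⟨0, 0, fun hi' => absurd hi' hi⟩
  choose l w hlw using hex
  refine SeqCovering.sum_areaForm_le (fun i hi => (hlw i hi).2.2) (fun i hi => (hlw i hi).1)
    (fun i hi => (hlw i hi).2.1) (fun i hi => ?_) (fun i hi => ?_) ?_ ?_ h.last
    (fun i hi => hpos i (Nat.lt_succ_of_le hi))
  · exact add_le_add_right (collapse_mono γ (hs_le i hi)) α
  · exact chordIndex_mono γ (hs_le i hi)
  · linarith [collapse_le hγ.2 (hs_mem k le_rfl).2, neg_pi_div_three_le_collapse γ (s 0)]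
  · linarith [(chordIndex_mem_Icc γ (s k)).2, (chordIndex_mem_Icc γ (s 0)).1]

end

theorem volume_le_of_extremePoints_eq {K : Set ℂ} (hK : Convex ℝ K) (hKc : IsCompact K)
    (h0 : 0 ∈ interior K) (hK1 : K ⊆ closedBall 0 1) {V : Finset ℂ}
    (hV : K.extremePoints ℝ = V) {α γ : ℝ} (hγ : γ ∈ Set.Icc (2 * π / 3) (4 * π / 3))
    (hα : ∀ z ∈ K, inner ℝ (cis α) z ≤ 1 / 2) (hαγ : ∀ z ∈ K, inner ℝ (cis (α + γ)) z ≤ 1 / 2) :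
    volume K ≤ ENNReal.ofReal (1 + √3 / 2 + (V.card - 6) * vertexExcess) := by
  have hKV : K = convexHull ℝ V := by
    rw [← closure_convexHull_extremePoints hKc hK, hV,
      (V.finite_toSet.isCompact_convexHull ℝ).isClosed.closure_eq]
  have hVK : (V : Set ℂ) ⊆ K := hV ▸ extremePoints_subset
  have hV_nonempty : V.Nonempty := by
    rw [← Finset.coe_nonempty, ← hV]
    exact hKc.extremePoints_nonempty ⟨0, interior_subset h0⟩
  obtain ⟨p, t, h⟩ := exists_cyclicEnumeration (a := α - π / 3) hV_nonempty
    (hV ▸ injOn_angleFrom_extremePoints hK h0 _)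
  have h0' : 0 ∈ interior (convexHull ℝ (V : Set ℂ)) := hKV ▸ h0
  have hV' : (convexHull ℝ (V : Set ℂ)).extremePoints ℝ = V := hKV ▸ hV
  have hV0 : (0 : ℂ) ∉ (V : Set ℂ) := fun hmem =>
    ne_zero_of_mem_extremePoints h0 (hV.symm ▸ hmem) rfl
  rw [hKV]
  refine (h.volume_convexHull_le h0' hV').trans (ENNReal.ofReal_le_ofReal ?_)
  exact h.sum_areaForm_le hV_nonempty.card_pos hγ hV0 (hVK.trans hK1)
    (fun z hz => hα z (hVK hz)) (fun z hz => hαγ z (hVK hz))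
    fun i hi => (h.consecutiveVertices h0' hV' hi).areaForm_pos.le

/-! ### Voronoi cells -/

section Metric

variable {E : Type*} [MetricSpace E] {S : Set E} {c d v : E}

/-- The Voronoi cell of `c` with respect to the sites `S`. -/
def voronoiCell (S : Set E) (c : E) : Set E := {x | ∀ d ∈ S, dist x c ≤ dist x d}

/-- The sites in `S` at minimal distance from `v`, i.e. those whose Voronoi cells contain `v`. -/
def nearestSites (S : Set E) (v : E) : Set E := {c ∈ S | v ∈ voronoiCell S c}

/-- The closed unit balls centred in `S` cover the space, and `S` is locally finite. -/
structure LocallyFiniteCovering (S : Set E) : Prop where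
  finite_inter_closedBall : ∀ z r, (S ∩ closedBall z r).Finite
  exists_dist_le_one : ∀ z, ∃ c ∈ S, dist z c ≤ 1

lemma isClosed_voronoiCell (S : Set E) (c : E) : IsClosed (voronoiCell S c) := by
  simp only [voronoiCell, Set.ofPred_forall]
  exact isClosed_biInter fun d _ =>
    isClosed_le (continuous_id.dist continuous_const) (continuous_id.dist continuous_const)

lemma dist_eq_of_mem_nearestSites (hc : c ∈ nearestSites S v) (hd : d ∈ nearestSites S v) :
    dist v c = dist v d :=
  (hc.2 d hd.1).antisymm (hd.2 c hc.1)

lemma nearestSites_self_subset (hc : c ∈ S) : nearestSites S c ⊆ {c} := fun d hd => by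
  have h := hd.2 c hc
  rw [dist_self] at h
  exact (dist_le_zero.1 h).symm

namespace LocallyFiniteCovering

lemma countable (h : LocallyFiniteCovering S) : S.Countable := by
  rcases isEmpty_or_nonempty E with _ | ⟨⟨z⟩⟩
  · exact S.to_countable
  · refine (Set.countable_iUnion fun n : ℕ => (h.finite_inter_closedBall z n).countable).mono ?_
    exact fun c hc => Set.mem_iUnion.2 ⟨⌈dist c z⌉₊, hc, mem_closedBall.2 (Nat.le_ceil _)⟩

lemma voronoiCell_subset (h : LocallyFiniteCovering S) (c : E) :
    voronoiCell S c ⊆ closedBall c 1 := fun x hx => by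
  obtain ⟨d, hd, hxd⟩ := h.exists_dist_le_one x
  exact (hx d hd).trans hxd

lemma isCompact_voronoiCell [ProperSpace E] (h : LocallyFiniteCovering S) (c : E) :
    IsCompact (voronoiCell S c) :=
  (isCompact_closedBall c 1).of_isClosed_subset (isClosed_voronoiCell S c) (h.voronoiCell_subset c)

lemma nearestSites_subset (h : LocallyFiniteCovering S) (v : E) :
    nearestSites S v ⊆ S ∩ closedBall v 1 := fun c hc =>
  ⟨hc.1, mem_closedBall'.2 (h.voronoiCell_subset c hc.2)⟩

lemma finite_nearestSites (h : LocallyFiniteCovering S) (v : E) : (nearestSites S v).Finite :=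
  (h.finite_inter_closedBall v 1).subset (h.nearestSites_subset v)

lemma nonempty_nearestSites (h : LocallyFiniteCovering S) (v : E) :
    (nearestSites S v).Nonempty := by
  obtain ⟨d, hd, hvd⟩ := h.exists_dist_le_one v
  obtain ⟨c, ⟨hc, hvc⟩, hmin⟩ := Set.exists_min_image _ (dist v) (h.finite_inter_closedBall v 1)
    ⟨d, hd, mem_closedBall'.2 hvd⟩
  refine ⟨c, hc, fun e he => ?_⟩
  rcases le_or_gt (dist v e) 1 with hve | hve
  · exact hmin e ⟨he, mem_closedBall'.2 hve⟩
  · exact (mem_closedBall'.1 hvc).trans hve.le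

lemma eventually_nearestSites_subset (h : LocallyFiniteCovering S) (v : E) :
    ∀ᶠ x in nhds v, nearestSites S x ⊆ nearestSites S v := by
  obtain ⟨c, hc⟩ := h.nonempty_nearestSites v
  have hfar : ∀ᶠ x in nhds v, ∀ d ∈ S ∩ closedBall v 2, d ∉ nearestSites S v →
      dist x c < dist x d := by
    rw [eventually_all_finite (h.finite_inter_closedBall v 2)]
    intro d hd
    by_cases hdv : d ∈ nearestSites S v
    · exact Eventually.of_forall fun _ hd' => absurd hdv hd'
    have hlt : dist v c < dist v d := lt_of_not_ge fun hle =>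
      hdv ⟨hd.1, fun e he => hle.trans (hc.2 e he)⟩
    have hcont (e : E) : ContinuousAt (fun x => dist x e) v := by fun_prop
    filter_upwards [(hcont c).eventually_lt (hcont d) hlt] with x hx _ using hx
  filter_upwards [hfar, closedBall_mem_nhds v one_pos] with x hx hxv d hd
  by_contra hdv
  have hdist : dist d v ≤ 2 := by
    linarith [dist_triangle_left d v x, mem_closedBall.1 (h.voronoiCell_subset d hd.2),
      mem_closedBall.1 hxv]
  exact (hx d ⟨hd.1, hdist⟩ hdv).not_ge (hd.2 c hc.1)

lemma mem_interior_voronoiCell (h : LocallyFiniteCovering S) (hv : nearestSites S v ⊆ {c}) :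
    v ∈ interior (voronoiCell S c) := by
  rw [mem_interior_iff_mem_nhds]
  filter_upwards [h.eventually_nearestSites_subset v] with x hx
  obtain ⟨d, hd⟩ := h.nonempty_nearestSites x
  exact hv (hx hd) ▸ hd.2

end LocallyFiniteCovering

end Metric

section InnerProductSpace

variable {E : Type*} [NormedAddCommGroup E] [InnerProductSpace ℝ E] {S : Set E} {c d p v x : E}

lemma dist_sq_sub_dist_sq (v x c d : E) :
    dist x c ^ 2 - dist x d ^ 2 = 2 * inner ℝ (x - v) (d - c) + (dist v c ^ 2 - dist v d ^ 2) := by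
  have hsub (e : E) : dist x e ^ 2 =
      ‖x - v‖ ^ 2 + 2 * inner ℝ (x - v) (v - e) + dist v e ^ 2 := by
    rw [dist_eq_norm, dist_eq_norm, ← norm_add_sq_real, sub_add_sub_cancel]
  rw [hsub c, hsub d, ← sub_sub_sub_cancel_left c d v, inner_sub_right _ (v - c)]
  ring

lemma convex_voronoiCell (S : Set E) (c : E) : Convex ℝ (voronoiCell S c) := by
  simp only [voronoiCell, Set.ofPred_forall]
  refine convex_iInter₂ fun d _ => ?_
  have h : {x | dist x c ≤ dist x d} = {x | inner ℝ (d - c) x ≤ (‖d‖ ^ 2 - ‖c‖ ^ 2) / 2} := by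
    ext x
    have hsq := dist_sq_sub_dist_sq 0 x c d
    rw [sub_zero, dist_zero_left, dist_zero_left, real_inner_comm] at hsq
    rw [Set.mem_ofPred_eq, Set.mem_ofPred_eq, ← sq_le_sq₀ dist_nonneg dist_nonneg]
    constructor <;> intro _ <;> linarith
  rw [h]
  exact convex_halfSpace_le (innerₗ E (d - c)).isLinear _

lemma inner_sub_le_of_mem_voronoiCell (hx : x ∈ voronoiCell S c) (hp : p ∈ S) :
    inner ℝ (x - c) (p - c) ≤ ‖p - c‖ ^ 2 / 2 := by
  have hsq := dist_sq_sub_dist_sq c x c p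
  rw [dist_self, dist_eq_norm' c p] at hsq
  have := pow_le_pow_left₀ dist_nonneg (hx p hp) 2
  linarith

lemma inner_sub_nonpos_of_mem_voronoiCell (hx : x ∈ voronoiCell S c) (hc : c ∈ nearestSites S v)
    (hp : p ∈ nearestSites S v) : inner ℝ (x - v) (p - c) ≤ 0 := by
  have hsq := dist_sq_sub_dist_sq v x c p
  rw [dist_eq_of_mem_nearestSites hc hp] at hsq
  have := pow_le_pow_left₀ dist_nonneg (hx p hp.1) 2
  linarith

lemma eq_of_two_lt_ncard_of_dist_eq (hE : Module.finrank ℝ E = 2) {N : Set E} (hN : 2 < N.ncard)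
    (hv : ∀ p ∈ N, dist v p = dist v c) (hx : ∀ p ∈ N, dist x p = dist x c) :
    v = x := by
  by_contra hne
  have : FiniteDimensional ℝ E := Module.finite_of_finrank_eq_succ hE
  obtain ⟨a, b, e, ha, hb, he, hab, hae, hbe⟩ :=
    (Set.two_lt_ncard_iff (Set.finite_of_ncard_pos (by omega))).1 hN
  have hv' (p) (hp : p ∈ N) : dist p v = dist v c := by rw [dist_comm, hv p hp]
  have hx' (p) (hp : p ∈ N) : dist p x = dist x c := by rw [dist_comm, hx p hp]
  rcases EuclideanGeometry.eq_of_dist_eq_of_dist_eq_of_finrank_eq_two hE hne hab (hv' a ha)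
    (hv' b hb) (hv' e he) (hx' a ha) (hx' b hb) (hx' e he) with h | h
  exacts [hae h.symm, hbe h.symm]

end InnerProductSpace

lemma eq_zero_of_eventually_add_smul_mem {E : Type*} [AddCommGroup E] [Module ℝ E] {K : Set E}
    {v w : E} (hv : v ∈ K.extremePoints ℝ) (h : ∀ᶠ s : ℝ in nhds 0, v + s • w ∈ K) : w = 0 := by
  obtain ⟨ε, hε, hball⟩ := Metric.nhds_basis_closedBall.eventually_iff.1 h
  have hmem (s : ℝ) (hs : |s| = ε) : v + s • w ∈ K := hball (by simp [hs])
  have heq := ((mem_extremePoints.1 hv).2 _ (hmem ε (abs_of_pos hε)) _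
    (hmem (-ε) (by rw [abs_neg, abs_of_pos hε]))
    ⟨1 / 2, 1 / 2, by norm_num, by norm_num, by norm_num, by module⟩).1
  exact (smul_eq_zero.1 (add_eq_left.1 heq)).resolve_left hε.ne'

lemma eq_zero_of_isMaxOn_inner {E : Type*} [NormedAddCommGroup E] [InnerProductSpace ℝ E]
    {K : Set E} {u v : E} (hmax : IsMaxOn (inner ℝ u) K v) (hv : v ∈ interior K) : u = 0 := by
  have h := (hmax.isLocalMax (mem_interior_iff_mem_nhds.1 hv)).hasFDerivAt_eq_zero
    (innerSL ℝ u).hasFDerivAt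
  exact inner_self_eq_zero.1 (DFunLike.congr_fun h u)

variable {S : Set ℂ} {c v u : ℂ}

/-- The vertices of the Voronoi diagram on the cell of `c`: points with at least three nearest
sites. -/
def cellVertices (S : Set ℂ) (c : ℂ) : Set ℂ :=
  {v ∈ voronoiCell S c | 2 < (nearestSites S v).ncard}

lemma eq_of_dist_eq_of_mem_cellVertices {x : ℂ} (hc : c ∈ S) (hv : v ∈ cellVertices S c)
    (hx : ∀ p ∈ nearestSites S v, dist x p = dist x c) : x = v :=
  (eq_of_two_lt_ncard_of_dist_eq Complex.finrank_real_complex hv.2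
    (fun _ hp => dist_eq_of_mem_nearestSites hp ⟨hc, hv.1⟩) hx).symm

lemma LocallyFiniteCovering.finite_cellVertices (h : LocallyFiniteCovering S) (hc : c ∈ S) :
    (cellVertices S c).Finite := by
  refine Set.Finite.of_finite_image
    ((h.finite_inter_closedBall c 2).finite_subsets.subset ?_) (f := nearestSites S) ?_
  · rintro _ ⟨v, hv, rfl⟩ d hd
    have hdist := dist_triangle_left d c v
    rw [← dist_eq_of_mem_nearestSites ⟨hc, hv.1⟩ hd] at hdist
    refine ⟨hd.1, mem_closedBall.2 ?_⟩
    linarith [mem_closedBall.1 (h.voronoiCell_subset c hv.1)]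
  · intro v hv w hw hvw
    exact eq_of_dist_eq_of_mem_cellVertices hc hw fun p hp =>
      dist_eq_of_mem_nearestSites (hvw.symm ▸ hp) ⟨hc, hv.1⟩

lemma LocallyFiniteCovering.extremePoints_subset_cellVertices (h : LocallyFiniteCovering S)
    (hc : c ∈ S) : (voronoiCell S c).extremePoints ℝ ⊆ cellVertices S c := by
  intro v hv
  have hcv : c ∈ nearestSites S v := ⟨hc, extremePoints_subset hv⟩
  refine ⟨hcv.2, ?_⟩
  by_contra! hle
  have hle' : (nearestSites S v \ {c}).ncard ≤ 1 := by
    rw [Set.ncard_sdiff_singleton_of_mem hcv]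
    omega
  have hsub : (nearestSites S v \ {c}).Subsingleton :=
    (Set.ncard_le_one (h.finite_nearestSites v).sdiff).1 hle'
  rcases hsub.eq_empty_or_singleton with hempty | ⟨e, he⟩
  · exact Set.disjoint_left.1 (disjoint_interior_extremePoints _)
      (h.mem_interior_voronoiCell (Set.sdiff_eq_empty.1 hempty)) hv
  · have hev : e ∈ nearestSites S v \ {c} := he ▸ Set.mem_singleton e
    have hw : Complex.I * (e - c) ≠ 0 :=
      mul_ne_zero Complex.I_ne_zero (sub_ne_zero.2 hev.2)
    refine hw (eq_zero_of_eventually_add_smul_mem hv ?_)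
    have htend : Tendsto (fun s : ℝ => v + s • (Complex.I * (e - c))) (nhds 0) (nhds v) :=
      Continuous.tendsto' (by fun_prop) _ _ (by simp)
    filter_upwards [htend.eventually (h.eventually_nearestSites_subset v)] with s hs
    obtain ⟨d, hd⟩ := h.nonempty_nearestSites (v + s • (Complex.I * (e - c)))
    rcases eq_or_ne d c with rfl | hdc
    · exact hd.2
    · obtain rfl : d = e := he.subset ⟨hs hd, hdc⟩
      have hsq := dist_sq_sub_dist_sq v (v + s • (Complex.I * (d - c))) c d
      have hperp : inner ℝ (s • (Complex.I * (d - c))) (d - c) = 0 := by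
        rw [inner_eq]
        simp
        ring
      rw [add_sub_cancel_left, hperp, dist_eq_of_mem_nearestSites hcv hev.1] at hsq
      intro f hf
      refine le_trans ?_ (hd.2 f hf)
      exact (sq_le_sq₀ dist_nonneg dist_nonneg).1 (by linarith)

lemma exists_injOn_areaForm (hS : S.Countable) : ∃ u : ℂ, u ≠ 0 ∧ Set.InjOn (ω u) S := by
  have hslopes : ((fun p : ℂ × ℂ => (p.1 - p.2).im / (p.1 - p.2).re) '' S ×ˢ S).Countable :=
    (hS.prod hS).image _
  obtain ⟨t, ht⟩ := (hslopes.dense_compl ℝ).nonempty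
  refine ⟨⟨1, t⟩, fun h => one_ne_zero (congrArg Complex.re h), fun c hc d hd hcd => ?_⟩
  simp only [areaForm_eq, one_mul] at hcd
  have hre : (c - d).re = 0 := by
    by_contra hne
    refine ht ⟨(c, d), ⟨hc, hd⟩, (div_eq_iff hne).2 ?_⟩
    rw [Complex.sub_im, Complex.sub_re]
    linarith
  rw [Complex.sub_re, sub_eq_zero] at hre
  exact Complex.ext hre (by rw [hre] at hcd; linarith)

/-- `v` is a point of the Voronoi cell of `c` that lies farthest in the direction `u`. -/
def IsFarthest (S : Set ℂ) (u c v : ℂ) : Prop :=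
  v ∈ voronoiCell S c ∧ IsMaxOn (inner ℝ u) (voronoiCell S c) v

lemma IsFarthest.eq (h : LocallyFiniteCovering S) (hu : u ≠ 0) (hinj : Set.InjOn (ω u) S)
    (hc : c ∈ S) {w : ℂ} (hv : IsFarthest S u c v) (hw : IsFarthest S u c w) : v = w := by
  by_contra hne
  have huvw : inner ℝ u v = inner ℝ u w := le_antisymm (hw.2 hv.1) (hv.2 hw.1)
  set m := midpoint ℝ v w with hm
  have hvm : v - m = (2⁻¹ : ℝ) • (v - w) := left_sub_midpoint v w
  have hwm : w - m = -(v - m) := by rw [hvm, hm, right_sub_midpoint, ← smul_neg, neg_sub]; rfl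
  have hmc : m ∈ voronoiCell S c := (convex_voronoiCell S c).midpoint_mem hv.1 hw.1
  have hum : inner ℝ u (v - m) = 0 := by
    rw [hvm, inner_smul_right, inner_sub_right, huvw, sub_self, mul_zero]
  have hmmax : IsMaxOn (inner ℝ u) (voronoiCell S c) m := fun x hx => by
    have := hv.2 hx
    rw [inner_sub_right, sub_eq_zero] at hum
    exact hum ▸ this
  obtain ⟨d, hd, hdc⟩ : ∃ d ∈ nearestSites S m, d ≠ c := by
    by_contra! hall
    exact hu (eq_zero_of_isMaxOn_inner hmmax (h.mem_interior_voronoiCell hall))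
  have hperp : inner ℝ (v - m) (d - c) = 0 := by
    have hw' := inner_sub_nonpos_of_mem_voronoiCell hw.1 ⟨hc, hmc⟩ hd
    rw [hwm, inner_neg_left] at hw'
    linarith [inner_sub_nonpos_of_mem_voronoiCell hv.1 ⟨hc, hmc⟩ hd]
  have hprod := Complex.orientation.inner_mul_inner_add_areaForm_mul_areaForm u (v - m) (d - c)
  have hsq := Complex.orientation.inner_sq_add_areaForm_sq u (v - m)
  have hvm0 : v - m ≠ 0 := by
    rw [hvm]
    exact smul_ne_zero (by norm_num) (sub_ne_zero.2 hne)
  rw [hum, hperp, zero_mul, zero_add, mul_zero, mul_eq_zero] at hprod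
  rcases hprod with hz | hz
  · rw [hum, hz] at hsq
    simp [hu, hvm0] at hsq
  · rw [map_sub, sub_eq_zero] at hz
    exact hdc (hinj hd.1 hc hz)

/-- A positive combination `z` of `x` and `y` is perpendicular to `u`, so `ω u q` has the sign of
`⟪z, q⟫ ≤ 0` up to a constant factor. -/
lemma areaForm_nonpos_or_nonneg_of_inner_nonpos {Q : Set ℂ} {x y : ℂ}
    (hx : ∀ q ∈ Q, inner ℝ x q ≤ 0) (hy : ∀ q ∈ Q, inner ℝ y q ≤ 0) (hux : 0 < inner ℝ u x)
    (huy : inner ℝ u y < 0) :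
    (∀ q ∈ Q, ω u q ≤ 0) ∨ (∀ q ∈ Q, 0 ≤ ω u q) ∨ ∀ q ∈ Q, inner ℝ x q = 0 := by
  set a := inner ℝ u x
  set b := inner ℝ u y
  set z := (-b) • x + a • y with hz
  have huz : inner ℝ u z = 0 := by
    rw [hz, inner_add_right, inner_smul_right, inner_smul_right]
    ring
  have hprod (q) : ω u z * ω u q = ‖u‖ ^ 2 * (-b * inner ℝ x q + a * inner ℝ y q) := by
    have h := Complex.orientation.inner_mul_inner_add_areaForm_mul_areaForm u z q
    rwa [huz, zero_mul, zero_add, hz, inner_add_left, real_inner_smul_left,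
      real_inner_smul_left] at h
  have hnonpos (q) (hq : q ∈ Q) : ω u z * ω u q ≤ 0 := by
    rw [hprod]
    refine mul_nonpos_of_nonneg_of_nonpos (sq_nonneg _) ?_
    nlinarith [hx q hq, hy q hq]
  rcases lt_trichotomy (ω u z) 0 with hlt | heq | hgt
  · exact .inr (.inl fun q hq => nonneg_of_mul_nonpos_right (hnonpos q hq) hlt)
  · refine .inr (.inr fun q hq => ?_)
    have hu : u ≠ 0 := fun hu => hux.ne' (by simp only [a, hu, inner_zero_left])
    have h0 := hprod q
    rw [heq, zero_mul, eq_comm, mul_eq_zero_iff_left (by positivity)] at h0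
    nlinarith [hx q hq, hy q hq]
  · exact .inl fun q hq => nonpos_of_mul_nonpos_right (hnonpos q hq) hgt

lemma areaForm_le_or_le_of_not_isFarthest (hc : c ∈ S) (hv : v ∈ cellVertices S c)
    (htop : ¬ IsFarthest S u c v) (hbot : ¬ IsFarthest S (-u) c v) :
    (∀ p ∈ nearestSites S v, ω u p ≤ ω u c) ∨ ∀ p ∈ nearestSites S v, ω u c ≤ ω u p := by
  obtain ⟨x, hx, hxv⟩ : ∃ x ∈ voronoiCell S c, 0 < inner ℝ u (x - v) := by
    by_contra! hle
    refine htop ⟨hv.1, fun x hx => ?_⟩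
    simpa only [inner_sub_right, sub_nonpos, Set.mem_ofPred_eq] using hle x hx
  obtain ⟨y, hy, hyv⟩ : ∃ y ∈ voronoiCell S c, inner ℝ u (y - v) < 0 := by
    by_contra! hle
    refine hbot ⟨hv.1, fun x hx => ?_⟩
    simpa only [inner_neg_left, neg_le_neg_iff, inner_sub_right, sub_nonneg, Set.mem_ofPred_eq]
      using hle x hx
  have hcv : c ∈ nearestSites S v := ⟨hc, hv.1⟩
  have h := areaForm_nonpos_or_nonneg_of_inner_nonpos (Q := (· - c) '' nearestSites S v)
    (Set.forall_mem_image.2 fun p hp => inner_sub_nonpos_of_mem_voronoiCell hx hcv hp)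
    (Set.forall_mem_image.2 fun p hp => inner_sub_nonpos_of_mem_voronoiCell hy hcv hp) hxv hyv
  simp only [Set.forall_mem_image, map_sub, sub_nonpos, sub_nonneg] at h
  rcases h with hle | hge | hperp
  · exact .inl fun p hp => hle hp
  · exact .inr fun p hp => hge hp
  · obtain rfl : x = v := eq_of_dist_eq_of_mem_cellVertices hc hv fun p hp => by
      have hsq := dist_sq_sub_dist_sq v x c p
      rw [hperp hp, dist_eq_of_mem_nearestSites hcv hp] at hsq
      exact (pow_left_inj₀ dist_nonneg dist_nonneg two_ne_zero).1 (by linarith)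
    rw [sub_self, inner_zero_right] at hxv
    exact absurd hxv (lt_irrefl 0)

open scoped Classical in
lemma card_nearestSites_le {S : Set ℂ} {u v : ℂ} (hinj : Set.InjOn (ω u) S) {G : Finset ℂ}
    (hG : nearestSites S v ⊆ G) (hv : 2 < (nearestSites S v).ncard) :
    (nearestSites S v).ncard ≤ 3 * ((G.filter fun c => IsFarthest S u c v).card +
      (G.filter fun c => IsFarthest S (-u) c v).card) := by
  set N := nearestSites S v
  have hNfin : N.Finite := G.finite_toSet.subset hG
  set T := {c ∈ N | ∀ p ∈ N, ω u p ≤ ω u c}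
  set B := {c ∈ N | ∀ p ∈ N, ω u c ≤ ω u p}
  have hT : T.ncard ≤ 1 := (Set.ncard_le_one (hNfin.subset fun _ h => h.1)).2 fun a ha b hb =>
    hinj ha.1.1 hb.1.1 ((hb.2 a ha.1).antisymm (ha.2 b hb.1))
  have hB : B.ncard ≤ 1 := (Set.ncard_le_one (hNfin.subset fun _ h => h.1)).2 fun a ha b hb =>
    hinj ha.1.1 hb.1.1 ((ha.2 b hb.1).antisymm (hb.2 a ha.1))
  have hsub : N ⊆ ((G.filter fun c => IsFarthest S u c v) : Set ℂ) ∪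
      (G.filter fun c => IsFarthest S (-u) c v) ∪ (T ∪ B) := by
    intro c hc
    by_cases htop : IsFarthest S u c v
    · exact .inl (.inl (Finset.mem_filter.2 ⟨hG hc, htop⟩))
    by_cases hbot : IsFarthest S (-u) c v
    · exact .inl (.inr (Finset.mem_filter.2 ⟨hG hc, hbot⟩))
    exact .inr ((areaForm_le_or_le_of_not_isFarthest hc.1 ⟨hc.2, hv⟩ htop hbot).imp
      (⟨hc, ·⟩) (⟨hc, ·⟩))
  have hcard := (Set.ncard_le_ncard hsub (by
    refine ((Finset.finite_toSet _).union (Finset.finite_toSet _)).union ?_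
    exact (hNfin.subset fun _ h => h.1).union (hNfin.subset fun _ h => h.1))).trans
    ((Set.ncard_union_le _ _).trans (add_le_add (Set.ncard_union_le _ _) (Set.ncard_union_le _ _)))
  rw [Set.ncard_coe_finset, Set.ncard_coe_finset] at hcard
  omega

open scoped Classical in
lemma LocallyFiniteCovering.sum_card_filter_isFarthest_le {S : Set ℂ}
    (h : LocallyFiniteCovering S) {u : ℂ} (hu : u ≠ 0) (hinj : Set.InjOn (ω u) S) {G : Finset ℂ}
    (hGS : ↑G ⊆ S) (W : Finset ℂ) :
    ∑ v ∈ W, (G.filter fun c => IsFarthest S u c v).card ≤ G.card := by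
  calc ∑ v ∈ W, (G.filter fun c => IsFarthest S u c v).card
      = ∑ c ∈ G, (W.filter fun v => IsFarthest S u c v).card :=
        (Finset.sum_card_bipartiteAbove_eq_sum_card_bipartiteBelow (IsFarthest S u)).symm
    _ ≤ ∑ c ∈ G, 1 := Finset.sum_le_sum fun c hc => Finset.card_le_one.2 fun a ha b hb =>
        (Finset.mem_filter.1 ha).2.eq h hu hinj (hGS hc) (Finset.mem_filter.1 hb).2
    _ = G.card := (Finset.card_eq_sum_ones G).symm

open scoped Classical in
lemma LocallyFiniteCovering.sum_ncard_cellVertices_le {S : Set ℂ} (h : LocallyFiniteCovering S)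
    {F G : Finset ℂ} (hFG : F ⊆ G) (hGS : ↑G ⊆ S)
    (hnear : ∀ c ∈ F, ∀ v ∈ voronoiCell S c, nearestSites S v ⊆ G) :
    ∑ c ∈ F, (cellVertices S c).ncard ≤ 6 * G.card := by
  obtain ⟨u, hu, hinj⟩ := exists_injOn_areaForm h.countable
  have hVfin : (⋃ c ∈ F, cellVertices S c).Finite :=
    F.finite_toSet.biUnion fun c hc => h.finite_cellVertices (hGS (hFG hc))
  set W := hVfin.toFinset
  have hmemW {v} : v ∈ W ↔ ∃ c ∈ F, v ∈ cellVertices S c := by simp [W]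
  have hnearW {v} (hv : v ∈ W) : nearestSites S v ⊆ G ∧ 2 < (nearestSites S v).ncard := by
    obtain ⟨c, hc, hvc⟩ := hmemW.1 hv
    exact ⟨hnear c hc v hvc.1, hvc.2⟩
  calc ∑ c ∈ F, (cellVertices S c).ncard
      ≤ ∑ c ∈ G, (W.filter fun v => c ∈ nearestSites S v).card := by
        refine (Finset.sum_le_sum fun c hc => ?_).trans (Finset.sum_le_sum_of_subset hFG)
        rw [← Set.ncard_coe_finset]
        refine Set.ncard_le_ncard (fun v hv => ?_) (Finset.finite_toSet _)
        exact Finset.mem_filter.2 ⟨hmemW.2 ⟨c, hc, hv⟩, hGS (hFG hc), hv.1⟩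
    _ = ∑ v ∈ W, (G.filter fun c => c ∈ nearestSites S v).card :=
        Finset.sum_card_bipartiteAbove_eq_sum_card_bipartiteBelow fun c v => c ∈ nearestSites S v
    _ = ∑ v ∈ W, (nearestSites S v).ncard := Finset.sum_congr rfl fun v hv => by
        rw [← Set.ncard_coe_finset, Finset.coe_filter]
        congr 1
        exact Set.inter_eq_right.2 (hnearW hv).1
    _ ≤ ∑ v ∈ W, 3 * ((G.filter fun c => IsFarthest S u c v).card +
          (G.filter fun c => IsFarthest S (-u) c v).card) :=
        Finset.sum_le_sum fun v hv => card_nearestSites_le hinj (hnearW hv).1 (hnearW hv).2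
    _ ≤ 3 * (G.card + G.card) := by
        rw [← Finset.mul_sum, Finset.sum_add_distrib]
        gcongr
        · exact h.sum_card_filter_isFarthest_le hu hinj hGS W
        · refine h.sum_card_filter_isFarthest_le (neg_ne_zero.2 hu)
            (fun c hc d hd hcd => hinj hc hd ?_) hGS W
          simpa only [map_neg, LinearMap.neg_apply, neg_inj] using hcd
    _ = 6 * G.card := by ring

lemma mem_Icc_of_cos_le {γ : ℝ} (hγ : γ ∈ Set.Ico 0 (2 * π)) (hcos : cos γ ≤ -(1 / 2)) :
    γ ∈ Set.Icc (2 * π / 3) (4 * π / 3) := by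
  have hpi := pi_pos
  constructor <;> by_contra! hlt
  · have := cos_lt_cos_of_nonneg_of_le_pi hγ.1 (by linarith) hlt
    linarith [cos_two_pi_div_three]
  · have := cos_lt_cos_of_nonneg_of_le_pi (x := 2 * π - γ) (y := 2 * π / 3) (by linarith [hγ.2])
      (by linarith) (by linarith)
    rw [cos_two_pi_sub] at this
    linarith [cos_two_pi_div_three]

lemma inner_cis_le_of_mem_voronoiCell {S : Set ℂ} {c p z : ℂ} {α : ℝ} (hz : c + z ∈ voronoiCell S c)
    (hp : p ∈ S) (hp0 : p ≠ c) (hp1 : dist p c ≤ 1) (hα : p - c = ‖p - c‖ • cis α) :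
    inner ℝ (cis α) z ≤ 1 / 2 := by
  have h := inner_sub_le_of_mem_voronoiCell hz hp
  have hpos : 0 < ‖p - c‖ := norm_pos_iff.2 (sub_ne_zero.2 hp0)
  rw [add_sub_cancel_left, real_inner_comm] at h
  nth_rw 1 [hα] at h
  rw [real_inner_smul_left, pow_two, mul_div_assoc, mul_le_mul_iff_right₀ hpos, ← dist_eq_norm] at h
  linarith

lemma add_mem_extremePoints {E : Type*} [AddCommGroup E] [Module ℝ E] {K : Set E} {c z : E}
    (hz : z ∈ ((c + ·) ⁻¹' K).extremePoints ℝ) : c + z ∈ K.extremePoints ℝ := by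
  refine mem_extremePoints.2 ⟨hz.1, fun x hx y hy hxy => ?_⟩
  have := (mem_extremePoints.1 hz).2 (-c + x) (by simpa using hx) (-c + y) (by simpa using hy)
    ((mem_openSegment_translate ℝ c).1 (by simpa using hxy))
  exact ⟨by rw [← this.1]; abel, by rw [← this.2]; abel⟩

/-- `c` lies between two points of `S` at distance at most `1` from it that are seen from `c` under
an angle of at least `2π/3`. The angle condition is expressed through the inner product. -/
def HasWideTurn (S : Set ℂ) (c : ℂ) : Prop :=
  ∃ p ∈ S, ∃ q ∈ S, p ≠ c ∧ q ≠ c ∧ dist p c ≤ 1 ∧ dist q c ≤ 1 ∧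
    inner ℝ (p - c) (q - c) ≤ -(‖p - c‖ * ‖q - c‖ / 2)

lemma HasWideTurn.exists_angles {S : Set ℂ} {c : ℂ} (hturn : HasWideTurn S c) :
    ∃ p ∈ S, ∃ q ∈ S, p ≠ c ∧ q ≠ c ∧ dist p c ≤ 1 ∧ dist q c ≤ 1 ∧
      ∃ α, ∃ γ ∈ Set.Icc (2 * π / 3) (4 * π / 3),
        p - c = ‖p - c‖ • cis α ∧ q - c = ‖q - c‖ • cis (α + γ) := by
  obtain ⟨p, hp, q, hq, hp0, hq0, hp1, hq1, hpq⟩ := hturn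
  set α := angleFrom 0 (p - c)
  set γ := angleFrom α (q - c) - α with hγ_def
  have hα : p - c = ‖p - c‖ • cis α := (norm_smul_cis_angleFrom _ _).symm
  have hαγ : q - c = ‖q - c‖ • cis (α + γ) := by
    rw [hγ_def, add_sub_cancel, norm_smul_cis_angleFrom]
  refine ⟨p, hp, q, hq, hp0, hq0, hp1, hq1, α, γ, mem_Icc_of_cos_le ⟨?_, ?_⟩ ?_, hα, hαγ⟩
  · linarith [(angleFrom_mem α (q - c)).1]
  · linarith [(angleFrom_mem α (q - c)).2]
  · have hp' := norm_pos_iff.2 (sub_ne_zero.2 hp0)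
    have hq' := norm_pos_iff.2 (sub_ne_zero.2 hq0)
    nth_rw 1 [hα, hαγ] at hpq
    rw [real_inner_smul_left, inner_cis_smul_cis, add_sub_cancel_left] at hpq
    rw [← mul_le_mul_iff_right₀ (mul_pos hp' hq')]
    linarith

theorem LocallyFiniteCovering.volume_voronoiCell_le {S : Set ℂ} (h : LocallyFiniteCovering S)
    {c : ℂ} (hc : c ∈ S) (hturn : HasWideTurn S c) :
    volume (voronoiCell S c) ≤
      ENNReal.ofReal (1 + √3 / 2 + ((cellVertices S c).ncard - 6) * vertexExcess) := by
  obtain ⟨p, hp, q, hq, hp0, hq0, hp1, hq1, α, γ, hγ, hα, hαγ⟩ := hturn.exists_angles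
  set K := (c + ·) ⁻¹' voronoiCell S c
  have hK_ext : (c + ·) '' K.extremePoints ℝ ⊆ cellVertices S c := by
    rintro _ ⟨z, hz, rfl⟩
    exact h.extremePoints_subset_cellVertices hc (add_mem_extremePoints hz)
  have hfin : (K.extremePoints ℝ).Finite :=
    .of_finite_image ((h.finite_cellVertices hc).subset hK_ext) (add_right_injective c).injOn
  have hcard : hfin.toFinset.card ≤ (cellVertices S c).ncard := by
    rw [← Set.ncard_eq_toFinset_card _ hfin,
      ← Set.ncard_image_of_injective _ (add_right_injective c)]
    exact Set.ncard_le_ncard hK_ext (h.finite_cellVertices hc)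
  have h0 : (0 : ℂ) ∈ interior K :=
    preimage_interior_subset_interior_preimage (continuous_const_add c) <| by
      simpa using h.mem_interior_voronoiCell (nearestSites_self_subset hc)
  calc volume (voronoiCell S c) = volume K := (measure_preimage_add volume c _).symm
    _ ≤ ENNReal.ofReal (1 + √3 / 2 + (hfin.toFinset.card - 6) * vertexExcess) :=
        volume_le_of_extremePoints_eq ((convex_voronoiCell S c).translate_preimage_right c)
          ((Homeomorph.addLeft c).isCompact_preimage.2 (h.isCompact_voronoiCell c)) h0
          (fun z hz => by simpa using h.voronoiCell_subset c hz) hfin.coe_toFinset.symm hγ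
          (fun z hz => inner_cis_le_of_mem_voronoiCell hz hp hp0 hp1 hα)
          fun z hz => inner_cis_le_of_mem_voronoiCell hz hq hq0 hq1 hαγ
    _ ≤ _ := by
        have := vertexExcess_nonneg
        gcongr

lemma LocallyFiniteCovering.volume_voronoiCell_le_pi {S : Set ℂ} (h : LocallyFiniteCovering S)
    (c : ℂ) : volume (voronoiCell S c) ≤ ENNReal.ofReal π :=
  (measure_mono (h.voronoiCell_subset c)).trans_eq <| by
    rw [Complex.volume_closedBall]
    simp [← ENNReal.ofReal_coe_nnreal]

lemma LocallyFiniteCovering.sum_volume_voronoiCell_le {S : Set ℂ} (h : LocallyFiniteCovering S)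
    {F G : Finset ℂ} (hFG : F ⊆ G) (hGS : ↑G ⊆ S)
    (hnear : ∀ c ∈ F, ∀ v ∈ voronoiCell S c, nearestSites S v ⊆ G)
    (hturn : ∀ c ∈ F, HasWideTurn S c) :
    ∑ c ∈ F, volume (voronoiCell S c) ≤ ENNReal.ofReal ((1 + √3 / 2) * G.card) := by
  have h0 := vertexExcess_nonneg
  have h1 : 6 * vertexExcess ≤ 1 + √3 / 2 := by
    linarith [vertexExcess_le, sqrt_three_mem_Ioo.1]
  have hvert : (∑ c ∈ F, (cellVertices S c).ncard : ℝ) ≤ 6 * G.card := by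
    exact_mod_cast h.sum_ncard_cellVertices_le hFG hGS hnear
  have hcard : (F.card : ℝ) ≤ G.card := by exact_mod_cast Finset.card_le_card hFG
  calc ∑ c ∈ F, volume (voronoiCell S c)
      ≤ ∑ c ∈ F, ENNReal.ofReal
          (1 + √3 / 2 + ((cellVertices S c).ncard - 6) * vertexExcess) :=
        Finset.sum_le_sum fun c hc => h.volume_voronoiCell_le (hGS (hFG hc)) (hturn c hc)
    _ = ENNReal.ofReal
          (∑ c ∈ F, (1 + √3 / 2 + ((cellVertices S c).ncard - 6) * vertexExcess)) := by
        refine (ENNReal.ofReal_sum_of_nonneg fun c _ => ?_).symm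
        have : 0 ≤ (cellVertices S c).ncard * vertexExcess := by positivity
        linarith
    _ = ENNReal.ofReal (F.card * (1 + √3 / 2 - 6 * vertexExcess) +
          (∑ c ∈ F, (cellVertices S c).ncard : ℝ) * vertexExcess) := by
        rw [Finset.sum_mul, ← nsmul_eq_mul, ← Finset.sum_const, ← Finset.sum_add_distrib]
        congr! 2
        ring
    _ ≤ ENNReal.ofReal (G.card * (1 + √3 / 2 - 6 * vertexExcess) +
          6 * G.card * vertexExcess) := by
        gcongr
    _ = ENNReal.ofReal ((1 + √3 / 2) * G.card) := by ring_nf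

lemma LocallyFiniteCovering.volume_biUnion_voronoiCell_le {S : Set ℂ}
    (h : LocallyFiniteCovering S) {F G : Finset ℂ} (hFG : F ⊆ G) (hGS : ↑G ⊆ S)
    (hnear : ∀ c ∈ F, ∀ v ∈ voronoiCell S c, nearestSites S v ⊆ G) (c₀ : ℂ)
    (hturn : ∀ c ∈ F, c ≠ c₀ → HasWideTurn S c) :
    volume (⋃ c ∈ F, voronoiCell S c) ≤ ENNReal.ofReal (π + (1 + √3 / 2) * G.card) := by
  classical
  calc volume (⋃ c ∈ F, voronoiCell S c)
      ≤ ∑ c ∈ F, volume (voronoiCell S c) := measure_biUnion_finset_le _ _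
    _ ≤ ∑ c ∈ insert c₀ (F.erase c₀), volume (voronoiCell S c) :=
        Finset.sum_le_sum_of_subset (Finset.insert_erase_subset c₀ F)
    _ = volume (voronoiCell S c₀) + ∑ c ∈ F.erase c₀, volume (voronoiCell S c) :=
        Finset.sum_insert (Finset.notMem_erase _ _)
    _ ≤ ENNReal.ofReal π + ENNReal.ofReal ((1 + √3 / 2) * G.card) :=
        add_le_add (h.volume_voronoiCell_le_pi _) <|
          h.sum_volume_voronoiCell_le ((F.erase_subset _).trans hFG) hGS
            (fun c hc => hnear c (Finset.mem_of_mem_erase hc))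
            fun c hc => hturn c (Finset.mem_of_mem_erase hc) (Finset.ne_of_mem_erase hc)
    _ = ENNReal.ofReal (π + (1 + √3 / 2) * G.card) :=
        (ENNReal.ofReal_add pi_pos.le (by positivity)).symm

/-! ### Passage to the complex plane -/

/-- The identification `z ↦ (re z, im z)` of `ℂ` with the Euclidean plane. -/
def toPt : ℂ ≃ₗᵢ[ℝ] Pt := Complex.orthonormalBasisOneI.repr

lemma toPt_zero (z : ℂ) : toPt z 0 = z.re := by simp [toPt]

lemma toPt_one (z : ℂ) : toPt z 1 = z.im := by simp [toPt]

/-- The square `(-l,l) × (-l,l)` in `ℂ`. -/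
def square (l : ℝ) : Set ℂ := {z | |z.re| < l ∧ |z.im| < l}

lemma square_mono {l m : ℝ} (h : l ≤ m) : square l ⊆ square m := fun _ hz =>
  ⟨hz.1.trans_le h, hz.2.trans_le h⟩

lemma mem_square_of_dist_le {l r : ℝ} {z w : ℂ} (hz : z ∈ square l) (h : dist w z ≤ r) :
    w ∈ square (l + r) := by
  rw [dist_eq_norm] at h
  have hre := (Complex.abs_re_le_norm (w - z)).trans h
  have him := (Complex.abs_im_le_norm (w - z)).trans h
  rw [Complex.sub_re] at hre
  rw [Complex.sub_im] at him
  constructor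
  · linarith [hz.1, abs_sub_abs_le_abs_sub w.re z.re]
  · linarith [hz.2, abs_sub_abs_le_abs_sub w.im z.im]

lemma preimage_openSquare (l : ℝ) : toPt ⁻¹' openSquare l = square l := by
  ext z
  simp only [Set.mem_preimage, openSquare, square, Set.mem_ofPred_eq, toPt_zero, toPt_one]

lemma volume_square {l : ℝ} (hl : 0 < l) : volume (square l) = ENNReal.ofReal (4 * l ^ 2) := by
  have hprod : square l =
      Complex.measurableEquivRealProd ⁻¹' (Set.Ioo (-l) l ×ˢ Set.Ioo (-l) l) := by
    ext z
    simp [Complex.measurableEquivRealProd, square, abs_lt]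
  rw [hprod, Complex.volume_preserving_equiv_real_prod.measure_preimage
    (measurableSet_Ioo.prod measurableSet_Ioo).nullMeasurableSet, Measure.volume_eq_prod,
    Measure.prod_prod, Real.volume_Ioo, ← ENNReal.ofReal_mul (by linarith)]
  congr 1
  ring

/-- The indices of the unit disks centred at the `c n` that meet the square of side `2l`. -/
def meetingIndices (c : ℕ → ℂ) (l : ℝ) : Set ℕ := {n | (closedBall (c n) 1 ∩ square l).Nonempty}

lemma meetingIndices_mono (c : ℕ → ℂ) {l m : ℝ} (h : l ≤ m) :
    meetingIndices c l ⊆ meetingIndices c m := fun _ hn =>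
  hn.mono (Set.inter_subset_inter_right _ (square_mono h))

lemma Ncount_toPt (c : ℕ → ℂ) (l : ℝ) :
    Ncount (fun n => toPt (c n)) l = (meetingIndices c l).encard := by
  have h (n : ℕ) : (closedBall (toPt (c n)) 1 ∩ openSquare l).Nonempty ↔
      (closedBall (c n) 1 ∩ square l).Nonempty := by
    rw [← preimage_openSquare, ← toPt.isometry.preimage_closedBall, ← Set.preimage_inter,
      toPt.surjective.nonempty_preimage]
  simp only [Ncount, meetingIndices, h]

lemma two_pi_div_three_le_angle_iff {E : Type*} [NormedAddCommGroup E] [InnerProductSpace ℝ E]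
    {x y : E} (hx : x ≠ 0) (hy : y ≠ 0) :
    2 * π / 3 ≤ InnerProductGeometry.angle x y ↔ inner ℝ x y ≤ -(‖x‖ * ‖y‖ / 2) := by
  have hpi := pi_pos
  have hxy : 0 < ‖x‖ * ‖y‖ := mul_pos (norm_pos_iff.2 hx) (norm_pos_iff.2 hy)
  rw [← strictAntiOn_cos.le_iff_ge
    ⟨InnerProductGeometry.angle_nonneg x y, InnerProductGeometry.angle_le_pi x y⟩
    ⟨by positivity, by linarith⟩, cos_two_pi_div_three, InnerProductGeometry.cos_angle,
    div_le_iff₀ hxy]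
  ring_nf

/-- The sequences of centers of the theorem, as sequences in `ℂ`, with the angle condition expressed
through the inner product. -/
structure IsAdmissible (c : ℕ → ℂ) : Prop where
  exists_dist_le_one : ∀ z, ∃ n, dist z (c n) ≤ 1
  succ_ne : ∀ n, c (n + 1) ≠ c n
  dist_succ_le_one : ∀ n, dist (c (n + 1)) (c n) ≤ 1
  inner_le : ∀ n, inner ℝ (c n - c (n + 1)) (c (n + 2) - c (n + 1)) ≤
    -(‖c n - c (n + 1)‖ * ‖c (n + 2) - c (n + 1)‖ / 2)

lemma admissible_toPt_iff {c : ℕ → ℂ} : Admissible (fun n => toPt (c n)) ↔ IsAdmissible c := by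
  have hpred {P : ℕ → Prop} : (∀ n, 1 ≤ n → P n) ↔ ∀ n, P (n + 1) :=
    ⟨fun h n => h (n + 1) (by lia), fun h n hn => Nat.sub_add_cancel hn ▸ h (n - 1)⟩
  have hcov : (⋃ n, closedBall (toPt (c n)) 1) = Set.univ ↔ ∀ z, ∃ n, dist z (c n) ≤ 1 := by
    rw [Set.eq_univ_iff_forall, toPt.surjective.forall]
    simp only [Set.mem_iUnion, mem_closedBall, toPt.dist_map]
  have hangle (n : ℕ) (h : c (n + 1) ≠ c n) (h' : c (n + 2) ≠ c (n + 1)) :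
      2 * π / 3 ≤ EuclideanGeometry.angle (toPt (c n)) (toPt (c (n + 1))) (toPt (c (n + 2))) ↔
        inner ℝ (c n - c (n + 1)) (c (n + 2) - c (n + 1)) ≤
          -(‖c n - c (n + 1)‖ * ‖c (n + 2) - c (n + 1)‖ / 2) := by
    rw [EuclideanGeometry.angle, vsub_eq_sub, vsub_eq_sub, ← map_sub, ← map_sub,
      ← two_pi_div_three_le_angle_iff (sub_ne_zero.2 h.symm) (sub_ne_zero.2 h')]
    exact (congrArg _ (toPt.toLinearIsometry.angle_map _ _)).to_iff
  simp only [Admissible, hpred, hcov, add_tsub_cancel_right, toPt.dist_map, dist_pos]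
  constructor
  · rintro ⟨hz, hd, ha⟩
    exact ⟨hz, fun n => (hd n).1, fun n => (hd n).2,
      fun n => (hangle n (hd n).1 (hd (n + 1)).1).1 (ha n)⟩
  · rintro ⟨hz, hne, hd, ha⟩
    exact ⟨hz, fun n => ⟨hne n, hd n⟩, fun n => (hangle n (hne n) (hne (n + 1))).2 (ha n)⟩

/-! ### The lower bound -/

lemma LocallyFiniteCovering.nearestSites_subset_image {c : ℕ → ℂ}
    (h : LocallyFiniteCovering (Set.range c)) {l : ℝ} {n : ℕ} (hn : n ∈ meetingIndices c l) {v : ℂ}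
    (hv : v ∈ voronoiCell (Set.range c) (c n)) :
    nearestSites (Set.range c) v ⊆ c '' meetingIndices c (l + 2) := by
  obtain ⟨z, hzc, hz⟩ := hn
  have hvz : dist v z ≤ 2 := by
    linarith [dist_triangle_right v z (c n), mem_closedBall.1 hzc,
      mem_closedBall.1 (h.voronoiCell_subset _ hv)]
  intro d hd
  obtain ⟨⟨m, rfl⟩, hm⟩ := hd
  exact ⟨m, ⟨v, h.voronoiCell_subset _ hm, mem_square_of_dist_le hz hvz⟩, rfl⟩

namespace IsAdmissible

variable {c : ℕ → ℂ}

lemma hasWideTurn (h : IsAdmissible c) (n : ℕ) : HasWideTurn (Set.range c) (c (n + 1)) :=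
  ⟨c n, ⟨n, rfl⟩, c (n + 2), ⟨n + 2, rfl⟩, (h.succ_ne n).symm, h.succ_ne (n + 1),
    dist_comm (c n) _ ▸ h.dist_succ_le_one n, h.dist_succ_le_one (n + 1), h.inner_le n⟩

lemma locallyFiniteCovering (h : IsAdmissible c) (hfin : ∀ l, (meetingIndices c l).Finite) :
    LocallyFiniteCovering (Set.range c) where
  finite_inter_closedBall z r := by
    refine ((hfin (1 + (r + dist z 0))).image c).subset ?_
    rintro _ ⟨⟨n, rfl⟩, hn⟩
    refine ⟨n, ⟨c n, mem_closedBall_self zero_le_one, mem_square_of_dist_le (z := 0) ?_ ?_⟩, rfl⟩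
    · simp [square]
    · linarith [dist_triangle (c n) z 0, mem_closedBall.1 hn]
  exists_dist_le_one z := by
    obtain ⟨n, hn⟩ := h.exists_dist_le_one z
    exact ⟨c n, ⟨n, rfl⟩, hn⟩

open scoped Classical in
theorem four_mul_sq_le (h : IsAdmissible c) (hfin : ∀ l, (meetingIndices c l).Finite) {l : ℝ}
    (hl : 0 < l) :
    4 * l ^ 2 ≤ (1 + √3 / 2) * (meetingIndices c (l + 2)).ncard + π := by
  have hLF := h.locallyFiniteCovering hfin
  set S := Set.range c
  set F : Finset ℂ := (hfin l).toFinset.image c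
  set G : Finset ℂ := (hfin (l + 2)).toFinset.image c
  have hmemF {x} : x ∈ F ↔ ∃ n ∈ meetingIndices c l, c n = x := by simp [F]
  have hG : (G : Set ℂ) = c '' meetingIndices c (l + 2) := by simp [G]
  have hFG : F ⊆ G := Finset.image_subset_image <|
    Set.Finite.toFinset_mono (meetingIndices_mono c (by linarith))
  have hGcard : (G.card : ℝ) ≤ (meetingIndices c (l + 2)).ncard := by
    rw [Set.ncard_eq_toFinset_card _ (hfin (l + 2))]
    exact_mod_cast Finset.card_image_le
  have hcover : square l ⊆ ⋃ x ∈ F, voronoiCell S x := fun z hz => by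
    obtain ⟨d, ⟨n, rfl⟩, hd⟩ := hLF.nonempty_nearestSites z
    exact Set.mem_biUnion (hmemF.2 ⟨n, ⟨z, hLF.voronoiCell_subset _ hd, hz⟩, rfl⟩) hd
  have hturn : ∀ x ∈ F, x ≠ c 0 → HasWideTurn S x := fun x hx hx0 => by
    obtain ⟨n, -, rfl⟩ := hmemF.1 hx
    obtain ⟨m, rfl⟩ := Nat.exists_eq_succ_of_ne_zero fun hn : n = 0 => hx0 (hn ▸ rfl)
    exact h.hasWideTurn m
  have hnear : ∀ x ∈ F, ∀ v ∈ voronoiCell S x, nearestSites S v ⊆ G := by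
    intro x hx v hv
    obtain ⟨n, hn, rfl⟩ := hmemF.1 hx
    exact hG ▸ hLF.nearestSites_subset_image hn hv
  have harea : ENNReal.ofReal (4 * l ^ 2) ≤ ENNReal.ofReal (π + (1 + √3 / 2) * G.card) :=
    volume_square hl ▸ (measure_mono hcover).trans
      (hLF.volume_biUnion_voronoiCell_le hFG (hG ▸ Set.image_subset_range _ _) hnear _ hturn)
  rw [ENNReal.ofReal_le_ofReal_iff (by positivity)] at harea
  nlinarith [mul_le_mul_of_nonneg_left hGcard (by positivity : 0 ≤ 1 + √3 / 2)]

end IsAdmissible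

lemma tendsto_lower_density :
    Tendsto (fun l : ℝ => (4 * (l - 2) ^ 2 - π) / (1 + √3 / 2) * π / (4 * l ^ 2)) atTop
      (nhds (2 * π / (2 + √3))) := by
  set f : ℝ → ℝ := fun x => (4 * (1 - 2 * x) ^ 2 - π * x ^ 2) / (1 + √3 / 2) * π / 4
  have hf : Tendsto f (nhds 0) (nhds (f 0)) := Continuous.tendsto (by fun_prop) 0
  have hf0 : f 0 = 2 * π / (2 + √3) := by
    simp only [f]
    field_simp
    ring
  rw [← hf0]
  refine (hf.comp tendsto_inv_atTop_zero).congr' ?_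
  filter_upwards [eventually_gt_atTop 0] with l hl
  simp only [f, Function.comp_apply]
  field_simp

lemma lowerDensity_eq_top {C : ℕ → Pt} {l₀ : ℝ} (h : Ncount C l₀ = ⊤)
    (hmono : Monotone (Ncount C)) : lowerDensity C = ⊤ := by
  refine (tendsto_const_nhds.congr' ?_).liminf_eq
  filter_upwards [eventually_ge_atTop l₀] with l hl
  have htop : Ncount C l = ⊤ := top_le_iff.1 (h.symm.le.trans (hmono hl))
  rw [htop, ENNReal.top_mul (by simp [pi_pos]), ENNReal.top_div_of_ne_top ENNReal.ofReal_ne_top]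

theorem IsAdmissible.le_lowerDensity {c : ℕ → ℂ} (h : IsAdmissible c) :
    ENNReal.ofReal (2 * π / (2 + √3)) ≤ lowerDensity fun n => toPt (c n) := by
  by_cases hfin : ∀ l, (meetingIndices c l).Finite
  · rw [← (ENNReal.tendsto_ofReal tendsto_lower_density).liminf_eq]
    refine liminf_le_liminf ?_
    filter_upwards [eventually_gt_atTop 2] with l hl
    have hcount := h.four_mul_sq_le hfin (sub_pos.2 hl)
    rw [sub_add_cancel] at hcount
    rw [Ncount_toPt, ← (hfin l).cast_ncard_eq, ENNReal.ofReal_div_of_pos (by positivity)]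
    gcongr
    rw [ENat.toENNReal_coe, ← ENNReal.ofReal_natCast, ← ENNReal.ofReal_mul (Nat.cast_nonneg _)]
    gcongr
    rw [div_le_iff₀ (by positivity)]
    linarith
  · push Not at hfin
    obtain ⟨l₀, hl₀⟩ := hfin
    refine le_top.trans_eq (lowerDensity_eq_top (l₀ := l₀) ?_ fun l m hlm => ?_).symm
    · rw [Ncount_toPt, hl₀.encard_eq, ENat.toENNReal_top]
    · simp only [Ncount_toPt]
      exact_mod_cast Set.encard_le_encard (meetingIndices_mono c hlm)

/-! ### Subdivided polygonal paths -/

section Subdivision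

/-- The successor of the pair `(q, i)` in the enumeration of all pairs with `i < N q`, taken in
lexicographic order. -/
def nextNode (N : ℕ → ℕ) (s : ℕ × ℕ) : ℕ × ℕ :=
  if s.2 + 1 < N s.1 then (s.1, s.2 + 1) else (s.1 + 1, 0)

/-- The enumeration, in lexicographic order, of the pairs `(q, i)` with `i < N q`: the `i`-th
subdivision point on side `q` of a polygonal path whose side `q` is cut into `N q` steps. -/
def node (N : ℕ → ℕ) (n : ℕ) : ℕ × ℕ := (nextNode N)^[n] (0, 0)

variable {N : ℕ → ℕ}

lemma node_succ (n : ℕ) : node N (n + 1) = nextNode N (node N n) :=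
  Function.iterate_succ_apply' _ _ _

lemma node_snd_lt (hN : ∀ q, 0 < N q) (n : ℕ) : (node N n).2 < N (node N n).1 := by
  cases n with
  | zero => exact hN 0
  | succ n =>
    rw [node_succ, nextNode]
    split_ifs with h
    exacts [h, hN _]

lemma sum_range_add_node_snd (hN : ∀ q, 0 < N q) (n : ℕ) :
    ∑ k ∈ Finset.range (node N n).1, N k + (node N n).2 = n := by
  induction n with
  | zero => rfl
  | succ n ih =>
    have hlt := node_snd_lt hN n
    rw [node_succ, nextNode]
    split_ifs with h
    · simp only
      lia
    · simp only [Finset.sum_range_succ]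
      lia

lemma exists_node_eq (hN : ∀ q, 0 < N q) {q i : ℕ} (hi : i < N q) : ∃ n, node N n = (q, i) := by
  induction q generalizing i with
  | zero =>
    induction i with
    | zero => exact ⟨0, rfl⟩
    | succ i ih =>
      obtain ⟨n, hn⟩ := ih (by lia)
      exact ⟨n + 1, by rw [node_succ, hn, nextNode, if_pos hi]⟩
  | succ q ihq =>
    induction i with
    | zero =>
      obtain ⟨n, hn⟩ := ihq (Nat.sub_one_lt (hN q).ne')
      exact ⟨n + 1, by rw [node_succ, hn, nextNode, if_neg (by have := hN q; lia)]⟩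
    | succ i ih =>
      obtain ⟨n, hn⟩ := ih (by lia)
      exact ⟨n + 1, by rw [node_succ, hn, nextNode, if_pos hi]⟩

/-- The least number of steps of length at most `1` into which side `q` of the polygonal path with
corners `p` can be cut. -/
def stepCount (p : ℕ → ℂ) (q : ℕ) : ℕ := ⌈‖p (q + 1) - p q‖⌉₊

/-- The polygonal path with corners `p`, walked in steps of length at most `1` that are equal on
each side. -/
def subdivide (p : ℕ → ℂ) (n : ℕ) : ℂ :=
  let s := node (stepCount p) n
  AffineMap.lineMap (p s.1) (p (s.1 + 1)) (s.2 / stepCount p s.1 : ℝ)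

variable {p : ℕ → ℂ}

lemma stepCount_pos (hp : ∀ q, p (q + 1) ≠ p q) (q : ℕ) : 0 < stepCount p q :=
  Nat.ceil_pos.2 (norm_pos_iff.2 (sub_ne_zero.2 (hp q)))

lemma subdivide_succ_sub (hp : ∀ q, p (q + 1) ≠ p q) (n : ℕ) :
    subdivide p (n + 1) - subdivide p n =
      (stepCount p (node (stepCount p) n).1 : ℝ)⁻¹ •
        (p ((node (stepCount p) n).1 + 1) - p (node (stepCount p) n).1) := by
  have hlt := node_snd_lt (stepCount_pos hp) n
  simp only [subdivide, node_succ, nextNode]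
  set q := (node (stepCount p) n).1
  set i := (node (stepCount p) n).2
  have hN : (stepCount p q : ℝ) ≠ 0 := by exact_mod_cast (stepCount_pos hp q).ne'
  split_ifs with h
  · simp only [AffineMap.lineMap_apply_module']
    push_cast
    rw [add_sub_add_right_eq_sub, ← sub_smul]
    ring_nf
  · have hi : ((i : ℝ) + 1) = stepCount p q := by exact_mod_cast (by lia : i + 1 = stepCount p q)
    simp only [AffineMap.lineMap_apply_module', Nat.cast_zero, zero_div, zero_smul, zero_add]
    rw [← hi] at hN ⊢
    have hcoef : ((i : ℝ) + 1)⁻¹ = 1 - i / (i + 1) := by field_simp; ring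
    rw [hcoef, sub_smul, one_smul]
    abel

lemma node_fst_succ (n : ℕ) :
    (node N (n + 1)).1 = (node N n).1 ∨ (node N (n + 1)).1 = (node N n).1 + 1 := by
  rw [node_succ, nextNode]
  split_ifs <;> simp

theorem isAdmissible_subdivide (hne : ∀ q, p (q + 1) ≠ p q)
    (hturn : ∀ q, ‖p (q + 1) - p q‖ * ‖p (q + 2) - p (q + 1)‖ / 2 ≤
      inner ℝ (p (q + 1) - p q) (p (q + 2) - p (q + 1)))
    (hcov : ∀ z, ∃ n, dist z (subdivide p n) ≤ 1) : IsAdmissible (subdivide p) where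
  exists_dist_le_one := hcov
  succ_ne n := by
    rw [← sub_ne_zero, subdivide_succ_sub hne]
    exact smul_ne_zero (inv_ne_zero (by exact_mod_cast (stepCount_pos hne _).ne'))
      (sub_ne_zero.2 (hne _))
  dist_succ_le_one n := by
    rw [dist_eq_norm, subdivide_succ_sub hne, norm_smul, norm_inv, Real.norm_natCast]
    exact inv_mul_le_one_of_le₀ (Nat.le_ceil _) (Nat.cast_nonneg _)
  inner_le n := by
    set q := (node (stepCount p) n).1 with hq
    set q' := (node (stepCount p) (n + 1)).1 with hq'
    have hstep : ‖p (q + 1) - p q‖ * ‖p (q' + 1) - p q'‖ / 2 ≤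
        inner ℝ (p (q + 1) - p q) (p (q' + 1) - p q') := by
      obtain h | h : q' = q ∨ q' = q + 1 := node_fst_succ n
      · rw [h, real_inner_self_eq_norm_mul_norm]
        linarith [mul_self_nonneg ‖p (q + 1) - p q‖]
      · rw [h]
        exact hturn q
    rw [← neg_sub (subdivide p (n + 1)), inner_neg_left, norm_neg, neg_le_neg_iff,
      subdivide_succ_sub hne, subdivide_succ_sub hne (n + 1), ← hq, ← hq', real_inner_smul_left,
      real_inner_smul_right, norm_smul, norm_smul, norm_inv, norm_inv, Real.norm_natCast,
      Real.norm_natCast]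
    calc _ = (stepCount p q : ℝ)⁻¹ * ((stepCount p q' : ℝ)⁻¹ *
          (‖p (q + 1) - p q‖ * ‖p (q' + 1) - p q'‖ / 2)) := by ring
      _ ≤ _ := by gcongr

end Subdivision

/-! ### The lattice covering -/

lemma exists_I_pow_mul_eq (z : ℂ) : ∃ m < 4, ∃ w : ℂ, z = Complex.I ^ m * w ∧ |w.im| ≤ w.re := by
  rcases le_total |z.im| |z.re| with h | h
  · rcases le_total 0 z.re with h0 | h0
    · exact ⟨0, by lia, z, by simp, by rwa [abs_of_nonneg h0] at h⟩
    · exact ⟨2, by lia, -z, by simp, by rw [abs_of_nonpos h0] at h; simpa using h⟩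
  · rcases le_total 0 z.im with h0 | h0
    · refine ⟨1, by lia, -Complex.I * z, ?_, by rw [abs_of_nonneg h0] at h; simpa using h⟩
      rw [pow_one, neg_mul, mul_neg, ← mul_assoc, Complex.I_mul_I, neg_one_mul, neg_neg]
    · refine ⟨3, by lia, Complex.I * z, ?_, by rw [abs_of_nonpos h0] at h; simpa using h⟩
      rw [← mul_assoc, ← pow_succ, Complex.I_pow_four, one_mul]

/-- The distance between adjacent rows of the optimal lattice covering by unit disks whose rows
consist of points at distance `1`. -/
def rowDist : ℝ := 1 + √3 / 2

lemma rowDist_mem_Ioo : rowDist ∈ Set.Ioo (1.866 : ℝ) 1.867 := by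
  obtain ⟨h, h'⟩ := sqrt_three_mem_Ioo
  constructor <;> unfold rowDist <;> linarith

/-- The segment from `(1, 0)` to `(√3 / 2, 1 / 2)` is a chord of the unit circle. -/
lemma sq_add_sq_le_one {u g : ℝ} (hu : 0 ≤ u) (hg : 0 ≤ g) (hg' : g ≤ 1 / 2)
    (h : u + (2 - √3) * g ≤ 1) : u ^ 2 + g ^ 2 ≤ 1 := by
  have h3 : √3 ^ 2 = 3 := Real.sq_sqrt (by norm_num)
  have ht : 0 < 2 - √3 := by linarith [sqrt_three_mem_Ioo.2]
  have hchord : 0 ≤ (2 - √3) * g * (1 - 2 * g) := by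
    have : 0 ≤ 1 - 2 * g := by linarith
    positivity
  calc u ^ 2 + g ^ 2 ≤ (1 - (2 - √3) * g) ^ 2 + g ^ 2 := by gcongr; linarith
    _ = 1 - 2 * ((2 - √3) * g * (1 - 2 * g)) + (√3 ^ 2 - 3) * g ^ 2 := by ring
    _ ≤ 1 := by rw [h3]; linarith

lemma exists_row_dist_sq_le {x : ℝ} (hx : 0 ≤ x) (y : ℝ) :
    ∃ (j : ℕ) (k : ℤ), (x - j * rowDist) ^ 2 + (y - j / 2 - k) ^ 2 ≤ 1 := by
  have hd : 0 < rowDist := by linarith [rowDist_mem_Ioo.1]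
  set j := ⌊x / rowDist⌋₊
  set k := round (y - j / 2)
  have hu : 0 ≤ x - j * rowDist := by
    linarith [(le_div_iff₀ hd).1 (Nat.floor_le (div_nonneg hx hd.le))]
  have hu' : 0 ≤ (j + 1) * rowDist - x := by
    linarith [(div_lt_iff₀ hd).1 (Nat.lt_floor_add_one (x / rowDist))]
  have hg : |y - j / 2 - k| ≤ 1 / 2 := abs_sub_round _
  rcases le_or_gt (x - j * rowDist + (2 - √3) * |y - j / 2 - k|) 1 with h | h
  · exact ⟨j, k, by simpa only [sq_abs] using sq_add_sq_le_one hu (abs_nonneg _) hg h⟩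
  · have hnext : ((j + 1) * rowDist - x) ^ 2 + (1 / 2 - |y - j / 2 - k|) ^ 2 ≤ 1 := by
      refine sq_add_sq_le_one hu' (by linarith) (by linarith [abs_nonneg (y - j / 2 - k)]) ?_
      unfold rowDist at h ⊢
      linarith
    rcases le_total 0 (y - j / 2 - k) with h0 | h0
    · refine ⟨j + 1, k, le_of_eq_of_le ?_ hnext⟩
      rw [abs_of_nonneg h0]
      push_cast
      ring
    · refine ⟨j + 1, k - 1, le_of_eq_of_le ?_ hnext⟩
      rw [abs_of_nonpos h0]
      push_cast
      ring

/-! ### The spiral -/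

/-- The number of unit steps along each of the four sides of the `j`-th square turn of the spiral.
It has the parity of `j`, so that consecutive rows are shifted by half a step. -/
def rowSteps (j : ℕ) : ℕ := j + 2 * (⌈j * (1 + √3) / 2⌉₊ + 3)

lemma rowSteps_mem_Icc (j : ℕ) :
    (rowSteps j : ℝ) ∈ Set.Icc (2 * j * rowDist + 6) (2 * j * rowDist + 8) := by
  have hle := Nat.le_ceil (j * (1 + √3) / 2)
  have hlt := Nat.ceil_lt_add_one (by positivity : 0 ≤ j * (1 + √3) / 2)
  constructor <;> · simp only [rowSteps, rowDist]; push_cast; linarith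

lemma exists_row_point {w : ℂ} (hw : |w.im| ≤ w.re) :
    ∃ j, ∃ i < rowSteps j, dist w ⟨j * rowDist, i - rowSteps j / 2⟩ ≤ 1 := by
  obtain ⟨j, k, h⟩ := exists_row_dist_sq_le ((abs_nonneg _).trans hw) w.im
  have hd := rowDist_mem_Ioo
  have hrow := (rowSteps_mem_Icc j).1
  have hre : |w.re - j * rowDist| ≤ 1 :=
    (sq_le_one_iff_abs_le_one _).1 (by nlinarith [sq_nonneg (w.im - j / 2 - k)])
  have him : |w.im - j / 2 - k| ≤ 1 :=
    (sq_le_one_iff_abs_le_one _).1 (by nlinarith [sq_nonneg (w.re - j * rowDist)])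
  rw [abs_le] at hre him hw
  obtain ⟨m, hm⟩ : ∃ m, rowSteps j = j + 2 * m := ⟨_, rfl⟩
  have hmR : (rowSteps j : ℝ) = j + 2 * m := by rw [hm]; push_cast; ring
  rw [hmR] at hrow
  have hk : 0 ≤ j + m + k := by exact_mod_cast (by linarith : (0 : ℝ) ≤ j + m + k)
  have hk' : j + m + k < rowSteps j := by
    rw [hm]
    exact_mod_cast (by linarith : (j + m + k : ℝ) < j + 2 * m)
  obtain ⟨i, hi⟩ := Int.eq_ofNat_of_zero_le hk
  have hiR : (i : ℝ) = j + m + k := by exact_mod_cast hi.symm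
  refine ⟨j, i, by lia, ?_⟩
  rw [Complex.dist_eq_re_im, Real.sqrt_le_one, hmR, hiR]
  convert h using 3
  ring

/-- The corners on the `r`-th side of the spiral, rotated to the right of the origin: the ends of
the row of lattice points (`0` and `1`), and then those of the connection to the next row, chosen
such that the path turns by the angle `π / 4` at each of them. The corner with number `6` is the
first one of the next side. -/
def rowCorner (r : ℕ) : ℕ → ℂ
  | 0 => ⟨(r / 4 : ℕ) * rowDist, -(rowSteps (r / 4) / 2)⟩
  | 1 => ⟨(r / 4 : ℕ) * rowDist, rowSteps (r / 4) / 2⟩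
  | 2 => ⟨(r / 4 : ℕ) * rowDist + √2 / 2, rowSteps (r / 4) / 2 + √2 / 2⟩
  | 3 => ⟨rowSteps ((r + 1) / 4) / 2, rowSteps (r / 4) / 2 + √2 / 2⟩
  | 4 => ⟨rowSteps ((r + 1) / 4) / 2 + √2 / 2, rowSteps (r / 4) / 2⟩
  | 5 => ⟨rowSteps ((r + 1) / 4) / 2 + √2 / 2, ((r + 1) / 4 : ℕ) * rowDist + √2 / 2⟩
  | _ => ⟨rowSteps ((r + 1) / 4) / 2, ((r + 1) / 4 : ℕ) * rowDist⟩

/-- The distance between the corners `m` and `m + 1` of a side of the spiral. -/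
def rowLength (r : ℕ) : ℕ → ℝ
  | 0 => rowSteps (r / 4)
  | 2 => rowSteps ((r + 1) / 4) / 2 - (r / 4 : ℕ) * rowDist - √2 / 2
  | 4 => rowSteps (r / 4) / 2 - ((r + 1) / 4 : ℕ) * rowDist - √2 / 2
  | _ => 1

lemma rowCorner_succ_sub (r : ℕ) {m : ℕ} (hm : m < 6) :
    rowCorner r (m + 1) - rowCorner r m = rowLength r m • cis (π / 2 - m * (π / 4)) := by
  have h3 : cis (π / 2 - 3 * (π / 4)) = cis (-(π / 4)) := by ring_nf
  have h4 : cis (π / 2 - 4 * (π / 4)) = cis (-(π / 2)) := by ring_nf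
  have h5 : cis (π / 2 - 5 * (π / 4)) = cis (π / 4 - π) := by ring_nf
  have h2 : cis (π / 2 - 2 * (π / 4)) = cis 0 := by ring_nf
  have h1 : cis (π / 2 - 1 * (π / 4)) = cis (π / 4) := by ring_nf
  interval_cases m <;> push_cast <;> simp only [h1, h2, h3, h4, h5, zero_mul, sub_zero] <;>
  apply Complex.ext <;>
  simp [rowCorner, rowLength, cis_re, cis_im, cos_sub_pi, sin_sub_pi] <;> ring

lemma rowCorner_six (r : ℕ) : rowCorner r 6 = Complex.I * rowCorner (r + 1) 0 := by
  apply Complex.ext <;> simp [rowCorner]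

/-- The corners of the spiral. It consists of sides of six corners each, and is turned by `π / 2`
from each side to the next. -/
def spiralCorner (q : ℕ) : ℂ := Complex.I ^ (q / 6) * rowCorner (q / 6) (q % 6)

lemma spiralCorner_eq (r : ℕ) {m : ℕ} (hm : m ≤ 6) :
    spiralCorner (6 * r + m) = Complex.I ^ r * rowCorner r m := by
  obtain hm | rfl := hm.lt_or_eq
  · rw [spiralCorner, Nat.mul_add_div (by lia), Nat.mul_add_mod, Nat.div_eq_of_lt hm,
      Nat.mod_eq_of_lt hm, add_zero]
  · rw [rowCorner_six, ← mul_assoc, ← pow_succ, spiralCorner, ← mul_add_one,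
      Nat.mul_div_cancel_left _ (by lia), Nat.mul_mod_right]

lemma rowLength_bounds (r : ℕ) :
    rowLength r 2 ∈ Set.Ioc (0 : ℝ) 6 ∧ rowLength r 4 ∈ Set.Ioc (0 : ℝ) 4 := by
  have hd := rowDist_mem_Ioo
  obtain ⟨hM, hM'⟩ := rowSteps_mem_Icc (r / 4)
  obtain ⟨hN, hN'⟩ := rowSteps_mem_Icc ((r + 1) / 4)
  have h2 : √2 / 2 ∈ Set.Ioo (0 : ℝ) 1 :=
    ⟨by positivity, by linarith [(Real.sqrt_lt' two_pos).2 (by norm_num : (2 : ℝ) < 2 ^ 2)]⟩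
  have hle : ((r / 4 : ℕ) : ℝ) * rowDist ≤ ((r + 1) / 4 : ℕ) * rowDist := by
    have : r / 4 ≤ (r + 1) / 4 := by lia
    gcongr
    linarith [hd.1]
  have hle' : (((r + 1) / 4 : ℕ) : ℝ) * rowDist ≤ (r / 4 : ℕ) * rowDist + rowDist := by
    rw [← add_one_mul]
    have : (r + 1) / 4 ≤ r / 4 + 1 := by lia
    gcongr
    · linarith [hd.1]
    · exact_mod_cast this
  refine ⟨⟨?_, ?_⟩, ?_, ?_⟩ <;> simp only [rowLength] <;> linarith [h2.1, h2.2, hd.1, hd.2]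

lemma rowLength_pos (r : ℕ) : ∀ m, 0 < rowLength r m
  | 0 => by
    have := (rowSteps_mem_Icc (r / 4)).1
    have : 0 ≤ 2 * ((r / 4 : ℕ) : ℝ) * rowDist := by unfold rowDist; positivity
    simp only [rowLength]
    linarith
  | 2 => (rowLength_bounds r).1.1
  | 4 => (rowLength_bounds r).2.1
  | 1 | 3 | _ + 5 => one_pos

lemma sum_ceil_rowLength_le (r : ℕ) :
    ∑ m ∈ Finset.range 6, ⌈rowLength r m⌉₊ ≤ rowSteps (r / 4) + 13 := by
  obtain ⟨⟨-, h2⟩, -, h4⟩ := rowLength_bounds r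
  have h2' : ⌈rowLength r 2⌉₊ ≤ 6 := Nat.ceil_le.2 (by exact_mod_cast h2)
  have h4' : ⌈rowLength r 4⌉₊ ≤ 4 := Nat.ceil_le.2 (by exact_mod_cast h4)
  have h0 : ⌈rowLength r 0⌉₊ = rowSteps (r / 4) := Nat.ceil_natCast _
  have hodd : ⌈rowLength r 1⌉₊ = 1 ∧ ⌈rowLength r 3⌉₊ = 1 ∧ ⌈rowLength r 5⌉₊ = 1 :=
    ⟨Nat.ceil_one, Nat.ceil_one, Nat.ceil_one⟩
  simp only [Finset.sum_range_succ, Finset.sum_range_zero]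
  lia

lemma cis_nat_mul_pi_div_two (r : ℕ) : cis (r * (π / 2)) = Complex.I ^ r := by
  conv_rhs => rw [← Complex.exp_pi_div_two_mul_I, ← Complex.exp_nat_mul]
  rw [cis]
  push_cast
  ring_nf

lemma cis_sub_nat_mul_two_pi (t : ℝ) (n : ℕ) : cis (t - n * (2 * π)) = cis t := by
  apply Complex.ext <;> simp [cis_re, cis_im, cos_sub_nat_mul_two_pi, sin_sub_nat_mul_two_pi]

lemma spiralCorner_succ_sub (r : ℕ) {m : ℕ} (hm : m < 6) :
    spiralCorner (6 * r + m + 1) - spiralCorner (6 * r + m) =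
      rowLength r m • cis (π / 2 - (6 * r + m : ℕ) * (π / 4)) := by
  rw [add_assoc, spiralCorner_eq r hm, spiralCorner_eq r hm.le, ← mul_sub, rowCorner_succ_sub r hm,
    mul_smul_comm, ← cis_nat_mul_pi_div_two, ← cis_add, ← cis_sub_nat_mul_two_pi _ r]
  push_cast
  ring_nf

lemma exists_spiralCorner_succ_sub_eq (q : ℕ) : ∃ s > (0 : ℝ),
    spiralCorner (q + 1) - spiralCorner q = s • cis (π / 2 - q * (π / 4)) := by
  have h := spiralCorner_succ_sub (q / 6) (Nat.mod_lt q (by lia : 0 < 6))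
  rw [Nat.div_add_mod] at h
  exact ⟨_, rowLength_pos _ _, h⟩

lemma spiralCorner_succ_ne (q : ℕ) : spiralCorner (q + 1) ≠ spiralCorner q := by
  obtain ⟨s, hs, h⟩ := exists_spiralCorner_succ_sub_eq q
  rw [← sub_ne_zero, h]
  exact smul_ne_zero hs.ne' (norm_pos_iff.1 (by rw [norm_cis]; exact one_pos))

lemma spiralCorner_turn (q : ℕ) :
    ‖spiralCorner (q + 1) - spiralCorner q‖ * ‖spiralCorner (q + 2) - spiralCorner (q + 1)‖ / 2 ≤
      inner ℝ (spiralCorner (q + 1) - spiralCorner q)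
        (spiralCorner (q + 2) - spiralCorner (q + 1)) := by
  obtain ⟨s, hs, h⟩ := exists_spiralCorner_succ_sub_eq q
  obtain ⟨t, ht, h'⟩ := exists_spiralCorner_succ_sub_eq (q + 1)
  have hcos : 1 / 2 ≤ cos (π / 4) := by
    rw [← cos_pi_div_three]
    exact cos_le_cos_of_nonneg_of_le_pi (by positivity) (by linarith [pi_pos])
      (by linarith [pi_pos])
  have hang : (π / 2 - (q + 1 : ℕ) * (π / 4)) - (π / 2 - q * (π / 4)) = -(π / 4) := by
    push_cast
    ring
  rw [h, h', norm_smul_cis hs.le, norm_smul_cis ht.le, real_inner_smul_left, real_inner_smul_right,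
    inner_cis_cis, hang, cos_neg]
  nlinarith [mul_pos hs ht]

lemma stepCount_spiralCorner (r : ℕ) {m : ℕ} (hm : m < 6) :
    stepCount spiralCorner (6 * r + m) = ⌈rowLength r m⌉₊ := by
  rw [stepCount, spiralCorner_succ_sub r hm, norm_smul_cis (rowLength_pos r m).le]

lemma subdivide_spiralCorner {n r m i : ℕ} (hm : m < 6)
    (h : node (stepCount spiralCorner) n = (6 * r + m, i)) :
    subdivide spiralCorner n = Complex.I ^ r *
      AffineMap.lineMap (rowCorner r m) (rowCorner r (m + 1)) (i / ⌈rowLength r m⌉₊ : ℝ) := by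
  simp only [subdivide, h]
  rw [add_assoc, spiralCorner_eq r hm.le, spiralCorner_eq r hm, stepCount_spiralCorner r hm,
    AffineMap.lineMap_apply_module', AffineMap.lineMap_apply_module', ← mul_sub, ← mul_smul_comm,
    ← mul_add]

lemma lineMap_rowCorner_zero (r : ℕ) {i : ℕ} (hi : i < rowSteps (r / 4)) :
    AffineMap.lineMap (rowCorner r 0) (rowCorner r 1) (i / ⌈rowLength r 0⌉₊ : ℝ) =
      (⟨(r / 4 : ℕ) * rowDist, i - rowSteps (r / 4) / 2⟩ : ℂ) := by
  have hrow : (0 : ℝ) < rowSteps (r / 4) := by exact_mod_cast (Nat.zero_le i).trans_lt hi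
  rw [rowLength, Nat.ceil_natCast, AffineMap.lineMap_apply_module']
  apply Complex.ext <;> simp only [rowCorner, Complex.add_re, Complex.add_im, Complex.smul_re,
    Complex.smul_im, Complex.sub_re, Complex.sub_im, smul_eq_mul]
  · ring
  · field_simp
    ring

lemma exists_dist_subdivide_le_one (z : ℂ) : ∃ n, dist z (subdivide spiralCorner n) ≤ 1 := by
  obtain ⟨m, hm, w, rfl, hw⟩ := exists_I_pow_mul_eq z
  obtain ⟨j, i, hi, hd⟩ := exists_row_point hw
  obtain ⟨r, hr, hrj⟩ : ∃ r, Complex.I ^ m = Complex.I ^ r ∧ r / 4 = j :=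
    ⟨4 * j + m, by rw [pow_add, pow_mul, Complex.I_pow_four, one_pow, one_mul], by lia⟩
  subst hrj
  have hi' : i < stepCount spiralCorner (6 * r + 0) := by
    rwa [stepCount_spiralCorner r (by lia), rowLength, Nat.ceil_natCast]
  obtain ⟨n, hn⟩ := exists_node_eq (stepCount_pos spiralCorner_succ_ne) hi'
  refine ⟨n, ?_⟩
  rwa [hr, subdivide_spiralCorner (by lia) hn, lineMap_rowCorner_zero r hi, dist_eq_norm,
    ← mul_sub, norm_mul, norm_pow, Complex.norm_I, one_pow, one_mul, ← dist_eq_norm]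

lemma isAdmissible_spiral : IsAdmissible (subdivide spiralCorner) :=
  isAdmissible_subdivide spiralCorner_succ_ne spiralCorner_turn exists_dist_subdivide_le_one

/-! ### The density of the spiral -/

lemma I_pow_mul_mem_square_iff {l : ℝ} {z : ℂ} (r : ℕ) :
    Complex.I ^ r * z ∈ square l ↔ z ∈ square l := by
  induction r generalizing z with
  | zero => rw [pow_zero, one_mul]
  | succ r ih =>
    rw [pow_succ, mul_assoc, ih]
    simp [square, and_comm]

lemma le_rowCorner_re (r : ℕ) : ∀ m, (r / 4 : ℕ) * rowDist ≤ (rowCorner r m).re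
  | 0 | 1 => le_rfl
  | 2 => le_add_of_nonneg_right (by positivity)
  | m + 3 => by
    have h := rowLength_pos r 2
    have h2 : 0 ≤ √2 / 2 := by positivity
    rw [rowLength] at h
    rcases m with _ | _ | _ | m <;> simp only [rowCorner] <;> linarith

lemma exists_subdivide_spiralCorner_eq (n : ℕ) : ∃ (r : ℕ) (w : ℂ),
    subdivide spiralCorner n = Complex.I ^ r * w ∧ (r / 4 : ℕ) * rowDist ≤ w.re ∧
      n < ∑ k ∈ Finset.range (6 * (r + 1)), stepCount spiralCorner k := by
  set s := node (stepCount spiralCorner) n with hs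
  have hlt := node_snd_lt (stepCount_pos spiralCorner_succ_ne) n
  have hsum := sum_range_add_node_snd (stepCount_pos spiralCorner_succ_ne) n
  rw [← hs] at hlt hsum
  set r := s.1 / 6
  set m := s.1 % 6
  have hm : m < 6 := Nat.mod_lt _ (by lia)
  have hsm : s = (6 * r + m, s.2) := by rw [Nat.div_add_mod]
  refine ⟨r, _, subdivide_spiralCorner hm hsm, ?_, ?_⟩
  · have ht : (s.2 / ⌈rowLength r m⌉₊ : ℝ) ∈ Set.Icc 0 1 := by
      rw [← stepCount_spiralCorner r hm, Nat.div_add_mod]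
      exact ⟨by positivity, div_le_one_of_le₀ (by exact_mod_cast hlt.le) (Nat.cast_nonneg _)⟩
    exact (convex_halfSpace_re_ge _).lineMap_mem (le_rowCorner_re r m) (le_rowCorner_re r _) ht
  · calc n < ∑ k ∈ Finset.range (s.1 + 1), stepCount spiralCorner k := by
          rw [Finset.sum_range_succ]
          lia
      _ ≤ _ := Finset.sum_le_sum_of_subset (Finset.range_mono (by lia))

lemma lt_of_mem_meetingIndices {J n : ℕ}
    (hn : n ∈ meetingIndices (subdivide spiralCorner) (J * rowDist - 1)) :
    n < ∑ k ∈ Finset.range (24 * J), stepCount spiralCorner k := by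
  obtain ⟨r, w, hw, hre, hlt⟩ := exists_subdivide_spiralCorner_eq n
  obtain ⟨z, hz, hzl⟩ := hn
  have hwl : w ∈ square (J * rowDist - 1 + 1) := by
    rw [← I_pow_mul_mem_square_iff r, ← hw]
    exact mem_square_of_dist_le hzl (dist_comm z _ ▸ mem_closedBall.1 hz)
  have hrJ : r / 4 < J := by
    have h := hre.trans_lt ((le_abs_self _).trans_lt hwl.1)
    rw [sub_add_cancel] at h
    exact_mod_cast lt_of_mul_lt_mul_right h (by linarith [rowDist_mem_Ioo.1])
  exact hlt.trans_le (Finset.sum_le_sum_of_subset (Finset.range_mono (by lia)))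

lemma sum_stepCount_le (J : ℕ) :
    ((∑ k ∈ Finset.range (24 * J), stepCount spiralCorner k : ℕ) : ℝ) ≤
      4 * rowDist * J ^ 2 + 84 * J := by
  have hside (r : ℕ) : ∑ k ∈ Finset.range (6 * (r + 1)), stepCount spiralCorner k ≤
      ∑ k ∈ Finset.range (6 * r), stepCount spiralCorner k + (rowSteps (r / 4) + 13) := by
    rw [mul_add_one, Finset.sum_range_add]
    gcongr
    refine le_of_eq_of_le (Finset.sum_congr rfl fun m hm => ?_) (sum_ceil_rowLength_le r)
    exact stepCount_spiralCorner r (Finset.mem_range.1 hm)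
  induction J with
  | zero => simp
  | succ J ih =>
    have hturn : ∑ k ∈ Finset.range (24 * (J + 1)), stepCount spiralCorner k ≤
        ∑ k ∈ Finset.range (24 * J), stepCount spiralCorner k + 4 * (rowSteps J + 13) := by
      have h0 := hside (4 * J)
      have h1 := hside (4 * J + 1)
      have h2 := hside (4 * J + 2)
      have h3 := hside (4 * J + 3)
      rw [show 4 * J / 4 = J by lia] at h0
      rw [show (4 * J + 1) / 4 = J by lia] at h1
      rw [show (4 * J + 2) / 4 = J by lia] at h2
      rw [show (4 * J + 3) / 4 = J by lia] at h3
      ring_nf at h0 h1 h2 h3 ⊢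
      lia
    have hrow := (rowSteps_mem_Icc J).2
    have hturn' := (Nat.cast_le (α := ℝ)).2 hturn
    push_cast at hturn' ih ⊢
    linarith [rowDist_mem_Ioo.1]

lemma tendsto_spiral_density :
    Tendsto (fun J : ℕ => (4 * rowDist * J ^ 2 + 84 * J) * π / (4 * (J * rowDist - 1) ^ 2)) atTop
      (nhds (2 * π / (2 + √3))) := by
  have hd : rowDist ≠ 0 := by linarith [rowDist_mem_Ioo.1]
  set f : ℝ → ℝ := fun x => (4 * rowDist + 84 * x) * π / (4 * (rowDist - x) ^ 2)
  have hf : ContinuousAt f 0 :=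
    ContinuousAt.div (by fun_prop) (by fun_prop) (by simpa using hd)
  have hf0 : f 0 = 2 * π / (2 + √3) := by
    simp only [f, mul_zero, add_zero, sub_zero]
    unfold rowDist at hd ⊢
    field_simp
  rw [← hf0]
  refine (hf.tendsto.comp tendsto_inv_atTop_nhds_zero_nat).congr' ?_
  filter_upwards [eventually_gt_atTop 0] with J hJ
  have hJ' : (J : ℝ) ≠ 0 := by positivity
  simp only [f, Function.comp_apply]
  field_simp

theorem lowerDensity_spiral_le :
    lowerDensity (fun n => toPt (subdivide spiralCorner n)) ≤
      ENNReal.ofReal (2 * π / (2 + √3)) := by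
  have hd := rowDist_mem_Ioo.1
  have hl : Tendsto (fun J : ℕ => J * rowDist - 1) atTop atTop :=
    tendsto_atTop_add_const_right _ _
      (tendsto_natCast_atTop_atTop.atTop_mul_const (by linarith))
  have hcount (J : ℕ) : Ncount (fun n => toPt (subdivide spiralCorner n)) (J * rowDist - 1) ≤
      ENNReal.ofReal (4 * rowDist * J ^ 2 + 84 * J) := by
    refine le_trans ?_ (ENNReal.ofReal_le_ofReal (sum_stepCount_le J))
    have h := Set.encard_le_encard (t := (Finset.range _ : Set ℕ)) fun n hn =>
      Finset.mem_coe.2 (Finset.mem_range.2 (lt_of_mem_meetingIndices (J := J) hn))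
    rw [Set.encard_coe_eq_coe_finsetCard, Finset.card_range] at h
    rw [Ncount_toPt, ENNReal.ofReal_natCast, ← ENat.toENNReal_coe]
    exact ENat.toENNReal_le.2 h
  rw [← (ENNReal.tendsto_ofReal tendsto_spiral_density).liminf_eq]
  refine (liminf_le_liminf_of_le hl).trans ?_
  rw [← liminf_comp]
  refine liminf_le_liminf ?_
  filter_upwards [hl.eventually_gt_atTop 0] with J hJ
  simp only [Function.comp_apply]
  rw [ENNReal.ofReal_div_of_pos (by positivity), ENNReal.ofReal_mul (p := _ + _) (by positivity)]
  gcongr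
  exact hcount J

end SeqCovering

/-- The optimal lower density of covering the plane by a sequence of unit circular disks, each
containing the center of the next and with no turn sharper than `2π/3`, equals `2π/(2+√3)`. -/
theorem optimal_lower_density_seq_covering :
    sInf {d : ℝ≥0∞ | ∃ C : ℕ → Pt, Admissible C ∧ d = lowerDensity C} =
      ENNReal.ofReal (2 * π / (2 + Real.sqrt 3)) := by
  refine le_antisymm ?_ (le_sInf ?_)
  · exact sInf_le_of_le ⟨_, SeqCovering.admissible_toPt_iff.2 SeqCovering.isAdmissible_spiral, rfl⟩
      SeqCovering.lowerDensity_spiral_le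
  · rintro _ ⟨C, hC, rfl⟩
    obtain ⟨c, rfl⟩ : ∃ c : ℕ → ℂ, C = fun n => SeqCovering.toPt (c n) :=
      ⟨fun n => SeqCovering.toPt.symm (C n), by simp⟩
    exact (SeqCovering.admissible_toPt_iff.1 hC).le_lowerDensity
end
end

section
/- For every integer n ≥ 4, 2·a*(n) ≥ a*(n−1) + a*(n+1), where a*(k) is the supremum of the areas of convex polygons with at most k vertices inscribed in M; that is, the sequence of maximal inscribed-polygon areas in M is concave. -/
open Metric MeasureTheory Real

noncomputable section

/-- The set `M`: the closed unit disk truncated by two chords of length `√3` sharing the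
endpoint `(0, −1)`. -/
def M : Set Pt :=
  {p | p 0 ^ 2 + p 1 ^ 2 ≤ 1 ∧ Real.sqrt 3 * p 0 - p 1 ≤ 1 ∧ -Real.sqrt 3 * p 0 - p 1 ≤ 1}

/-- `a*(k)`: the supremum of the areas of convex polygons with at most `k` vertices inscribed
in `M`. -/
def astar (k : ℕ) : ℝ :=
  sSup {a : ℝ | ∃ S : Finset Pt, (S : Set Pt) ⊆ M ∧ S.card ≤ k ∧
    a = (volume (convexHull ℝ (S : Set Pt))).toReal}

/-!
Moving one vertex of a polygon along a line changes the area of its convex hull convexly, so each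
vertex may be moved to an extreme point of `M`: the vertex `(0, -1)`, called the apex, or a point
of the arc. Triangulating from the apex, a polygon through the apex with arc vertices at angles
`t₀ ≤ ⋯ ≤ tⱼ` has area `(∑ sin (tᵢ₊₁ - tᵢ) + sin tⱼ - sin t₀) / 2`, which by concavity of `sin` is
largest when the angles are equally spaced over the whole arc `[-π/3, π/3]`; a polygon missing the
apex lies in a rectangle of area `√3 / 2` and never does better. Hence
`astar (j + 2) = (j * sin (2π / (3j)) + √3) / 2` for `j ≥ 1`, and `j * sin (2π / (3j))` is concave
in `j`, being a perspective of `sin`.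
-/

section ConvexityInOneVertex

section Slices

variable {F : Type*} [AddCommGroup F] [Module ℝ F]

lemma ofReal_abs_sub_le_volume_slice_of_convex {K : Set (F × ℝ)} (hK : Convex ℝ K) {x : F} {y z : ℝ}
    (hy : (x, y) ∈ K) (hz : (x, z) ∈ K) :
    ENNReal.ofReal |y - z| ≤ volume (Prod.mk x ⁻¹' K) := by
  have hslice : Convex ℝ (Prod.mk x ⁻¹' K) := fun a ha b hb s t hs ht hst => by
    simpa [← add_smul, hst] using hK ha hb hs ht hst
  rw [← Real.volume_interval]
  exact measure_mono (hslice.ordConnected.uIcc_subset hz hy)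

lemma exists_forall_mk_mem_convexHull_insert {T : Set (F × ℝ)} (hT : T.Nonempty) {a x : F}
    {p y : ℝ} (hy : (x, y) ∈ convexHull ℝ (insert (a, p) T)) :
    ∃ α : ℝ, ∀ w, (x, y + α * (w - p)) ∈ convexHull ℝ (insert (a, w) T) := by
  rw [convexHull_insert hT, mem_convexJoin] at hy
  obtain ⟨_, rfl, k, hk, α, β, hα, hβ, hαβ, hxy⟩ := hy
  refine ⟨α, fun w => ?_⟩
  rw [convexHull_insert hT, mem_convexJoin]
  refine ⟨_, rfl, k, hk, α, β, hα, hβ, hαβ, ?_⟩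
  obtain ⟨rfl, rfl⟩ := Prod.ext_iff.1 hxy
  ext
  · simp
  · simp only [Prod.snd_add, Prod.smul_snd, smul_eq_mul]
    ring

lemma volume_slice_convexHull_insert_le {T : Set (F × ℝ)} (hT : T.Nonempty) (a x : F)
    (u v : ℝ) {s t : ℝ} (hs : 0 ≤ s) (ht : 0 ≤ t) (hst : s + t = 1) :
    volume (Prod.mk x ⁻¹' convexHull ℝ (insert (a, s * u + t * v) T)) ≤
      ENNReal.ofReal s * volume (Prod.mk x ⁻¹' convexHull ℝ (insert (a, u) T)) +
      ENNReal.ofReal t * volume (Prod.mk x ⁻¹' convexHull ℝ (insert (a, v) T)) := by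
  refine (Real.volume_le_diam _).trans (ediam_le fun y hy z hz => ?_)
  obtain ⟨α, hα⟩ := exists_forall_mk_mem_convexHull_insert hT hy
  obtain ⟨β, hβ⟩ := exists_forall_mk_mem_convexHull_insert hT hz
  -- `gap w` follows `y - z` as the moving vertex slides to height `w`; it is affine in `w`.
  let gap (w : ℝ) : ℝ :=
    (y + α * (w - (s * u + t * v))) - (z + β * (w - (s * u + t * v)))
  have gap_le (w : ℝ) :=
    ofReal_abs_sub_le_volume_slice_of_convex (convex_convexHull ℝ _) (hα w) (hβ w)
  have split : y - z = s * gap u + t * gap v := by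
    obtain rfl : t = 1 - s := by linarith
    simp only [gap]
    ring
  calc edist y z = ENNReal.ofReal |s * gap u + t * gap v| := by
        rw [edist_dist, Real.dist_eq, split]
    _ ≤ ENNReal.ofReal (s * |gap u| + t * |gap v|) := by
        refine ENNReal.ofReal_le_ofReal ((abs_add_le _ _).trans_eq ?_)
        rw [abs_mul, abs_mul, abs_of_nonneg hs, abs_of_nonneg ht]
    _ = ENNReal.ofReal s * ENNReal.ofReal |gap u| + ENNReal.ofReal t * ENNReal.ofReal |gap v| := by
        rw [ENNReal.ofReal_add (by positivity) (by positivity), ENNReal.ofReal_mul hs,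
          ENNReal.ofReal_mul ht]
    _ ≤ _ := by gcongr <;> exact gap_le _

end Slices

lemma measurableSet_convexHull_of_finite {E : Type*} [AddCommGroup E] [Module ℝ E]
    [TopologicalSpace E] [IsTopologicalAddGroup E] [ContinuousSMul ℝ E] [T2Space E]
    [MeasurableSpace E] [OpensMeasurableSpace E] {S : Set E} (hS : S.Finite) :
    MeasurableSet (convexHull ℝ S) :=
  (hS.isCompact_convexHull ℝ).measurableSet

lemma prod_measure_convexHull_insert_le {F : Type*} [NormedAddCommGroup F] [NormedSpace ℝ F]
    [MeasurableSpace F] [BorelSpace F] [SecondCountableTopology F] (ν : Measure F) [SFinite ν]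
    {T : Set (F × ℝ)} (hT : T.Nonempty) (hfin : T.Finite) (a : F) (u v : ℝ) {s t : ℝ}
    (hs : 0 ≤ s) (ht : 0 ≤ t) (hst : s + t = 1) :
    ν.prod volume (convexHull ℝ (insert (a, s * u + t * v) T)) ≤
      ENNReal.ofReal s * ν.prod volume (convexHull ℝ (insert (a, u) T)) +
      ENNReal.ofReal t * ν.prod volume (convexHull ℝ (insert (a, v) T)) := by
  have hm (w : ℝ) : MeasurableSet (convexHull ℝ (insert (a, w) T)) :=
    measurableSet_convexHull_of_finite (hfin.insert _)
  have hslice (w : ℝ) := measurable_measure_prodMk_left (ν := (volume : Measure ℝ)) (hm w)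
  simp only [Measure.prod_apply (hm _)]
  rw [← lintegral_const_mul _ (hslice u), ← lintegral_const_mul _ (hslice v),
    ← lintegral_add_left ((hslice u).const_mul _)]
  exact lintegral_mono fun x => volume_slice_convexHull_insert_le hT a x u v hs ht hst

lemma exists_measure_convexHull_eq_mul {E F : Type*} [NormedAddCommGroup E] [NormedSpace ℝ E]
    [MeasurableSpace E] [BorelSpace E] (μ : Measure E) [μ.IsAddHaarMeasure]
    [NormedAddCommGroup F] [NormedSpace ℝ F] [FiniteDimensional ℝ F] [MeasurableSpace F]
    [BorelSpace F] (ν : Measure F) [ν.IsAddHaarMeasure] (L : E ≃L[ℝ] F) :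
    ∃ c, ∀ S : Set E, μ (convexHull ℝ S) = c * ν (convexHull ℝ (L '' S)) := by
  obtain ⟨c, hc⟩ : ∃ c : NNReal, μ.map L = c • ν := ⟨_, Measure.isAddLeftInvariant_eq_smul _ _⟩
  refine ⟨c, fun S => ?_⟩
  have hull_image : L '' convexHull ℝ S = convexHull ℝ (L '' S) :=
    L.toLinearMap.image_convexHull S
  calc μ (convexHull ℝ S) = μ (L ⁻¹' (L '' convexHull ℝ S)) := by
        rw [Set.preimage_image_eq _ L.injective]
    _ = μ.map L (L '' convexHull ℝ S) :=
        (L.toHomeomorph.toMeasurableEquiv.map_apply _).symm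
    _ = c * ν (convexHull ℝ (L '' S)) := by rw [hull_image, hc]; rfl

section Haar

variable {E : Type*} [NormedAddCommGroup E] [NormedSpace ℝ E] [FiniteDimensional ℝ E]

lemma exists_continuousLinearEquiv_prod_apply_eq {w : E} (hw : w ≠ 0) :
    ∃ (n : ℕ) (L : E ≃L[ℝ] (Fin n → ℝ) × ℝ), L w = (0, 1) := by
  have : Nontrivial E := nontrivial_of_ne w 0 hw
  obtain ⟨n, hn⟩ := Nat.exists_eq_succ_of_ne_zero (Module.finrank_pos (R := ℝ) (M := E)).ne'
  let L₀ : E ≃L[ℝ] (Fin n → ℝ) × ℝ := .ofFinrankEq (by simp [hn])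
  obtain ⟨A, hA⟩ := SeparatingDual.exists_continuousLinearEquiv_apply_eq (R := ℝ)
    (x := L₀ w) (y := ((0, 1) : (Fin n → ℝ) × ℝ)) (by simpa using hw) (by simp)
  exact ⟨n, L₀.trans A, hA⟩

variable [MeasurableSpace E] [BorelSpace E] (μ : Measure E) [μ.IsAddHaarMeasure]

lemma measure_convexHull_insert_add_smul_le {T : Set E} (hT : T.Finite) (u v : E) {s t : ℝ}
    (hs : 0 ≤ s) (ht : 0 ≤ t) (hst : s + t = 1) :
    μ (convexHull ℝ (insert (s • u + t • v) T)) ≤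
      ENNReal.ofReal s * μ (convexHull ℝ (insert u T)) +
      ENNReal.ofReal t * μ (convexHull ℝ (insert v T)) := by
  rcases eq_or_ne u v with rfl | huv
  · rw [← add_smul, ← add_mul, ← ENNReal.ofReal_add hs ht, hst]
    simp
  rcases T.eq_empty_or_nonempty with rfl | hne
  · have : Nontrivial E := nontrivial_of_ne u v huv
    simp
  obtain ⟨n, L, hL⟩ := exists_continuousLinearEquiv_prod_apply_eq (sub_ne_zero.2 huv.symm)
  obtain ⟨c, hc⟩ := exists_measure_convexHull_eq_mul μ (volume.prod volume) L
  have hu : L u = ((L u).1, (L u).2) := rfl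
  have hv : L v = ((L u).1, (L u).2 + 1) := by
    rw [map_sub, sub_eq_iff_eq_add'] at hL
    rw [hL]
    simp [Prod.ext_iff]
  have image_combination : L (s • u + t • v) = ((L u).1, s * (L u).2 + t * ((L u).2 + 1)) := by
    rw [map_add, map_smul, map_smul, hv]
    simp [Prod.ext_iff, ← add_smul, hst]
  simp only [hc, Set.image_insert_eq, image_combination, hv]
  rw [hu]
  refine (mul_le_mul_right (prod_measure_convexHull_insert_le volume (hne.image L) (hT.image L)
    (L u).1 (L u).2 ((L u).2 + 1) hs ht hst) c).trans_eq ?_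
  ring

theorem convexOn_measureReal_convexHull_insert {T : Set E} (hT : T.Finite) :
    ConvexOn ℝ Set.univ fun p => μ.real (convexHull ℝ (insert p T)) := by
  refine ⟨convex_univ, fun u _ v _ s t hs ht hst => ?_⟩
  have hfin (p : E) : μ (convexHull ℝ (insert p T)) ≠ ⊤ :=
    ((hT.insert p).isCompact_convexHull ℝ).measure_ne_top
  have := ENNReal.toReal_mono (by finiteness [hfin u, hfin v])
    (measure_convexHull_insert_add_smul_le μ hT u v hs ht hst)
  rw [ENNReal.toReal_add (by finiteness [hfin u]) (by finiteness [hfin v])] at this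
  simpa [Measure.real, hs, ht] using this

theorem exists_finset_measureReal_convexHull_le {A : Set E} (S : Finset E)
    (hS : (S : Set E) ⊆ convexHull ℝ A) :
    ∃ T : Finset E, (T : Set E) ⊆ A ∧ T.card ≤ S.card ∧
      μ.real (convexHull ℝ (S : Set E)) ≤ μ.real (convexHull ℝ (T : Set E)) := by
  classical
  suffices replace_all : ∀ R : Finset E, (R : Set E) ⊆ A → ∃ T : Finset E, (T : Set E) ⊆ A ∧
      T.card ≤ S.card + R.card ∧
      μ.real (convexHull ℝ (S ∪ R : Set E)) ≤ μ.real (convexHull ℝ (T : Set E)) by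
    simpa using replace_all ∅ (by simp)
  induction S using Finset.induction_on with
  | empty => exact fun R hR => ⟨R, hR, by simp, by simp⟩
  | insert p S hp ih =>
    intro R hR
    rw [Finset.coe_insert, Set.insert_subset_iff] at hS
    obtain ⟨q, hqA, hpq⟩ :=
      (convexOn_measureReal_convexHull_insert μ
        (S.finite_toSet.union R.finite_toSet)).exists_ge_of_mem_convexHull (Set.subset_univ A) hS.1
    obtain ⟨T, hTA, hcard, hle⟩ := ih hS.2 (insert q R) (by simp [Set.insert_subset_iff, hqA, hR])
    refine ⟨T, hTA, ?_, ?_⟩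
    · rw [Finset.card_insert_of_notMem hp]
      have := Finset.card_insert_le q R
      omega
    · rw [Finset.coe_insert, Set.insert_union]
      rw [Finset.coe_insert, Set.union_insert] at hle
      exact hpq.trans hle

end Haar

end ConvexityInOneVertex

section Gluing

section Hulls

variable {E : Type*} [AddCommGroup E] [Module ℝ E]

lemma segment_subset_union_of_mem_segment {x y w : E} (hw : w ∈ segment ℝ x y) :
    segment ℝ x y ⊆ segment ℝ x w ∪ segment ℝ w y := by
  have image_Icc {s t : ℝ} (hst : s ≤ t) : AffineMap.lineMap x y '' Set.Icc s t =
      segment ℝ (AffineMap.lineMap x y s) (AffineMap.lineMap x y t : E) := by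
    rw [← segment_eq_Icc hst, image_segment]
  rw [segment_eq_image_lineMap] at hw
  obtain ⟨c, ⟨hc₀, hc₁⟩, rfl⟩ := hw
  have left_eq := image_Icc hc₀
  have right_eq := image_Icc hc₁
  rw [AffineMap.lineMap_apply_zero] at left_eq
  rw [AffineMap.lineMap_apply_one] at right_eq
  rw [← left_eq, ← right_eq, ← Set.image_union, Set.Icc_union_Icc_eq_Icc hc₀ hc₁,
    segment_eq_image_lineMap]

lemma convexHull_insert_eq_union_of_level (f : E →ₗ[ℝ] ℝ) {a : ℝ} {S T : Set E} {q : E}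
    (hS : ∀ x ∈ S, f x ≤ a) (hq : a ≤ f q) (hT : T.Nonempty) (hTS : T ⊆ S)
    (hcut : ∀ x ∈ convexHull ℝ (insert q S), f x = a → x ∈ convexHull ℝ T) :
    convexHull ℝ (insert q S) = convexHull ℝ S ∪ convexHull ℝ (insert q T) := by
  have hull_mono : convexHull ℝ S ⊆ convexHull ℝ (insert q S) :=
    convexHull_mono (Set.subset_insert q S)
  refine subset_antisymm (fun x hx => ?_)
    (Set.union_subset hull_mono (convexHull_mono (Set.insert_subset_insert hTS)))
  rw [convexHull_insert (hT.mono hTS), mem_convexJoin] at hx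
  obtain ⟨q', hq', k, hk, hx⟩ := hx
  rw [Set.mem_singleton_iff.1 hq'] at hx
  have f_le : f k ≤ a := convexHull_min hS (convex_halfSpace_le f.isLinear a) hk
  obtain ⟨w, hw, hwa⟩ : a ∈ f.toAffineMap '' segment ℝ k q := by
    rw [image_segment, LinearMap.coe_toAffineMap, segment_eq_Icc (f_le.trans hq)]
    exact ⟨f_le, hq⟩
  have hwT : w ∈ convexHull ℝ T := hcut w ((convex_convexHull ℝ _).segment_subset (hull_mono hk)
    (subset_convexHull ℝ _ (Set.mem_insert q S)) hw) hwa
  rw [segment_symm] at hx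
  rcases segment_subset_union_of_mem_segment hw hx with hx | hx
  · exact .inl ((convex_convexHull ℝ S).segment_subset hk (convexHull_mono hTS hwT) hx)
  · exact .inr ((convex_convexHull ℝ _).segment_subset
      (convexHull_mono (Set.subset_insert q T) hwT)
      (subset_convexHull ℝ _ (Set.mem_insert q T)) hx)

end Hulls

variable {E : Type*} [NormedAddCommGroup E] [NormedSpace ℝ E] [FiniteDimensional ℝ E]
  [MeasurableSpace E] [BorelSpace E] (μ : Measure E) [μ.IsAddHaarMeasure]

lemma measure_setOf_linearMap_eq {f : E →ₗ[ℝ] ℝ} (hf : f ≠ 0) (a : ℝ) : μ {x | f x = a} = 0 := by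
  rcases Set.eq_empty_or_nonempty {x | f x = a} with h | ⟨x₀, hx₀⟩
  · rw [h, measure_empty]
  have level_eq : {x | f x = a} = AffineSubspace.mk' x₀ f.ker := by
    ext x
    simp [AffineSubspace.mem_mk', sub_eq_zero, hx₀.symm]
  rw [level_eq]
  refine Measure.addHaar_affineSubspace μ _ fun h => hf ?_
  rw [← LinearMap.ker_eq_top, ← AffineSubspace.direction_mk' x₀ f.ker, h,
    AffineSubspace.direction_top]

lemma measureReal_convexHull_insert_eq_add {f : E →ₗ[ℝ] ℝ} (hf : f ≠ 0) {a : ℝ} {S T : Set E}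
    {q : E} (hSb : Bornology.IsBounded S) (hS : ∀ x ∈ S, f x ≤ a) (hq : a ≤ f q)
    (hT : T.Nonempty) (hTS : T ⊆ S) (hTa : ∀ x ∈ T, f x = a)
    (hcut : ∀ x ∈ convexHull ℝ (insert q S), f x = a → x ∈ convexHull ℝ T) :
    μ.real (convexHull ℝ (insert q S)) =
      μ.real (convexHull ℝ S) + μ.real (convexHull ℝ (insert q T)) := by
  have below : convexHull ℝ S ⊆ {x | f x ≤ a} :=
    convexHull_min hS (convex_halfSpace_le f.isLinear a)
  have above : convexHull ℝ (insert q T) ⊆ {x | a ≤ f x} :=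
    convexHull_min (Set.insert_subset hq fun x hx => (hTa x hx).ge)
      (convex_halfSpace_ge f.isLinear a)
  have disjoint : AEDisjoint μ (convexHull ℝ S) (convexHull ℝ (insert q T)) :=
    measure_mono_null (fun x hx => le_antisymm (below hx.1) (above hx.2))
      (measure_setOf_linearMap_eq μ hf a)
  have finite {K : Set E} (hK : Bornology.IsBounded K) : μ (convexHull ℝ K) ≠ ⊤ :=
    (isBounded_convexHull.2 hK).measure_lt_top.ne
  rw [convexHull_insert_eq_union_of_level f hS hq hT hTS hcut,
    measureReal_union₀ ((convex_convexHull ℝ _).nullMeasurableSet μ) disjoint (finite hSb)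
      (finite ((hSb.subset hTS).insert q))]

end Gluing

section Triangle

open scoped Pointwise

attribute [local instance] FiniteDimensional.of_fact_finrank_eq_two

lemma parallelepiped_pair {E : Type*} [AddCommGroup E] [Module ℝ E] (v w : E) :
    parallelepiped ![v, w] = convexHull ℝ {v + w, 0, v, w} := by
  have vertices : ({0, v} + {0, w} : Set E) = {v + w, 0, v, w} := by
    ext x
    simp only [Set.mem_add, Set.mem_insert_iff, Set.mem_singleton_iff, exists_eq_or_imp,
      exists_eq_left, zero_add, add_zero]
    tauto
  rw [parallelepiped_eq_convexHull, Fin.sum_univ_two, ← vertices]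
  rfl

lemma measureReal_convexHull_add_pair {E : Type*} [NormedAddCommGroup E] [NormedSpace ℝ E]
    [FiniteDimensional ℝ E] [MeasurableSpace E] [BorelSpace E] (μ : Measure E)
    [μ.IsAddHaarMeasure] (v w : E) :
    μ.real (convexHull ℝ {v + w, v, w}) = μ.real (convexHull ℝ {0, v, w}) := by
  have reflect : ({v + w, v, w} : Set E) = (v + w) +ᵥ -({0, v, w} : Set E) := by
    simp [← Set.image_vadd, Set.image_insert_eq, Set.neg_insert, Set.pair_comm v]
  rw [reflect, convexHull_vadd, convexHull_neg, Measure.real, measure_vadd, Measure.measure_neg,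
    Measure.real]

variable {V : Type*} [NormedAddCommGroup V] [InnerProductSpace ℝ V]
  [Fact (Module.finrank ℝ V = 2)] (o : Orientation ℝ V (Fin 2))

lemma exists_eq_smul_of_areaForm_eq_zero {v w : V} (hv : v ≠ 0) (h : o.areaForm v w = 0) :
    ∃ r : ℝ, w = r • v := by
  have inner_eq : ‖inner ℝ v w‖ = ‖v‖ * ‖w‖ := by
    rw [← sq_eq_sq₀ (norm_nonneg _) (by positivity), mul_pow, ← o.inner_sq_add_areaForm_sq, h]
    simp
  have parallel : v = 0 ∨ ∃ r : ℝ, w = r • v :=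
    ((norm_inner_eq_norm_tfae ℝ v w).out 0 2).1 inner_eq
  exact parallel.resolve_left hv

lemma areaForm_ne_zero {v : V} (hv : v ≠ 0) : o.areaForm v ≠ 0 := fun h => by
  have norm_sq : ‖v‖ ^ 2 = 0 := by
    rw [← real_inner_self_eq_norm_sq, ← o.areaForm_rightAngleRotation_right, h]
    rfl
  exact hv (by simpa using norm_sq)

lemma mem_segment_of_areaForm_eq_zero_of_mem_closedBall {z c u x : V} {r : ℝ} (hcz : dist c z = r)
    (huz : dist u z = r) (hcu : c ≠ u) (hx : x ∈ closedBall z r)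
    (h : o.areaForm (u - c) (x - c) = 0) : x ∈ segment ℝ c u := by
  obtain ⟨t, ht⟩ := exists_eq_smul_of_areaForm_eq_zero o (sub_ne_zero.2 hcu.symm) h
  have collinear : Collinear ℝ {c, x, u} := by
    rw [collinear_iff_of_mem (p₀ := c) (by simp)]
    refine ⟨u - c, ?_⟩
    simp only [Set.mem_insert_iff, Set.mem_singleton_iff, forall_eq_or_imp, forall_eq,
      vadd_eq_add]
    exact ⟨⟨0, by simp⟩, ⟨t, by simp [← ht]⟩, ⟨1, by simp⟩⟩
  rw [mem_segment_iff_wbtw]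
  exact collinear.wbtw_of_dist_eq_of_dist_le hcz hx huz hcu

variable [MeasurableSpace V] [BorelSpace V]

lemma measureReal_parallelepiped_pair (v w : V) :
    volume.real (parallelepiped ![v, w]) = |o.areaForm v w| := by
  rw [Measure.real, ← o.measure_eq_volume, AlternatingMap.measure_parallelepiped,
    ENNReal.toReal_ofReal (abs_nonneg _), o.areaForm_to_volumeForm]

lemma measureReal_convexHull_zero_pair (v w : V) :
    volume.real (convexHull ℝ {0, v, w}) = |o.areaForm v w| / 2 := by
  wlog hvw : 0 ≤ o.areaForm v w generalizing v w
  · rw [Set.pair_comm v w, this w v (by rw [o.areaForm_swap]; linarith), o.areaForm_swap, abs_neg]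
  rcases hvw.eq_or_lt with hvw | hvw
  · have degenerate : volume.real (convexHull ℝ {v + w, 0, v, w}) = 0 := by
      rw [← parallelepiped_pair, measureReal_parallelepiped_pair o, ← hvw, abs_zero]
    have bounded := isBounded_convexHull.2 (Set.toFinite {v + w, 0, v, w}).isBounded
    rw [← hvw, abs_zero, zero_div]
    exact measureReal_mono_null (convexHull_mono (Set.subset_insert _ _)) degenerate
      bounded.measure_lt_top.ne
  -- The diagonal from `v` to `w` cuts the parallelogram into two triangles that are reflections of
  -- each other.
  let f := o.areaForm (v - w)
  have hfv : f v = o.areaForm v w := by simp [f, o.areaForm_swap w v]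
  have hfw : f w = o.areaForm v w := by simp [f]
  have cut : ∀ x ∈ convexHull ℝ {v + w, 0, v, w}, f x = o.areaForm v w →
      x ∈ convexHull ℝ {v, w} := by
    intro x hx hfx
    rw [← parallelepiped_pair, mem_parallelepiped_iff] at hx
    obtain ⟨t, ht, rfl⟩ := hx
    have sum_eq_one : t 0 + t 1 = 1 := by
      simpa [Fin.sum_univ_two, hfv, hfw, ← add_mul, hvw.ne'] using hfx
    rw [convexHull_pair]
    exact ⟨t 0, t 1, ht.1 0, ht.1 1, sum_eq_one, by simp [Fin.sum_univ_two]⟩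
  have glue := measureReal_convexHull_insert_eq_add volume (f := f)
    (a := o.areaForm v w) (S := {0, v, w}) (T := {v, w}) (q := v + w)
    (fun h => hvw.ne' (by rw [← hfv, h]; rfl)) (Set.toFinite _).isBounded
    (by simp [hfv, hfw, hvw.le]) (by simp [hfv, hfw, hvw.le]) (by simp) (by simp)
    (by simp [hfv, hfw]) cut
  rw [← parallelepiped_pair, measureReal_parallelepiped_pair o,
    measureReal_convexHull_add_pair volume] at glue
  linarith

theorem measureReal_convexHull_triple (c u q : V) :
    volume.real (convexHull ℝ {c, u, q}) = |o.areaForm (u - c) (q - c)| / 2 := by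
  have translate : ({c, u, q} : Set V) = c +ᵥ ({0, u - c, q - c} : Set V) := by
    simp [← Set.image_vadd, Set.image_insert_eq]
  rw [translate, convexHull_vadd, Measure.real, measure_vadd, ← Measure.real,
    measureReal_convexHull_zero_pair o]

theorem measureReal_convexHull_insert_ear {S : Set V} {z c u q : V} {r : ℝ}
    (hS : S ⊆ closedBall z r) (hc : c ∈ S) (hu : u ∈ S) (hcz : dist c z = r) (huz : dist u z = r)
    (hcu : c ≠ u) (hq : q ∈ closedBall z r) (hside : ∀ x ∈ S, o.areaForm (u - c) (x - c) ≤ 0)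
    (hqside : 0 ≤ o.areaForm (u - c) (q - c)) :
    volume.real (convexHull ℝ (insert q S)) =
      volume.real (convexHull ℝ S) + o.areaForm (u - c) (q - c) / 2 := by
  have level_u : o.areaForm (u - c) u = o.areaForm (u - c) c := by
    rw [← sub_eq_zero, ← map_sub, o.areaForm_apply_self]
  have cut : ∀ x ∈ convexHull ℝ (insert q S), o.areaForm (u - c) x = o.areaForm (u - c) c →
      x ∈ convexHull ℝ {c, u} := fun x hx hxc => by
    have x_mem : x ∈ closedBall z r :=
      convexHull_min (Set.insert_subset hq hS) (convex_closedBall z r) hx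
    rw [convexHull_pair]
    exact mem_segment_of_areaForm_eq_zero_of_mem_closedBall o hcz huz hcu x_mem
      (by rw [map_sub, hxc, sub_self])
  rw [measureReal_convexHull_insert_eq_add volume
      (areaForm_ne_zero o (sub_ne_zero.2 hcu.symm)) (isBounded_closedBall.subset hS)
      (fun x hx => sub_nonpos.1 (map_sub (o.areaForm _) x c ▸ hside x hx))
      (sub_nonneg.1 (map_sub (o.areaForm _) q c ▸ hqside)) (Set.insert_nonempty c {u})
      (Set.insert_subset hc (by simpa)) (by simpa using level_u) cut,
    Set.insert_comm, Set.pair_comm q, measureReal_convexHull_triple o, abs_of_nonneg hqside]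

end Triangle

section Fan

/-- The vertex `(0, -1)` of `M` where its two bounding chords meet. -/
def apex : Pt := !₂[0, -1]

/-- The point of the unit circle at angle `t`, measured counterclockwise from the top `(0, 1)`. -/
def arcPoint (t : ℝ) : Pt := !₂[-sin t, cos t]

instance fact_finrank_pt : Fact (Module.finrank ℝ Pt = 2) := ⟨finrank_euclideanSpace_fin⟩

lemma exists_orientation_areaForm_apply :
    ∃ o : Orientation ℝ Pt (Fin 2), ∀ x y, o.areaForm x y = x 0 * y 1 - x 1 * y 0 := by
  refine ⟨(EuclideanSpace.basisFun (Fin 2) ℝ).toBasis.orientation, fun x y => ?_⟩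
  rw [Orientation.areaForm_to_volumeForm, Orientation.volumeForm_robust _ _ rfl,
    Module.Basis.det_apply, Matrix.det_fin_two]
  simp [Module.Basis.toMatrix_apply, mul_comm (x 1)]

lemma dist_apex_zero : dist apex 0 = 1 := by simp [apex, EuclideanSpace.norm_eq]

lemma dist_arcPoint_zero (t : ℝ) : dist (arcPoint t) 0 = 1 := by
  simp [arcPoint, EuclideanSpace.norm_eq]

lemma apex_ne_arcPoint {t : ℝ} (ht : 0 ≤ cos t) : apex ≠ arcPoint t := fun h => by
  have heights : -1 = cos t := congrArg (· 1) h
  linarith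

lemma areaForm_arcPoint_sub_apex {o : Orientation ℝ Pt (Fin 2)}
    (ho : ∀ x y, o.areaForm x y = x 0 * y 1 - x 1 * y 0) (s t : ℝ) :
    o.areaForm (arcPoint s - apex) (arcPoint t - apex) = sin (t - s) + (sin t - sin s) := by
  rw [ho]
  simp [arcPoint, apex, sin_sub]
  ring

lemma sin_sub_add_sin_sub_sin_nonneg {s t : ℝ} (hs : -(π / 2) ≤ s) (hst : s ≤ t)
    (ht : t ≤ π / 2) : 0 ≤ sin (t - s) + (sin t - sin s) :=
  add_nonneg (sin_nonneg_of_nonneg_of_le_pi (sub_nonneg.2 hst) (by linarith))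
    (sub_nonneg.2 (sin_le_sin_of_le_of_le_pi_div_two hs ht hst))

lemma measureReal_convexHull_fan_insert {A : Set ℝ} {u v : ℝ} (hA : A ⊆ Set.Icc (-(π / 2)) u)
    (hu : u ∈ A) (huv : u ≤ v) (hv : v ≤ π / 2) :
    volume.real (convexHull ℝ (insert apex (arcPoint '' insert v A))) =
      volume.real (convexHull ℝ (insert apex (arcPoint '' A))) +
        (sin (v - u) + (sin v - sin u)) / 2 := by
  obtain ⟨o, ho⟩ := exists_orientation_areaForm_apply
  have hform := areaForm_arcPoint_sub_apex ho
  have u_ge := (hA hu).1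
  have in_ball : insert apex (arcPoint '' A) ⊆ closedBall 0 1 := by
    rintro _ (rfl | ⟨t, -, rfl⟩)
    exacts [dist_apex_zero.le, (dist_arcPoint_zero t).le]
  have side : ∀ x ∈ insert apex (arcPoint '' A),
      o.areaForm (arcPoint u - apex) (x - apex) ≤ 0 := by
    rintro _ (rfl | ⟨t, ht, rfl⟩)
    · simp
    · rw [o.areaForm_swap, hform]
      have := sin_sub_add_sin_sub_sin_nonneg (hA ht).1 (hA ht).2 (huv.trans hv)
      linarith
  have new_side : 0 ≤ o.areaForm (arcPoint u - apex) (arcPoint v - apex) := by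
    rw [hform]
    exact sin_sub_add_sin_sub_sin_nonneg u_ge huv hv
  rw [Set.image_insert_eq, Set.insert_comm, measureReal_convexHull_insert_ear o in_ball
    (Set.mem_insert _ _) (.inr ⟨u, hu, rfl⟩) dist_apex_zero (dist_arcPoint_zero u)
    (apex_ne_arcPoint (cos_nonneg_of_mem_Icc ⟨u_ge, huv.trans hv⟩)) (dist_arcPoint_zero v).le
    side new_side, hform]

theorem measureReal_convexHull_fan {n : ℕ} {t : ℕ → ℝ} (ht : MonotoneOn t (Set.Iic n))
    (hmem : ∀ i ≤ n, t i ∈ Set.Icc (-(π / 2)) (π / 2)) :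
    volume.real (convexHull ℝ (insert apex (arcPoint '' (t '' Set.Iic n)))) =
      (∑ i ∈ Finset.range n, sin (t (i + 1) - t i) + (sin (t n) - sin (t 0))) / 2 := by
  induction n with
  | zero =>
    obtain ⟨o, -⟩ := exists_orientation_areaForm_apply
    have degenerate := measureReal_convexHull_triple o apex (arcPoint (t 0)) (arcPoint (t 0))
    have Iic_zero : Set.Iic (0 : ℕ) = {0} := Set.Iic_bot
    simpa only [Iic_zero, Set.image_singleton, Set.pair_eq_singleton, o.areaForm_apply_self,
      abs_zero, Finset.sum_range_zero, sub_self, add_zero] using degenerate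
  | succ n ih =>
    have hle {i : ℕ} (hi : i ≤ n) : i ≤ n + 1 := hi.trans n.le_succ
    have Iic_succ : Set.Iic (n + 1) = insert (n + 1) (Set.Iic n) := by
      ext i
      simp [Nat.le_succ_iff_eq_or_le]
    have old_angles : t '' Set.Iic n ⊆ Set.Icc (-(π / 2)) (t n) := by
      rintro _ ⟨i, hi, rfl⟩
      exact ⟨(hmem i (hle hi)).1, ht (hle hi) (hle le_rfl) hi⟩
    rw [Iic_succ, Set.image_insert_eq,
      measureReal_convexHull_fan_insert old_angles ⟨n, Set.self_mem_Iic, rfl⟩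
        (ht (hle le_rfl) Set.self_mem_Iic n.le_succ) (hmem _ le_rfl).2,
      ih (ht.mono fun _ => hle) fun i hi => hmem i (hle hi), Finset.sum_range_succ]
    ring

end Fan

section ConcaveSums

lemma sum_map_succ_sub_le_of_concaveOn {g : ℝ → ℝ} {s : Set ℝ} (hg : ConcaveOn ℝ s g) {n : ℕ}
    (hn : n ≠ 0) {t : ℕ → ℝ} (hs : ∀ i < n, t (i + 1) - t i ∈ s) :
    ∑ i ∈ Finset.range n, g (t (i + 1) - t i) ≤ n * g ((t n - t 0) / n) := by
  have n_pos : (0 : ℝ) < n := by positivity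
  have jensen := hg.le_map_centerMass (t := Finset.range n) (w := 1)
    (p := fun i => t (i + 1) - t i) (by simp) (by simpa using n_pos)
    (fun i hi => hs i (Finset.mem_range.1 hi))
  simp only [Finset.centerMass, Pi.one_apply, Finset.sum_const, Finset.card_range, nsmul_eq_mul,
    mul_one, one_mul, smul_eq_mul, Finset.sum_range_sub, Function.comp_apply] at jensen
  rwa [inv_mul_le_iff₀ n_pos, inv_mul_eq_div] at jensen

lemma mul_map_div_add_mul_map_div_le_of_concaveOn {g : ℝ → ℝ} {s : Set ℝ} (hg : ConcaveOn ℝ s g)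
    {a b x y : ℝ} (ha : 0 < a) (hb : 0 < b) (hx : x / a ∈ s) (hy : y / b ∈ s) :
    a * g (x / a) + b * g (y / b) ≤ (a + b) * g ((x + y) / (a + b)) := by
  have ab_pos : 0 < a + b := add_pos ha hb
  have jensen := hg.2 hx hy (div_nonneg ha.le ab_pos.le) (div_nonneg hb.le ab_pos.le)
    (by field_simp)
  have mean : (a / (a + b)) • (x / a) + (b / (a + b)) • (y / b) = (x + y) / (a + b) := by
    simp only [smul_eq_mul]
    field_simp
  rw [mean, smul_eq_mul, smul_eq_mul, div_mul_eq_mul_div, div_mul_eq_mul_div, ← add_div,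
    div_le_iff₀' ab_pos] at jensen
  exact jensen

end ConcaveSums

section MaxFanArea

/-- The largest area of a polygon inscribed in `M` with the apex and `j + 1` points of the arc as
vertices (`j ≠ 0`): the points are equally spaced and include both endpoints of the arc. -/
def maxFanArea (j : ℕ) : ℝ := (j * sin (2 * π / 3 / j) + √3) / 2

lemma two_pi_div_three_div_mem_Icc {j : ℕ} (hj : j ≠ 0) : 2 * π / 3 / j ∈ Set.Icc 0 π := by
  have one_le : (1 : ℝ) ≤ j := by exact_mod_cast Nat.one_le_iff_ne_zero.2 hj
  refine ⟨by positivity, (div_le_self (by positivity) one_le).trans ?_⟩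
  linarith [pi_pos]

lemma maxFanArea_add_maxFanArea_le {j : ℕ} (hj : j ≠ 0) :
    maxFanArea j + maxFanArea (j + 2) ≤ 2 * maxFanArea (j + 1) := by
  have perspective := mul_map_div_add_mul_map_div_le_of_concaveOn
    strictConcaveOn_sin_Icc.concaveOn (a := j) (b := (j + 2 : ℕ)) (by positivity) (by positivity)
    (two_pi_div_three_div_mem_Icc hj) (two_pi_div_three_div_mem_Icc (by omega))
  have mid_arg : (2 * π / 3 + 2 * π / 3) / (j + (j + 2 : ℕ)) = 2 * π / 3 / (j + 1 : ℕ) := by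
    push_cast
    field_simp
    ring
  rw [mid_arg] at perspective
  unfold maxFanArea
  push_cast at perspective ⊢
  linarith

lemma monotoneOn_mul_sin_div_add_two_mul_sin_half {j : ℕ} (hj : j ≠ 0) :
    MonotoneOn (fun δ => j * sin (δ / j) + 2 * sin (δ / 2)) (Set.Icc 0 (2 * π / 3)) := by
  have hderiv (δ : ℝ) : HasDerivAt (fun δ => j * sin (δ / j) + 2 * sin (δ / 2))
      (cos (δ / j) + cos (δ / 2)) δ := by
    convert! (((hasDerivAt_id δ).div_const (j : ℝ)).sin.const_mul (j : ℝ)).add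
      (((hasDerivAt_id δ).div_const 2).sin.const_mul 2) using 1
    simp
    field_simp
  refine monotoneOn_of_deriv_nonneg (convex_Icc _ _)
    (fun δ _ => (hderiv δ).continuousAt.continuousWithinAt)
    (fun δ _ => (hderiv δ).differentiableAt.differentiableWithinAt) fun δ hδ => ?_
  rw [interior_Icc] at hδ
  have div_le : δ / j ≤ δ := div_le_self hδ.1.le (by exact_mod_cast Nat.one_le_iff_ne_zero.2 hj)
  have div_nonneg : 0 ≤ δ / j := div_nonneg hδ.1.le j.cast_nonneg
  have cos_le : cos (π - δ / 2) ≤ cos (δ / j) :=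
    cos_le_cos_of_nonneg_of_le_pi div_nonneg (by linarith [hδ.1]) (by linarith [hδ.2])
  rw [cos_pi_sub] at cos_le
  rw [(hderiv δ).deriv]
  linarith

lemma sin_sub_sin_le_two_mul_sin_half {s t : ℝ} (hst : s ≤ t) (h : t ≤ s + 2 * π) :
    sin t - sin s ≤ 2 * sin ((t - s) / 2) := by
  rw [sin_sub_sin]
  have := sin_nonneg_of_nonneg_of_le_pi (x := (t - s) / 2) (by linarith) (by linarith)
  exact mul_le_of_le_one_right (by positivity) (cos_le_one _)

lemma measureReal_convexHull_fan_le {n : ℕ} (hn : n ≠ 0) {t : ℕ → ℝ}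
    (ht : MonotoneOn t (Set.Iic n)) (hmem : ∀ i ≤ n, t i ∈ Set.Icc (-(π / 3)) (π / 3)) :
    volume.real (convexHull ℝ (insert apex (arcPoint '' (t '' Set.Iic n)))) ≤ maxFanArea n := by
  have first_le_last : t 0 ≤ t n := ht (Nat.zero_le n) Set.self_mem_Iic (Nat.zero_le n)
  have first_ge := (hmem 0 (Nat.zero_le n)).1
  have last_le := (hmem n le_rfl).2
  have gap_mem : ∀ i < n, t (i + 1) - t i ∈ Set.Icc 0 π := fun i hi =>
    ⟨sub_nonneg.2 (ht hi.le hi i.le_succ), by linarith [(hmem i hi.le).1, (hmem (i + 1) hi).2,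
      pi_pos]⟩
  have equal_gaps := sum_map_succ_sub_le_of_concaveOn strictConcaveOn_sin_Icc.concaveOn hn gap_mem
  have centred := sin_sub_sin_le_two_mul_sin_half first_le_last (by linarith [pi_pos])
  have widest := monotoneOn_mul_sin_div_add_two_mul_sin_half hn
    (a := t n - t 0) (b := 2 * π / 3) ⟨by linarith, by linarith⟩ ⟨by positivity, le_rfl⟩
    (by linarith)
  have two_sin : 2 * sin (2 * π / 3 / 2) = √3 := by
    rw [show 2 * π / 3 / 2 = π / 3 by ring, sin_pi_div_three]
    ring
  rw [measureReal_convexHull_fan ht fun i hi =>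
    ⟨by linarith [(hmem i hi).1, pi_pos], by linarith [(hmem i hi).2, pi_pos]⟩, maxFanArea]
  simp only [two_sin] at widest
  linarith

end MaxFanArea

section Enumeration

lemma exists_monotone_subset_image_Iic {α : Type*} [LinearOrder α] {s : Finset α}
    (hs : s.Nonempty) {n : ℕ} (hcard : s.card ≤ n + 1) :
    ∃ t : ℕ → α, Monotone t ∧ (∀ i, t i ∈ s) ∧ (s : Set α) ⊆ t '' Set.Iic n := by
  have card_pos := hs.card_pos
  let index (i : ℕ) : Fin s.card := ⟨min i (s.card - 1), by omega⟩
  refine ⟨fun i => s.orderEmbOfFin rfl (index i), fun i k hik => ?_,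
    fun i => s.orderEmbOfFin_mem rfl _, fun x hx => ?_⟩
  · exact (s.orderEmbOfFin rfl).monotone (min_le_min_right _ hik)
  · rw [← Finset.range_orderEmbOfFin s rfl] at hx
    obtain ⟨i, rfl⟩ := hx
    refine ⟨i, by rw [Set.mem_Iic]; omega, congrArg _ (Fin.ext ?_)⟩
    exact min_eq_left (by omega)

end Enumeration

section ExtremePoints

lemma arcPoint_image_Icc :
    arcPoint '' Set.Icc (-(π / 3)) (π / 3) = {p | p 0 ^ 2 + p 1 ^ 2 = 1 ∧ 1 / 2 ≤ p 1} := by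
  ext p
  constructor
  · rintro ⟨t, ht, rfl⟩
    have cos_le : cos (π / 3) ≤ cos |t| :=
      cos_le_cos_of_nonneg_of_le_pi (abs_nonneg t) (by linarith [pi_pos]) (abs_le.2 ht)
    rw [cos_abs, cos_pi_div_three] at cos_le
    exact ⟨by simp [arcPoint], cos_le⟩
  · rintro ⟨hcircle, hheight⟩
    have abs_le_half : |p 0| ≤ √3 / 2 :=
      abs_le_of_sq_le_sq (by rw [div_pow, sq_sqrt zero_le_three]; nlinarith) (by positivity)
    have arcsin_half : arcsin (√3 / 2) = π / 3 := by
      rw [← sin_pi_div_three]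
      exact arcsin_sin (by linarith [pi_pos]) (by linarith [pi_pos])
    rw [abs_le] at abs_le_half
    have sin_eq : sin (arcsin (p 0)) = p 0 := sin_arcsin (by nlinarith) (by nlinarith)
    have cos_eq : cos (arcsin (p 0)) = p 1 := by
      rw [cos_arcsin, ← hcircle, add_sub_cancel_left, sqrt_sq (by linarith)]
    refine ⟨arcsin (-p 0), ⟨?_, ?_⟩, ?_⟩
    · rw [arcsin_neg, neg_le_neg_iff, ← arcsin_half]
      exact monotone_arcsin abs_le_half.2
    · rw [← arcsin_half]
      exact monotone_arcsin (neg_le.1 abs_le_half.1)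
    · ext i
      fin_cases i <;> simp [arcPoint, sin_eq, cos_eq]

/-- The apex together with the circular arc of the boundary of `M`; these are exactly the extreme
points of `M`. -/
def extremeArc : Set Pt := insert apex (arcPoint '' Set.Icc (-(π / 3)) (π / 3))

lemma extremeArc_subset_M : extremeArc ⊆ M := by
  rw [extremeArc, arcPoint_image_Icc]
  rintro p (rfl | ⟨hcircle, hheight⟩)
  · simp [M, apex]
  · have side : |√3 * p 0| ≤ 1 + p 1 :=
      abs_le_of_sq_le_sq (by rw [mul_pow, sq_sqrt zero_le_three]; nlinarith)
        (by linarith)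
    rw [abs_le] at side
    exact ⟨hcircle.le, by linarith, by linarith⟩

lemma exists_mem_arc_eq_apex_add_smul {p : Pt} (hp : p ∈ M) (hp_above : 0 < p 1 + 1) :
    ∃ e ∈ arcPoint '' Set.Icc (-(π / 3)) (π / 3), ∃ s ∈ Set.Icc (0 : ℝ) 1,
      apex + s • (e - apex) = p := by
  obtain ⟨hdisk, hright, hleft⟩ := hp
  let s := (p 0 ^ 2 + (p 1 + 1) ^ 2) / (2 * (p 1 + 1))
  have s_pos : 0 < s := by positivity
  have s_mul : s * (2 * (p 1 + 1)) = p 0 ^ 2 + (p 1 + 1) ^ 2 := by simp only [s]; field_simp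
  have s_le_one : s ≤ 1 := by rw [div_le_one (by positivity)]; linarith
  have sector : 3 * p 0 ^ 2 ≤ (p 1 + 1) ^ 2 := by
    have := sq_le_sq' (a := √3 * p 0) (b := p 1 + 1) (by linarith) (by linarith)
    rwa [mul_pow, sq_sqrt zero_le_three] at this
  have high : 3 / 2 ≤ (p 1 + 1) / s := by
    rw [le_div_iff₀ s_pos]
    nlinarith
  let e : Pt := !₂[p 0 / s, (p 1 + 1) / s - 1]
  have e_on_circle : (p 0 / s) ^ 2 + ((p 1 + 1) / s - 1) ^ 2 = 1 := by
    field_simp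
    linarith
  refine ⟨e, ?_, s, ⟨s_pos.le, s_le_one⟩, ?_⟩
  · rw [arcPoint_image_Icc]
    exact ⟨e_on_circle, by simp only [e]; simp; linarith⟩
  · ext i
    fin_cases i <;> simp [e, apex] <;> field_simp
    ring

lemma M_subset_convexHull_extremeArc : M ⊆ convexHull ℝ extremeArc := by
  intro p hp
  have apex_mem : apex ∈ extremeArc := Set.mem_insert _ _
  have above : 0 ≤ p 1 + 1 := by linarith [hp.2.1, hp.2.2]
  rcases above.eq_or_lt with h | h
  · have p_eq : p = apex := by
      have : p 0 = 0 := by nlinarith [hp.1]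
      ext i
      fin_cases i <;> simp [apex, this]
      linarith
    exact p_eq ▸ subset_convexHull ℝ _ apex_mem
  · obtain ⟨e, he, s, hs, rfl⟩ := exists_mem_arc_eq_apex_add_smul hp h
    exact (convex_convexHull ℝ _).add_smul_sub_mem (subset_convexHull ℝ _ apex_mem)
      (subset_convexHull ℝ _ (.inr he)) hs

end ExtremePoints

section MaximalArea

lemma sqrt_three_div_two_le_maxFanArea {j : ℕ} (hj : j ≠ 0) : √3 / 2 ≤ maxFanArea j := by
  have sin_nonneg := sin_nonneg_of_mem_Icc (two_pi_div_three_div_mem_Icc hj)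
  unfold maxFanArea
  gcongr
  exact le_add_of_nonneg_left (by positivity)

lemma measureReal_convexHull_le_of_subset_arc {S : Set Pt}
    (hS : S ⊆ arcPoint '' Set.Icc (-(π / 3)) (π / 3)) :
    volume.real (convexHull ℝ S) ≤ √3 / 2 := by
  let box : Set (Fin 2 → ℝ) := Set.Icc ![-(√3 / 2), 1 / 2] ![√3 / 2, 1]
  have hull_subset_box : convexHull ℝ S ⊆ WithLp.ofLp ⁻¹' box := by
    refine convexHull_min (fun p hp => ?_)
      ((convex_Icc _ _).linear_preimage (WithLp.linearEquiv 2 ℝ (Fin 2 → ℝ)).toLinearMap)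
    rw [arcPoint_image_Icc] at hS
    obtain ⟨hcircle, hheight⟩ := hS hp
    have width : |p 0| ≤ √3 / 2 :=
      abs_le_of_sq_le_sq (by rw [div_pow, sq_sqrt zero_le_three]; nlinarith) (by positivity)
    simp only [box, Set.mem_preimage, Set.mem_Icc, Pi.le_def, Fin.forall_fin_two]
    exact ⟨⟨(abs_le.1 width).1, hheight⟩, (abs_le.1 width).2, by simp; nlinarith⟩
  have box_ordered : ![-(√3 / 2), 1 / 2] ≤ ![√3 / 2, 1] := by
    simp only [Pi.le_def, Fin.forall_fin_two]
    exact ⟨neg_le_self (by positivity), one_half_lt_one.le⟩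
  have volume_preimage := (PiLp.volume_preserving_ofLp (Fin 2)).measure_preimage
    (measurableSet_Icc (a := ![-(√3 / 2), 1 / 2]) (b := ![√3 / 2, 1])).nullMeasurableSet
  calc volume.real (convexHull ℝ S)
      ≤ volume.real (WithLp.ofLp ⁻¹' box : Set Pt) :=
        measureReal_mono hull_subset_box (volume_preimage ▸ measure_Icc_lt_top.ne)
    _ = √3 / 2 := by
        rw [Measure.real, volume_preimage, volume_Icc_pi_toReal box_ordered, Fin.prod_univ_two]
        simp
        ring

lemma measureReal_convexHull_insert_apex_le {j : ℕ} (hj : j ≠ 0) {S : Finset Pt}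
    (hS : (S : Set Pt) ⊆ arcPoint '' Set.Icc (-(π / 3)) (π / 3)) (hcard : S.card ≤ j + 1) :
    volume.real (convexHull ℝ (insert apex (S : Set Pt))) ≤ maxFanArea j := by
  classical
  rcases S.eq_empty_or_nonempty with rfl | S_nonempty
  · have maxFanArea_nonneg : 0 ≤ maxFanArea j :=
      (by positivity : 0 ≤ √3 / 2).trans (sqrt_three_div_two_le_maxFanArea hj)
    simpa [Measure.real] using maxFanArea_nonneg
  obtain ⟨angles, angles_mem, angles_inj, rfl⟩ :=
    Finset.exists_subset_injOn_image_eq_of_surjOn _ S hS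
  rw [Finset.card_image_of_injOn angles_inj] at hcard
  obtain ⟨t, t_mono, t_mem, angles_subset⟩ :=
    exists_monotone_subset_image_Iic (Finset.image_nonempty.1 S_nonempty) hcard
  have fan_finite : (insert apex (arcPoint '' (t '' Set.Iic j))).Finite :=
    (((Set.finite_Iic j).image t).image arcPoint).insert apex
  refine (measureReal_mono (convexHull_mono ?_)
    (fan_finite.isCompact_convexHull ℝ).measure_ne_top).trans
    (measureReal_convexHull_fan_le hj (t_mono.monotoneOn _) fun i _ => angles_mem (t_mem i))
  rw [Finset.coe_image]
  exact Set.insert_subset_insert (Set.image_mono angles_subset)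

theorem measureReal_convexHull_le_maxFanArea {j : ℕ} (hj : j ≠ 0) {S : Finset Pt}
    (hS : (S : Set Pt) ⊆ extremeArc) (hcard : S.card ≤ j + 2) :
    volume.real (convexHull ℝ (S : Set Pt)) ≤ maxFanArea j := by
  classical
  by_cases hapex : apex ∈ S
  · rw [← Finset.insert_erase hapex, Finset.coe_insert]
    refine measureReal_convexHull_insert_apex_le hj ?_ ?_
    · rwa [Finset.coe_erase, Set.sdiff_singleton_subset_iff]
    · rw [Finset.card_erase_of_mem hapex]
      omega
  · have in_arc := (Set.subset_insert_iff_of_notMem (Finset.mem_coe.not.2 hapex)).1 hS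
    exact (measureReal_convexHull_le_of_subset_arc in_arc).trans
      (sqrt_three_div_two_le_maxFanArea hj)

theorem exists_measureReal_convexHull_eq_maxFanArea {j : ℕ} (hj : j ≠ 0) :
    ∃ S : Finset Pt, (S : Set Pt) ⊆ extremeArc ∧ S.card ≤ j + 2 ∧
      volume.real (convexHull ℝ (S : Set Pt)) = maxFanArea j := by
  classical
  let t (i : ℕ) : ℝ := -(π / 3) + i * (2 * π / 3 / j)
  have t_mono : Monotone t := fun i k hik => by dsimp only [t]; gcongr
  have t_first : t 0 = -(π / 3) := by simp [t]
  have t_last : t j = π / 3 := by simp only [t]; field_simp; ring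
  have t_step (i : ℕ) : t (i + 1) - t i = 2 * π / 3 / j := by simp only [t]; push_cast; ring
  have t_mem : ∀ i ≤ j, t i ∈ Set.Icc (-(π / 3)) (π / 3) := fun i hi =>
    ⟨t_first ▸ t_mono (Nat.zero_le i), t_last ▸ t_mono hi⟩
  refine ⟨insert apex (((Finset.Iic j).image t).image arcPoint), ?_, ?_, ?_⟩
  · simp only [Finset.coe_insert, Finset.coe_image, Finset.coe_Iic]
    exact Set.insert_subset_insert (Set.image_mono (Set.image_subset_iff.2 t_mem))
  · have card_angles_le := Finset.card_image_le (s := Finset.Iic j) (f := t)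
    have card_points_le := Finset.card_image_le (s := (Finset.Iic j).image t) (f := arcPoint)
    rw [Nat.card_Iic] at card_angles_le
    exact (Finset.card_insert_le _ _).trans (by omega)
  · simp only [Finset.coe_insert, Finset.coe_image, Finset.coe_Iic]
    rw [measureReal_convexHull_fan (t_mono.monotoneOn _) fun i hi =>
      ⟨by linarith [(t_mem i hi).1, pi_pos], by linarith [(t_mem i hi).2, pi_pos]⟩]
    simp only [t_step, t_first, t_last, Finset.sum_const, Finset.card_range, nsmul_eq_mul, sin_neg,
      sin_pi_div_three, maxFanArea]
    ring

theorem astar_add_two {j : ℕ} (hj : j ≠ 0) : astar (j + 2) = maxFanArea j := by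
  refine IsGreatest.csSup_eq ⟨?_, ?_⟩
  · obtain ⟨S, hS, hcard, harea⟩ := exists_measureReal_convexHull_eq_maxFanArea hj
    exact ⟨S, hS.trans extremeArc_subset_M, hcard, harea.symm⟩
  · rintro _ ⟨S, hS, hcard, rfl⟩
    obtain ⟨T, hT, hT_card, hle⟩ :=
      exists_finset_measureReal_convexHull_le volume S (hS.trans M_subset_convexHull_extremeArc)
    exact hle.trans (measureReal_convexHull_le_maxFanArea hj hT (hT_card.trans hcard))

end MaximalArea

/-- Dowker's concavity of the sequence of maximal inscribed-polygon areas in `M`. -/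
theorem astar_concave (n : ℕ) (hn : 4 ≤ n) :
    astar (n - 1) + astar (n + 1) ≤ 2 * astar n := by
  obtain ⟨j, hj, rfl⟩ : ∃ j, j ≠ 0 ∧ n = j + 3 := ⟨n - 3, by omega, by omega⟩
  calc astar (j + 2) + astar (j + 2 + 2)
      = maxFanArea j + maxFanArea (j + 2) := by rw [astar_add_two hj, astar_add_two (by omega)]
    _ ≤ 2 * maxFanArea (j + 1) := maxFanArea_add_maxFanArea_le hj
    _ = 2 * astar (j + 1 + 2) := by rw [astar_add_two (by omega)]
end
end
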